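/- arXiv:1610.04535 — 2 statements merged into one kernel-verified Lean document; each statement's English description precedes it below -/
import Mathlib

section
/- Assume p ≠ 1 and q ≠ 1. Then every K-algebra automorphism of B = A_p(1, 1, K_q[s,t]) is affine, i.e. it maps the subspace F_1 = K ⊕ Kx ⊕ Ky ⊕ Ks ⊕ Kt into itself, where B carries the standard filtration in which x, y, s, t all have degree 1. -/
/-!
Put `z = xy - yx = 1 + (p - 1) y x`. Then `x z = p z x` and `z y = p y z`, so `z`, `s`, `t` are
normal elements, and `B` has the basis `z^a x^i s^j t^k`, `z^a y^i s^j t^k`. Inverting `x` and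
writing `y = (p - 1)⁻¹ (z - 1) x⁻¹` embeds `B` in the quantum torus on `z, x, s, t`
(`QTorus`, `emb`, `emb_injective`), where leading and trailing exponents are multiplicative. Giving
`x`, `s`, `t` weight `1` and `z` weight `2` there recovers the standard degree on `B`
(`repr_weight`).

If `N` is normal in `B`, comparing leading and trailing exponents in `N x = b N` gives `b = r x`
for a scalar `r`, and likewise for `s` and `t`. If one of these scalars is not `1`, then every
monomial of `N` involves `z`, `t` or `s` respectively, so `N` is divisible by that element;
otherwise `N` is central (`normal_dvd`). The elements `z`, `s`, `t` are not central because
`p ≠ 1` and `q ≠ 1`, so the image of each of them under an automorphism `φ` is divisible by one of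
`z`, `s`, `t`. The same holds for `φ⁻¹`, none of the three divides another, and one-sided factors
of `1` are scalars; hence `φ` permutes `z`, `s`, `t` up to scalars (`image_prime`).

Finally `φ z - 1 = (p - 1) φ(y) φ(x)`, where `φ x` and `φ y` are not scalars and so have degree at
least `1`. The left side thus has degree at least `2`, which forces `φ z` to be a multiple of `z`;
its degree is then exactly `2`, so `φ x` and `φ y` have degree `1`, and `φ s`, `φ t` are multiples
of `s`, `t` in some order.
-/

noncomputable section

open FreeAlgebra

/-- Relations of the algebra `A_p(lam, mu, K_q[s,t])`; for `lam = mu = 1` this is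
`A_p(1, 1, K_q[s,t])`: `xy - p·yx = 1`, `st = q·ts`, `s,t` commute with `x,y`. -/
inductive ExtWeylRel (K : Type*) [Field K] (p q lam mu : K) :
    FreeAlgebra K (Fin 4) → FreeAlgebra K (Fin 4) → Prop
  | weyl : ExtWeylRel K p q lam mu (ι K (0 : Fin 4) * ι K 1 - p • (ι K 1 * ι K 0)) 1
  | st : ExtWeylRel K p q lam mu (ι K (2 : Fin 4) * ι K 3) (q • (ι K 3 * ι K 2))
  | sx : ExtWeylRel K p q lam mu (ι K (2 : Fin 4) * ι K 0) (lam • (ι K 0 * ι K 2))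
  | sy : ExtWeylRel K p q lam mu (ι K (2 : Fin 4) * ι K 1) (lam⁻¹ • (ι K 1 * ι K 2))
  | tx : ExtWeylRel K p q lam mu (ι K (3 : Fin 4) * ι K 0) (mu • (ι K 0 * ι K 3))
  | ty : ExtWeylRel K p q lam mu (ι K (3 : Fin 4) * ι K 1) (mu⁻¹ • (ι K 1 * ι K 3))

/-- The algebra `A_p(lam, mu, K_q[s,t])`. -/
abbrev ExtWeyl (K : Type*) [Field K] (p q lam mu : K) : Type _ :=
  RingQuot (ExtWeylRel K p q lam mu)

variable (K : Type*) [Field K] (p q : K)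

/-- The generator `x` of `A = A_p(1, 1, K_q[s,t])`. -/
def wx : ExtWeyl K p q 1 1 := RingQuot.mkAlgHom K _ (ι K 0)
/-- The generator `y`. -/
def wy : ExtWeyl K p q 1 1 := RingQuot.mkAlgHom K _ (ι K 1)
/-- The generator `s`. -/
def ws : ExtWeyl K p q 1 1 := RingQuot.mkAlgHom K _ (ι K 2)
/-- The generator `t`. -/
def wt : ExtWeyl K p q 1 1 := RingQuot.mkAlgHom K _ (ι K 3)
/-- The element `z = xy - yx`. -/
def wz : ExtWeyl K p q 1 1 := wx K p q * wy K p q - wy K p q * wx K p q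


namespace ExtWeylAff

/-! ### The quantum torus -/

/-- Exponent vectors `(a, i, j, k)`, standing for the Laurent monomial `z^a x^i s^j t^k`. -/
abbrev Expo : Type := ℤ × ℤ × ℤ × ℤ

section Torus

variable {F : Type*} [Field F] (P Q : Fˣ)

/-- The scalar by which the product of two ordered monomials differs from the ordered monomial
of the sum of the exponents; it encodes `x z = P z x` and `s t = Q t s`. -/
def tw (u v : Expo) : Fˣ := P ^ (u.2.1 * v.1) * Q ^ (-(u.2.2.2 * v.2.2.1))

lemma tw_add_left (u v w : Expo) : tw P Q (u + v) w = tw P Q u w * tw P Q v w := by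
  simp only [tw, Prod.fst_add, Prod.snd_add, add_mul, neg_add, zpow_add]
  exact mul_mul_mul_comm _ _ _ _

lemma tw_add_right (u v w : Expo) : tw P Q u (v + w) = tw P Q u v * tw P Q u w := by
  simp only [tw, Prod.fst_add, Prod.snd_add, mul_add, neg_add, zpow_add]
  exact mul_mul_mul_comm _ _ _ _

lemma tw_zero_left (u : Expo) : tw P Q 0 u = 1 := by simp [tw]

lemma tw_zero_right (u : Expo) : tw P Q u 0 = 1 := by simp [tw]

/-- The quantum torus with basis the monomials `z^a x^i s^j t^k`, `(a, i, j, k) ∈ ℤ⁴`, as a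
twisted group algebra of `ℤ⁴`. It is a type synonym so that its product does not clash with the
pointwise product of finitely supported functions. -/
def QTorus (_P _Q : Fˣ) : Type _ := Expo →₀ F

instance : AddCommGroup (QTorus P Q) := inferInstanceAs (AddCommGroup (Expo →₀ F))

instance : Module F (QTorus P Q) := inferInstanceAs (Module F (Expo →₀ F))

/-- The basis monomial with exponent vector `u`. -/
def mono (u : Expo) : QTorus P Q := Finsupp.single u (1 : F)

variable {P Q} in
/-- The coefficient of a monomial, as a linear form. -/
def coeff (u : Expo) : QTorus P Q →ₗ[F] F := Finsupp.lapply u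

variable {P Q} in
/-- The set of exponents occurring in an element of the quantum torus. -/
def supp (f : QTorus P Q) : Finset Expo := Finsupp.support f

variable {P Q} in
lemma mem_supp {f : QTorus P Q} {u : Expo} : u ∈ supp f ↔ coeff u f ≠ 0 :=
  Finsupp.mem_support_iff

variable {P Q} in
lemma coeff_ext {f g : QTorus P Q} (h : ∀ u, coeff u f = coeff u g) : f = g :=
  Finsupp.ext h

variable {P Q} in
lemma supp_nonempty {f : QTorus P Q} (h : f ≠ 0) : (supp f).Nonempty :=
  Finsupp.support_nonempty_iff.2 h

lemma coeff_mono (u v : Expo) : coeff u (mono P Q v) = if v = u then (1 : F) else 0 :=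
  Finsupp.single_apply

variable {P Q} in
lemma eq_sum (f : QTorus P Q) : f = ∑ u ∈ supp f, coeff u f • mono P Q u := by
  have h := (Finsupp.sum_single (show Expo →₀ F from f)).symm
  refine h.trans (Finset.sum_congr rfl fun u _ => ?_)
  exact (Finsupp.smul_single_one u _).symm

/-- The product of the quantum torus as a bilinear map. -/
def mulL : QTorus P Q →ₗ[F] QTorus P Q →ₗ[F] QTorus P Q :=
  Finsupp.linearCombination F fun u =>
    (Finsupp.linearCombination F fun v => (tw P Q u v : F) • mono P Q (u + v) :
      (Expo →₀ F) →ₗ[F] QTorus P Q)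

lemma mulL_mono (u v : Expo) :
    mulL P Q (mono P Q u) (mono P Q v) = (tw P Q u v : F) • mono P Q (u + v) := by
  have h1 := (Finsupp.linearCombination_single F (1 : F) u (v := fun u =>
    (Finsupp.linearCombination F fun v => (tw P Q u v : F) • mono P Q (u + v) :
      (Expo →₀ F) →ₗ[F] QTorus P Q))).trans (one_smul _ _)
  have h2 := (Finsupp.linearCombination_single F (1 : F) v (v := fun v =>
    (tw P Q u v : F) • mono P Q (u + v))).trans (one_smul _ _)
  exact (LinearMap.congr_fun h1 (Finsupp.single v 1)).trans h2

variable {P Q} in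
lemma lin_ext {M : Type*} [AddCommGroup M] [Module F M] {f g : QTorus P Q →ₗ[F] M}
    (h : ∀ u, f (mono P Q u) = g (mono P Q u)) : f = g :=
  Finsupp.lhom_ext' fun u => LinearMap.ext_ring (h u)

lemma mulL_assoc (f g h : QTorus P Q) :
    mulL P Q (mulL P Q f g) h = mulL P Q f (mulL P Q g h) := by
  have h1 : ∀ u v, ∀ h, mulL P Q (mulL P Q (mono P Q u) (mono P Q v)) h =
      mulL P Q (mono P Q u) (mulL P Q (mono P Q v) h) := by
    intro u v
    refine LinearMap.congr_fun (f := mulL P Q (mulL P Q (mono P Q u) (mono P Q v)))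
      (g := mulL P Q (mono P Q u) ∘ₗ mulL P Q (mono P Q v)) (lin_ext fun w => ?_)
    simp only [LinearMap.comp_apply, mulL_mono, map_smul, LinearMap.smul_apply, smul_smul,
      tw_add_left, tw_add_right, add_assoc, Units.val_mul]
    congr 1
    ring
  have h2 : ∀ u, ∀ g, mulL P Q (mulL P Q (mono P Q u) g) h =
      mulL P Q (mono P Q u) (mulL P Q g h) := by
    intro u
    exact LinearMap.congr_fun (f := (mulL P Q).flip h ∘ₗ mulL P Q (mono P Q u))
      (g := mulL P Q (mono P Q u) ∘ₗ (mulL P Q).flip h) (lin_ext fun v => h1 u v h)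
  exact LinearMap.congr_fun (f := (mulL P Q).flip h ∘ₗ (mulL P Q).flip g)
      (g := (mulL P Q).flip (mulL P Q g h)) (lin_ext fun u => h2 u g) f

lemma one_mulL (f : QTorus P Q) : mulL P Q (mono P Q 0) f = f :=
  LinearMap.congr_fun (f := mulL P Q (mono P Q 0)) (g := LinearMap.id)
    (lin_ext fun u => by simp [mulL_mono, tw_zero_left]) f

lemma mulL_one (f : QTorus P Q) : mulL P Q f (mono P Q 0) = f :=
  LinearMap.congr_fun (f := (mulL P Q).flip (mono P Q 0)) (g := LinearMap.id)
    (lin_ext fun u => by simp [mulL_mono, tw_zero_right]) f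

instance : Ring (QTorus P Q) where
  __ := (inferInstance : AddCommGroup (QTorus P Q))
  mul f g := mulL P Q f g
  one := mono P Q 0
  left_distrib f g h := map_add (mulL P Q f) g h
  right_distrib f g h := by
    change mulL P Q (f + g) h = mulL P Q f h + mulL P Q g h
    simp
  zero_mul f := by
    change mulL P Q 0 f = 0
    simp
  mul_zero f := map_zero (mulL P Q f)
  mul_assoc := mulL_assoc P Q
  one_mul := one_mulL P Q
  mul_one := mulL_one P Q

instance : Algebra F (QTorus P Q) :=
  Algebra.ofModule
    (fun r f g => by
      change mulL P Q (r • f) g = r • mulL P Q f g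
      simp)
    (fun r f g => map_smul (mulL P Q f) r g)

variable {P Q}

lemma one_eq : (1 : QTorus P Q) = mono P Q 0 := rfl

lemma mono_mul (u v : Expo) :
    mono P Q u * mono P Q v = (tw P Q u v : F) • mono P Q (u + v) := mulL_mono P Q u v

lemma mul_eq_sum (f g : QTorus P Q) : f * g = ∑ u ∈ supp f, ∑ v ∈ supp g,
    (coeff u f * coeff v g * tw P Q u v) • mono P Q (u + v) := by
  conv_lhs => rw [eq_sum f, eq_sum g]
  simp only [Finset.sum_mul_sum, smul_mul_smul_comm, mono_mul, smul_smul]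

lemma coeff_mul (f g : QTorus P Q) (w : Expo) : coeff w (f * g) =
    ∑ u ∈ supp f, ∑ v ∈ supp g,
      if u + v = w then coeff u f * coeff v g * tw P Q u v else 0 := by
  rw [mul_eq_sum]
  simp [map_sum, coeff_mono]

lemma supp_mono (u : Expo) : supp (mono P Q u) = {u} :=
  Finsupp.support_single u one_ne_zero

lemma supp_mul {f g : QTorus P Q} {w : Expo} (h : w ∈ supp (f * g)) :
    ∃ u ∈ supp f, ∃ v ∈ supp g, u + v = w := by
  by_contra! hne
  rw [mem_supp, coeff_mul] at h
  exact h (Finset.sum_eq_zero fun u hu => Finset.sum_eq_zero fun v hv =>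
    if_neg (hne u hu v hv))

lemma coeff_mul_mono (f : QTorus P Q) (u v : Expo) :
    coeff (u + v) (f * mono P Q v) = coeff u f * tw P Q u v := by
  rw [coeff_mul, supp_mono]
  simp only [Finset.sum_singleton, add_left_inj, Finset.sum_ite_eq', coeff_mono, if_true, mul_one]
  split_ifs with h
  · rfl
  · rw [mem_supp, not_not] at h
    simp [h]

lemma coeff_mono_mul (f : QTorus P Q) (u v : Expo) :
    coeff (v + u) (mono P Q v * f) = coeff u f * tw P Q v u := by
  rw [coeff_mul, supp_mono]
  simp only [Finset.sum_singleton, add_right_inj, Finset.sum_ite_eq', coeff_mono, if_true, one_mul]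
  split_ifs with h
  · rfl
  · rw [mem_supp, not_not] at h
    simp [h]

/-! ### Leading exponents -/

/-- The total weight of a monomial, in which `x`, `s`, `t` have weight `1` and `z` weight `2`. -/
def weight (u : Expo) : ℤ := 2 * u.1 + u.2.1 + u.2.2.1 + u.2.2.2

/-- An injective additive map to a linearly ordered group, with the weight as the dominant
coordinate and the exponent of `z` as the next one. -/
def ord : Expo →+ ℤ ×ₗ ℤ ×ₗ ℤ ×ₗ ℤ where
  toFun u := toLex (weight u, toLex (u.1, toLex (u.2.1, u.2.2.1)))
  map_zero' := rfl
  map_add' u v := by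
    have h : weight (u + v) = weight u + weight v := by
      simp only [weight, Prod.fst_add, Prod.snd_add]
      ring
    rw [h]
    rfl

lemma ord_injective : Function.Injective ord := by
  rintro ⟨a, i, j, k⟩ ⟨a', i', j', k'⟩ h
  simp only [ord, AddMonoidHom.coe_mk, ZeroHom.coe_mk, EmbeddingLike.apply_eq_iff_eq,
    Prod.mk.injEq, weight] at h
  obtain ⟨h1, rfl, rfl, rfl⟩ := h
  simp only [Prod.mk.injEq, true_and]
  omega

lemma weight_le_of_ord_le {u v : Expo} (h : ord u ≤ ord v) : weight u ≤ weight v := by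
  rcases (Prod.Lex.toLex_le_toLex).1 h with h | h
  · exact h.le
  · exact h.1.le

/-- On a line parallel to the `z`-axis, `ord` is the order of the exponents of `z`. -/
lemma fst_le_of_ord_le {u v : Expo} (h : ord u ≤ ord v) (h2 : u.2 = v.2) : u.1 ≤ v.1 := by
  have := weight_le_of_ord_le h
  simp only [weight, h2] at this
  omega

/-- `u` is an exponent of `f` at which the additive map `κ` is maximal. It is used for the
injective maps `κ = ord` (leading exponents) and `κ = -ord` (trailing exponents), for which `u` is
unique. -/
def IsTop (κ : Expo →+ ℤ ×ₗ ℤ ×ₗ ℤ ×ₗ ℤ) (f : QTorus P Q) (u : Expo) : Prop :=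
  u ∈ supp f ∧ ∀ v ∈ supp f, κ v ≤ κ u

lemma exists_isTop (κ : Expo →+ ℤ ×ₗ ℤ ×ₗ ℤ ×ₗ ℤ) {f : QTorus P Q} (h : f ≠ 0) :
    ∃ u, IsTop κ f u := by
  obtain ⟨u, hu, hm⟩ := Finset.exists_max_image (supp f) κ (supp_nonempty h)
  exact ⟨u, hu, hm⟩

lemma IsTop.ne_zero {κ : Expo →+ ℤ ×ₗ ℤ ×ₗ ℤ ×ₗ ℤ} {f : QTorus P Q} {u : Expo}
    (h : IsTop κ f u) : f ≠ 0 := by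
  rintro rfl
  exact mem_supp.1 h.1 (map_zero _)

lemma IsTop.unique {κ : Expo →+ ℤ ×ₗ ℤ ×ₗ ℤ ×ₗ ℤ} (hκ : Function.Injective κ)
    {f : QTorus P Q} {u v : Expo} (h : IsTop κ f u) (h' : IsTop κ f v) : u = v :=
  hκ (le_antisymm (h'.2 _ h.1) (h.2 _ h'.1))

lemma isTop_mono (κ : Expo →+ ℤ ×ₗ ℤ ×ₗ ℤ ×ₗ ℤ) (u : Expo) : IsTop κ (mono P Q u) u := by
  simp [IsTop, supp_mono]

lemma IsTop.mul {κ : Expo →+ ℤ ×ₗ ℤ ×ₗ ℤ ×ₗ ℤ} (hκ : Function.Injective κ)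
    {f g : QTorus P Q} {u v : Expo} (hf : IsTop κ f u) (hg : IsTop κ g v) :
    IsTop κ (f * g) (u + v) := by
  constructor
  · rw [mem_supp, coeff_mul, Finset.sum_eq_single u, Finset.sum_eq_single v, if_pos rfl]
    · exact mul_ne_zero (mul_ne_zero (mem_supp.1 hf.1) (mem_supp.1 hg.1)) (Units.ne_zero _)
    · intro v' _ hne
      exact if_neg fun h => hne (add_left_cancel h)
    · exact fun h => absurd hg.1 h
    · intro u' hu' hne
      refine Finset.sum_eq_zero fun v' hv' => if_neg fun h => hne (hκ ?_)
      have h1 := congrArg κ h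
      rw [map_add, map_add] at h1
      refine le_antisymm (hf.2 _ hu') ?_
      by_contra! hlt
      exact (add_lt_add_of_lt_of_le hlt (hg.2 _ hv')).ne h1
    · exact fun h => absurd hf.1 h
  · intro w hw
    obtain ⟨u', hu', v', hv', rfl⟩ := supp_mul hw
    rw [map_add, map_add]
    exact add_le_add (hf.2 _ hu') (hg.2 _ hv')

lemma neg_ord_injective : Function.Injective (-ord) := fun u v h =>
  ord_injective (neg_injective (by simpa using h))

instance : NoZeroDivisors (QTorus P Q) where
  eq_zero_or_eq_zero_of_mul_eq_zero {f g} h := by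
    by_contra! hne
    obtain ⟨u, hu⟩ := exists_isTop ord hne.1
    obtain ⟨v, hv⟩ := exists_isTop ord hne.2
    exact (hu.mul ord_injective hv).ne_zero h

/-- If `N` is moved past a monomial, the factor appearing on the other side is a multiple of the
same monomial: its leading and trailing exponents coincide. -/
lemma eq_smul_mono {N b : QTorus P Q} {v : Expo} (hN : N ≠ 0) (h : N * mono P Q v = b * N) :
    ∃ r : F, b = r • mono P Q v := by
  have hb : b ≠ 0 := by
    rintro rfl
    rw [zero_mul] at h
    exact ((mul_eq_zero.1 h).resolve_left hN) |> (isTop_mono ord v).ne_zero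
  have key : ∀ κ : Expo →+ ℤ ×ₗ ℤ ×ₗ ℤ ×ₗ ℤ, Function.Injective κ → IsTop κ b v := by
    intro κ hκ
    obtain ⟨n, hn⟩ := exists_isTop κ hN
    obtain ⟨w, hw⟩ := exists_isTop κ hb
    have h1 := hn.mul hκ (isTop_mono κ v)
    rw [h] at h1
    have h2 := h1.unique hκ (hw.mul hκ hn)
    rw [add_comm n v] at h2
    rwa [add_right_cancel h2]
  have h1 := key ord ord_injective
  have h2 := key (-ord) neg_ord_injective
  refine ⟨coeff v b, ?_⟩
  have hs : supp b = {v} := Finset.eq_singleton_iff_unique_mem.2 ⟨h1.1, fun u hu =>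
    ord_injective (le_antisymm (h1.2 u hu) (by simpa using h2.2 u hu))⟩
  conv_lhs => rw [eq_sum b, hs]
  simp

/-- Commuting with a monomial up to a scalar is a condition on each exponent separately. -/
lemma tw_eq_of_comm {N : QTorus P Q} {v : Expo} {r : F}
    (h : N * mono P Q v = (r • mono P Q v) * N) {u : Expo} (hu : u ∈ supp N) :
    (tw P Q u v : F) = r * tw P Q v u := by
  have h1 := congrArg (coeff (u + v)) h
  rw [coeff_mul_mono, smul_mul_assoc, map_smul, add_comm u v, coeff_mono_mul, smul_eq_mul,
    mul_left_comm] at h1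
  exact mul_left_cancel₀ (mem_supp.1 hu) h1

/-- The support of `f` lies on a segment parallel to the `z`-axis, with both end points `lo` and
`hi` in the support. -/
structure Seg (f : QTorus P Q) (lo hi : Expo) : Prop where
  top : IsTop ord f hi
  bot : IsTop (-ord) f lo
  line : ∀ u ∈ supp f, u.2 = lo.2

lemma Seg.mul {f g : QTorus P Q} {lo hi lo' hi' : Expo} (hf : Seg f lo hi) (hg : Seg g lo' hi') :
    Seg (f * g) (lo + lo') (hi + hi') where
  top := hf.top.mul ord_injective hg.top
  bot := hf.bot.mul neg_ord_injective hg.bot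
  line w hw := by
    obtain ⟨u, hu, v, hv, rfl⟩ := supp_mul hw
    rw [Prod.snd_add, Prod.snd_add, hf.line u hu, hg.line v hv]

lemma seg_mono (u : Expo) : Seg (mono P Q u) u u :=
  ⟨isTop_mono _ _, isTop_mono _ _, by simp [supp_mono]⟩

lemma Seg.pow {f : QTorus P Q} {lo hi : Expo} (hf : Seg f lo hi) (n : ℕ) :
    Seg (f ^ n) (n • lo) (n • hi) := by
  induction n with
  | zero => simpa [one_eq] using seg_mono (P := P) (Q := Q) 0
  | succ n ih =>
    rw [pow_succ, succ_nsmul, succ_nsmul]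
    exact ih.mul hf

lemma Seg.fst_le {f : QTorus P Q} {lo hi : Expo} (hf : Seg f lo hi) {u : Expo}
    (hu : u ∈ supp f) : u.1 ≤ hi.1 :=
  fst_le_of_ord_le (hf.top.2 u hu) ((hf.line u hu).trans (hf.line hi hf.top.1).symm)

lemma Seg.le_fst {f : QTorus P Q} {lo hi : Expo} (hf : Seg f lo hi) {u : Expo}
    (hu : u ∈ supp f) : lo.1 ≤ u.1 :=
  fst_le_of_ord_le (by simpa using hf.bot.2 u hu) (hf.line u hu).symm

end Torus

/-! ### Monomials in `B` -/

section Algebra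

variable {F : Type*} [Field F] {P Q : Fˣ}

/-- The algebra `B = A_P(1, 1, F_Q[s,t])`, for units `P` and `Q`. -/
abbrev Alg (P Q : Fˣ) : Type _ := ExtWeyl F (P : F) (Q : F) 1 1

local notation "x" => wx F (P : F) (Q : F)
local notation "y" => wy F (P : F) (Q : F)
local notation "s" => ws F (P : F) (Q : F)
local notation "t" => wt F (P : F) (Q : F)
local notation "z" => wz F (P : F) (Q : F)

lemma rel_weyl : x * y - (P : F) • (y * x) = 1 := by
  simpa [wx, wy] using RingQuot.mkAlgHom_rel F (ExtWeylRel.weyl (K := F) (p := P) (q := Q)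
    (lam := 1) (mu := 1))

lemma rel_st : s * t = (Q : F) • (t * s) := by
  simpa [ws, wt] using RingQuot.mkAlgHom_rel F (ExtWeylRel.st (K := F) (p := P) (q := Q)
    (lam := 1) (mu := 1))

lemma rel_sx : s * x = x * s := by
  simpa [ws, wx] using RingQuot.mkAlgHom_rel F (ExtWeylRel.sx (K := F) (p := P) (q := Q)
    (lam := 1) (mu := 1))

lemma rel_sy : s * y = y * s := by
  simpa [ws, wy] using RingQuot.mkAlgHom_rel F (ExtWeylRel.sy (K := F) (p := P) (q := Q)
    (lam := 1) (mu := 1))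

lemma rel_tx : t * x = x * t := by
  simpa [wt, wx] using RingQuot.mkAlgHom_rel F (ExtWeylRel.tx (K := F) (p := P) (q := Q)
    (lam := 1) (mu := 1))

lemma rel_ty : t * y = y * t := by
  simpa [wt, wy] using RingQuot.mkAlgHom_rel F (ExtWeylRel.ty (K := F) (p := P) (q := Q)
    (lam := 1) (mu := 1))

lemma xy_eq : x * y = (P : F) • (y * x) + 1 := by
  rw [← rel_weyl]; abel

lemma yx_smul : ((P : F) - 1) • (y * x) = z - 1 := by
  rw [wz, xy_eq]; module

lemma xy_smul : ((P : F) - 1) • (x * y) = (P : F) • z - 1 := by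
  have h : z = ((P : F) - 1) • (y * x) + 1 := by rw [yx_smul]; abel
  rw [xy_eq, h]
  module

lemma z_eq : z = ((P : F) - 1) • (y * x) + 1 := by rw [yx_smul]; abel

lemma xz : x * z = (P : F) • (z * x) := by
  have h : x * (y * x) = ((P : F) • (y * x) + 1) * x := by rw [← xy_eq, mul_assoc]
  rw [z_eq, mul_add, mul_smul_comm, h, add_mul, add_mul, smul_mul_assoc, smul_mul_assoc]
  simp only [one_mul, mul_one]
  module

lemma zy : z * y = (P : F) • (y * z) := by
  have h : (y * x) * y = y * ((P : F) • (y * x) + 1) := by rw [← xy_eq, mul_assoc]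
  rw [z_eq, add_mul, smul_mul_assoc, h, mul_add, mul_add, mul_smul_comm, mul_smul_comm]
  simp only [one_mul, mul_one]
  module

lemma sz : Commute s z :=
  ((show Commute s x from rel_sx).mul_right (show Commute s y from rel_sy)).sub_right
    ((show Commute s y from rel_sy).mul_right (show Commute s x from rel_sx))

lemma tz : Commute t z :=
  ((show Commute t x from rel_tx).mul_right (show Commute t y from rel_ty)).sub_right
    ((show Commute t y from rel_ty).mul_right (show Commute t x from rel_tx))

/-- A commutation relation `b c = r c b` passes to powers of `c`. -/
lemma mul_pow_of_comm {A : Type*} [Ring A] [Algebra F A] {b c : A} {r : F}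
    (h : b * c = r • (c * b)) (n : ℕ) : b * c ^ n = r ^ n • (c ^ n * b) := by
  induction n with
  | zero => simp
  | succ n ih =>
    rw [pow_succ, ← mul_assoc, ih, smul_mul_assoc, mul_assoc, h, mul_smul_comm, smul_smul,
      ← mul_assoc, pow_succ]

lemma yz : y * z = ((P⁻¹ : Fˣ) : F) • (z * y) := by
  rw [zy, smul_smul]; simp

lemma ts : t * s = ((Q⁻¹ : Fˣ) : F) • (s * t) := by
  rw [rel_st, smul_smul]; simp

variable (P Q) in
/-- `x^i` for `i ≥ 0` and `y^(-i)` for `i ≤ 0`. -/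
def pw (i : ℤ) : Alg P Q := x ^ i.toNat * y ^ (-i).toNat

lemma pw_ofNat (n : ℕ) : pw P Q n = x ^ n := by simp [pw]

lemma pw_neg (n : ℕ) : pw P Q (-n) = y ^ n := by simp [pw]

/-- Indices `(a, i, j, k)` of the basis `z^a pw(i) s^j t^k` of `B`. -/
abbrev Idx : Type := ℕ × ℤ × ℕ × ℕ

variable (P Q) in
/-- The basis element `z^a pw(i) s^j t^k` of `B`. -/
def bas (μ : Idx) : Alg P Q :=
  z ^ μ.1 * pw P Q μ.2.1 * (s ^ μ.2.2.1 * t ^ μ.2.2.2)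

lemma x_pw (hP : (P : F) ≠ 1) (i : ℤ) : x * pw P Q i = pw P Q (i + 1) ∨
    x * pw P Q i = ((P : F) - 1)⁻¹ • ((P : F) • (z * pw P Q (i + 1)) - pw P Q (i + 1)) := by
  have hP' := sub_ne_zero.2 hP
  obtain ⟨n, rfl | rfl⟩ := i.eq_nat_or_neg
  · left
    rw [← Nat.cast_succ, pw_ofNat, pw_ofNat, pow_succ']
  · cases n with
    | zero =>
      left
      simp [pw]
    | succ n =>
      right
      rw [show -((n + 1 : ℕ) : ℤ) + 1 = -(n : ℤ) by push_cast; ring, pw_neg, pw_neg, pow_succ',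
        ← mul_assoc, eq_inv_smul_iff₀ hP', ← smul_mul_assoc, xy_smul, sub_mul, smul_mul_assoc,
        one_mul]

lemma y_pw (hP : (P : F) ≠ 1) (i : ℤ) : y * pw P Q i = pw P Q (i - 1) ∨
    y * pw P Q i = ((P : F) - 1)⁻¹ • (z * pw P Q (i - 1) - pw P Q (i - 1)) := by
  have hP' := sub_ne_zero.2 hP
  obtain ⟨n, rfl | rfl⟩ := i.eq_nat_or_neg
  · cases n with
    | zero =>
      left
      simp [pw]
    | succ n =>
      right
      rw [show ((n + 1 : ℕ) : ℤ) - 1 = (n : ℤ) by push_cast; ring, pw_ofNat, pw_ofNat, pow_succ',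
        ← mul_assoc, eq_inv_smul_iff₀ hP', ← smul_mul_assoc, yx_smul, sub_mul, one_mul]
  · left
    rw [show -(n : ℤ) - 1 = -((n + 1 : ℕ) : ℤ) by push_cast; ring, pw_neg, pw_neg, pow_succ']

lemma z_bas (μ : Idx) : z * bas P Q μ = bas P Q (μ.1 + 1, μ.2) := by
  simp only [bas, pow_succ', mul_assoc]

lemma s_pw (i : ℤ) : Commute s (pw P Q i) :=
  ((show Commute s x from rel_sx).pow_right _).mul_right
    ((show Commute s y from rel_sy).pow_right _)

lemma t_pw (i : ℤ) : Commute t (pw P Q i) :=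
  ((show Commute t x from rel_tx).pow_right _).mul_right
    ((show Commute t y from rel_ty).pow_right _)

lemma s_bas (a : ℕ) (i : ℤ) (j k : ℕ) : s * bas P Q (a, i, j, k) = bas P Q (a, i, j + 1, k) := by
  simp only [bas]
  rw [← mul_assoc, ((sz.pow_right a).mul_right (s_pw i)).eq, mul_assoc, ← mul_assoc s, pow_succ']

lemma t_bas (a : ℕ) (i : ℤ) (j k : ℕ) : t * bas P Q (a, i, j, k) =
    ((Q⁻¹ : Fˣ) : F) ^ j • bas P Q (a, i, j, k + 1) := by
  simp only [bas]
  rw [← mul_assoc, ((tz.pow_right a).mul_right (t_pw i)).eq, mul_assoc, ← mul_assoc t,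
    mul_pow_of_comm ts j, pow_succ' t k, smul_mul_assoc, mul_smul_comm, mul_assoc (s ^ j)]

/-- The elements `z^a pw(i) s^j t^k` span `B`: their span contains `1` and is stable under left
multiplication by the generators. -/
lemma span_bas (hP : (P : F) ≠ 1) (b : Alg P Q) : b ∈ Submodule.span F (Set.range (bas P Q)) := by
  set M := Submodule.span F (Set.range (bas P Q)) with hM
  have hmem : ∀ μ, bas P Q μ ∈ M := fun μ => Submodule.subset_span ⟨μ, rfl⟩
  have hlin : ∀ g : Alg P Q, (∀ μ, g * bas P Q μ ∈ M) → ∀ m ∈ M, g * m ∈ M := by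
    intro g hg m hm
    induction hm using Submodule.span_induction with
    | mem m hm => obtain ⟨μ, rfl⟩ := hm; exact hg μ
    | zero => simp
    | add a b _ _ ha hb => rw [mul_add]; exact M.add_mem ha hb
    | smul r a _ ha => rw [mul_smul_comm]; exact M.smul_mem r ha
  have hx : ∀ m ∈ M, x * m ∈ M := by
    refine hlin _ fun ⟨a, i, j, k⟩ => ?_
    have h : x * bas P Q (a, i, j, k) =
        (P : F) ^ a • (z ^ a * (x * pw P Q i) * (s ^ j * t ^ k)) := by
      simp only [bas]
      rw [← mul_assoc, ← mul_assoc x, mul_pow_of_comm xz, smul_mul_assoc, smul_mul_assoc,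
        mul_assoc (z ^ a) x]
    rw [h]
    refine M.smul_mem _ ?_
    rcases x_pw (Q := Q) hP i with h | h <;> rw [h]
    · exact hmem (a, i + 1, j, k)
    · rw [mul_smul_comm, smul_mul_assoc, mul_sub, sub_mul, mul_smul_comm, smul_mul_assoc,
        ← mul_assoc (z ^ a) z, ← pow_succ]
      exact M.smul_mem _ (M.sub_mem (M.smul_mem _ (hmem (a + 1, i + 1, j, k)))
        (hmem (a, i + 1, j, k)))
  have hy : ∀ m ∈ M, y * m ∈ M := by
    refine hlin _ fun ⟨a, i, j, k⟩ => ?_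
    have h : y * bas P Q (a, i, j, k) =
        ((P⁻¹ : Fˣ) : F) ^ a • (z ^ a * (y * pw P Q i) * (s ^ j * t ^ k)) := by
      simp only [bas]
      rw [← mul_assoc, ← mul_assoc y, mul_pow_of_comm yz, smul_mul_assoc, smul_mul_assoc,
        mul_assoc (z ^ a) y]
    rw [h]
    refine M.smul_mem _ ?_
    rcases y_pw (Q := Q) hP i with h | h <;> rw [h]
    · exact hmem (a, i - 1, j, k)
    · rw [mul_smul_comm, smul_mul_assoc, mul_sub, sub_mul, ← mul_assoc (z ^ a) z, ← pow_succ]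
      exact M.smul_mem _ (M.sub_mem (hmem (a + 1, i - 1, j, k)) (hmem (a, i - 1, j, k)))
  have hs : ∀ m ∈ M, s * m ∈ M := hlin _ fun ⟨a, i, j, k⟩ => by
    rw [s_bas]; exact hmem _
  have ht : ∀ m ∈ M, t * m ∈ M := hlin _ fun ⟨a, i, j, k⟩ => by
    rw [t_bas]; exact M.smul_mem _ (hmem _)
  have hall : ∀ f : FreeAlgebra F (Fin 4), ∀ m ∈ M,
      (RingQuot.mkAlgHom F (ExtWeylRel F (P : F) (Q : F) 1 1) f : Alg P Q) * m ∈ M := by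
    intro f
    induction f using FreeAlgebra.induction with
    | grade0 r =>
      intro m hm
      rw [AlgHom.commutes, ← Algebra.smul_def]
      exact M.smul_mem r hm
    | grade1 i =>
      fin_cases i
      exacts [hx, hy, hs, ht]
    | mul f g hf hg =>
      intro m hm
      rw [map_mul, mul_assoc]
      exact hf _ (hg m hm)
    | add f g hf hg =>
      intro m hm
      rw [map_add, add_mul]
      exact M.add_mem (hf m hm) (hg m hm)
  obtain ⟨f, rfl⟩ := RingQuot.mkAlgHom_surjective F _ b
  have h1 : (1 : Alg P Q) ∈ M := by simpa [bas, pw] using hmem (0, 0, 0, 0)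
  simpa using hall f 1 h1

/-! ### Embedding of `B` into the quantum torus -/

/-- The image `(P - 1)⁻¹ (z - 1) x⁻¹` of `y` in the quantum torus. -/
def yT (P Q : Fˣ) : QTorus P Q :=
  ((P : F) - 1)⁻¹ • (mono P Q (1, -1, 0, 0) - mono P Q (0, -1, 0, 0))

/-- The images of the four generators in the quantum torus. -/
def genT (P Q : Fˣ) : Fin 4 → QTorus P Q :=
  ![mono P Q (0, 1, 0, 0), yT P Q, mono P Q (0, 0, 1, 0), mono P Q (0, 0, 0, 1)]

lemma xT_mul_yT : mono P Q (0, 1, 0, 0) * yT P Q =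
    ((P : F) - 1)⁻¹ • ((P : F) • mono P Q (1, 0, 0, 0) - mono P Q 0) := by
  rw [yT, mul_smul_comm, mul_sub, mono_mul, mono_mul]
  simp [tw, ← Prod.zero_eq_mk]

lemma yT_mul_xT : yT P Q * mono P Q (0, 1, 0, 0) =
    ((P : F) - 1)⁻¹ • (mono P Q (1, 0, 0, 0) - mono P Q 0) := by
  rw [yT, smul_mul_assoc, sub_mul, mono_mul, mono_mul]
  simp [tw, ← Prod.zero_eq_mk]

/-- The homomorphism from `B` to the quantum torus. -/
def emb (hP : (P : F) ≠ 1) : Alg P Q →ₐ[F] QTorus P Q :=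
  RingQuot.liftAlgHom F ⟨FreeAlgebra.lift F (genT P Q), by
    have hP' := sub_ne_zero.2 hP
    intro a b h
    cases h with
    | weyl =>
      simp only [map_sub, map_mul, map_smul, map_one, FreeAlgebra.lift_ι_apply]
      change mono P Q (0, 1, 0, 0) * yT P Q - (P : F) • (yT P Q * mono P Q (0, 1, 0, 0)) = 1
      rw [xT_mul_yT, yT_mul_xT, one_eq, smul_comm, ← smul_sub, inv_smul_eq_iff₀ hP']
      module
    | st =>
      simp only [map_mul, map_smul, FreeAlgebra.lift_ι_apply]
      change mono P Q (0, 0, 1, 0) * mono P Q (0, 0, 0, 1) =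
        (Q : F) • (mono P Q (0, 0, 0, 1) * mono P Q (0, 0, 1, 0))
      simp [mono_mul, tw]
    | sx =>
      simp only [map_mul, map_smul, FreeAlgebra.lift_ι_apply]
      change mono P Q (0, 0, 1, 0) * mono P Q (0, 1, 0, 0) =
        (1 : F) • (mono P Q (0, 1, 0, 0) * mono P Q (0, 0, 1, 0))
      simp [mono_mul, tw]
    | sy =>
      simp only [map_mul, map_smul, FreeAlgebra.lift_ι_apply]
      change mono P Q (0, 0, 1, 0) * yT P Q = (1 : F)⁻¹ • (yT P Q * mono P Q (0, 0, 1, 0))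
      simp [mono_mul, tw, yT, mul_sub, sub_mul]
    | tx =>
      simp only [map_mul, map_smul, FreeAlgebra.lift_ι_apply]
      change mono P Q (0, 0, 0, 1) * mono P Q (0, 1, 0, 0) =
        (1 : F) • (mono P Q (0, 1, 0, 0) * mono P Q (0, 0, 0, 1))
      simp [mono_mul, tw]
    | ty =>
      simp only [map_mul, map_smul, FreeAlgebra.lift_ι_apply]
      change mono P Q (0, 0, 0, 1) * yT P Q = (1 : F)⁻¹ • (yT P Q * mono P Q (0, 0, 0, 1))
      simp [mono_mul, tw, yT, mul_sub, sub_mul]⟩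

lemma emb_x (hP : (P : F) ≠ 1) : emb hP x = mono P Q (0, 1, 0, 0) := by
  simp [emb, wx, genT]

lemma emb_y (hP : (P : F) ≠ 1) : emb hP y = yT P Q := by
  simp [emb, wy, genT]

lemma emb_s (hP : (P : F) ≠ 1) : emb hP s = mono P Q (0, 0, 1, 0) := by
  simp [emb, ws, genT]

lemma emb_t (hP : (P : F) ≠ 1) : emb hP t = mono P Q (0, 0, 0, 1) := by
  simp [emb, wt, genT]

lemma emb_z (hP : (P : F) ≠ 1) : emb hP z = mono P Q (1, 0, 0, 0) := by
  have hP' := sub_ne_zero.2 hP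
  rw [z_eq, map_add, map_smul, map_mul, emb_x, emb_y, yT_mul_xT, smul_inv_smul₀ hP', map_one,
    one_eq, sub_add_cancel]

lemma seg_yT (hP : (P : F) ≠ 1) : Seg (yT P Q) (0, -1, 0, 0) (1, -1, 0, 0) := by
  have hP' := inv_ne_zero (sub_ne_zero.2 hP)
  have hmem : ∀ u, u ∈ supp (yT P Q) ↔ u = (1, -1, 0, 0) ∨ u = (0, -1, 0, 0) := by
    intro u
    rw [mem_supp, yT, map_smul, map_sub, coeff_mono, coeff_mono, smul_ne_zero_iff_right hP',
      eq_comm (a := u), eq_comm (a := u)]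
    split_ifs with h1 h2 h2 <;> simp [h1, h2]
    rw [← h1] at h2
    simp at h2
  have hle : ord (0, -1, 0, 0) ≤ ord (1, -1, 0, 0) :=
    Prod.Lex.toLex_le_toLex.2 (Or.inl (by simp [weight]))
  refine ⟨⟨(hmem _).2 (Or.inl rfl), ?_⟩, ⟨(hmem _).2 (Or.inr rfl), ?_⟩, ?_⟩
  · intro v hv
    rcases (hmem v).1 hv with rfl | rfl
    · exact le_rfl
    · exact hle
  · intro v hv
    rcases (hmem v).1 hv with rfl | rfl
    · simpa using hle
    · exact le_rfl
  · intro v hv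
    rcases (hmem v).1 hv with rfl | rfl <;> rfl

/-- Trailing exponent of the image of a basis element. -/
def lo (μ : Idx) : Expo := (μ.1, μ.2.1, μ.2.2.1, μ.2.2.2)

/-- Leading exponent of the image of a basis element. -/
def hi (μ : Idx) : Expo := (μ.1 + (-μ.2.1).toNat, μ.2.1, μ.2.2.1, μ.2.2.2)

lemma seg_bas (hP : (P : F) ≠ 1) (μ : Idx) : Seg (emb hP (bas P Q μ)) (lo μ) (hi μ) := by
  obtain ⟨a, i, j, k⟩ := μ
  have h := (((seg_mono (P := P) (Q := Q) (1, 0, 0, 0)).pow a).mul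
    (((seg_mono (0, 1, 0, 0)).pow i.toNat).mul ((seg_yT (Q := Q) hP).pow (-i).toNat))).mul
    (((seg_mono (0, 0, 1, 0)).pow j).mul ((seg_mono (0, 0, 0, 1)).pow k))
  simp only [bas, pw, map_mul, map_pow, emb_x, emb_y, emb_z, emb_s, emb_t]
  convert h using 1
  · ext <;> simp [lo]
    omega
  · ext <;> simp [hi]
    omega

/-! ### Coefficients and degrees of elements of `B` -/

lemma exists_repr (hP : (P : F) ≠ 1) (b : Alg P Q) :
    ∃ c : Idx →₀ F, (c.sum fun μ r => r • bas P Q μ) = b :=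
  (Finsupp.mem_span_range_iff_exists_finsupp).1 (span_bas hP b)

lemma coeff_emb (hP : (P : F) ≠ 1) (c : Idx →₀ F) (u : Expo) :
    coeff u (emb hP (c.sum fun μ r => r • bas P Q μ)) =
      ∑ μ ∈ c.support, c μ * coeff u (emb hP (bas P Q μ)) := by
  simp [Finsupp.sum, map_sum]

/-- No cancellation of leading exponents: on each line parallel to the `z`-axis, the basis element
with the largest power of `z` contributes its leading exponent to the image. -/
lemma exists_hi_mem (hP : (P : F) ≠ 1) (c : Idx →₀ F) {μ : Idx} (hμ : μ ∈ c.support) :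
    ∃ ν ∈ c.support, ν.2 = μ.2 ∧ μ.1 ≤ ν.1 ∧
      hi ν ∈ supp (emb hP (c.sum fun μ r => r • bas P Q μ)) := by
  obtain ⟨ν, hν, hmax⟩ := Finset.exists_max_image (c.support.filter fun ν => ν.2 = μ.2)
    (fun ν => ν.1) ⟨μ, by simpa using hμ⟩
  rw [Finset.mem_filter] at hν
  refine ⟨ν, hν.1, hν.2, hmax μ (Finset.mem_filter.2 ⟨hμ, rfl⟩), ?_⟩
  rw [mem_supp, coeff_emb, Finset.sum_eq_single ν]
  · exact mul_ne_zero (Finsupp.mem_support_iff.1 hν.1) (mem_supp.1 (seg_bas hP ν).top.1)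
  · intro ρ hρ hne
    by_contra h
    have hmem : hi ν ∈ supp (emb hP (bas P Q ρ)) := mem_supp.2 (right_ne_zero_of_mul h)
    have h1 := (seg_bas hP ρ).line _ hmem
    have h2 := (seg_bas hP ρ).fst_le hmem
    obtain ⟨a, i, j, k⟩ := ρ
    obtain ⟨a', i', j', k'⟩ := ν
    simp only [hi, lo, Prod.mk.injEq, Nat.cast_inj] at h1 h2
    obtain ⟨rfl, rfl, rfl⟩ := h1
    have h3 := hmax _ (Finset.mem_filter.2 ⟨hρ, hν.2⟩)
    simp only at h3
    exact hne (by rw [show a = a' by omega])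
  · exact fun h => absurd hν.1 h

/-- The analogue of `exists_hi_mem` for trailing exponents. -/
lemma exists_lo_mem (hP : (P : F) ≠ 1) (c : Idx →₀ F) {μ : Idx} (hμ : μ ∈ c.support) :
    ∃ ν ∈ c.support, ν.1 ≤ μ.1 ∧
      lo ν ∈ supp (emb hP (c.sum fun μ r => r • bas P Q μ)) := by
  obtain ⟨ν, hν, hmin⟩ := Finset.exists_min_image (c.support.filter fun ν => ν.2 = μ.2)
    (fun ν => ν.1) ⟨μ, by simpa using hμ⟩
  rw [Finset.mem_filter] at hν
  refine ⟨ν, hν.1, hmin μ (Finset.mem_filter.2 ⟨hμ, rfl⟩), ?_⟩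
  rw [mem_supp, coeff_emb, Finset.sum_eq_single ν]
  · exact mul_ne_zero (Finsupp.mem_support_iff.1 hν.1) (mem_supp.1 (seg_bas hP ν).bot.1)
  · intro ρ hρ hne
    by_contra h
    have hmem : lo ν ∈ supp (emb hP (bas P Q ρ)) := mem_supp.2 (right_ne_zero_of_mul h)
    have h1 := (seg_bas hP ρ).line _ hmem
    have h2 := (seg_bas hP ρ).le_fst hmem
    obtain ⟨a, i, j, k⟩ := ρ
    obtain ⟨a', i', j', k'⟩ := ν
    simp only [lo, Prod.mk.injEq, Nat.cast_inj] at h1 h2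
    obtain ⟨rfl, rfl, rfl⟩ := h1
    have h3 := hmin _ (Finset.mem_filter.2 ⟨hρ, hν.2⟩)
    simp only at h3
    exact hne (by rw [show a = a' by omega])
  · exact fun h => absurd hν.1 h

lemma emb_injective (hP : (P : F) ≠ 1) : Function.Injective (emb (Q := Q) hP) := by
  rw [injective_iff_map_eq_zero]
  intro b hb
  obtain ⟨c, rfl⟩ := exists_repr hP b
  by_contra hne
  have hc : c ≠ 0 := by rintro rfl; simp at hne
  obtain ⟨μ, hμ⟩ := Finsupp.support_nonempty_iff.2 hc
  obtain ⟨ν, -, -, -, h⟩ := exists_hi_mem (Q := Q) hP c hμ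
  rw [mem_supp, hb] at h
  simp at h

lemma noZeroDivisors (hP : (P : F) ≠ 1) : NoZeroDivisors (Alg P Q) :=
  (emb_injective hP).noZeroDivisors _ (map_zero _) (map_mul _)

lemma supp_emb_nonneg (hP : (P : F) ≠ 1) (b : Alg P Q) {u : Expo} (hu : u ∈ supp (emb hP b)) :
    0 ≤ u.1 ∧ 0 ≤ u.2.2.1 ∧ 0 ≤ u.2.2.2 := by
  obtain ⟨c, rfl⟩ := exists_repr hP b
  rw [mem_supp, coeff_emb] at hu
  obtain ⟨μ, -, h⟩ := Finset.exists_ne_zero_of_sum_ne_zero hu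
  have hmem : u ∈ supp (emb hP (bas P Q μ)) := mem_supp.2 (right_ne_zero_of_mul h)
  have h1 := (seg_bas hP μ).line _ hmem
  have h2 := (seg_bas hP μ).le_fst hmem
  rw [h1]
  simp only [lo] at h2 ⊢
  omega

lemma weight_hi (μ : Idx) : weight (hi μ) = 2 * μ.1 + |μ.2.1| + μ.2.2.1 + μ.2.2.2 := by
  simp only [weight, hi]
  rcases abs_cases μ.2.1 with h | h <;> omega

/-- The weight on the quantum torus restricts to the standard degree on `B`: an element whose
image has weight at most `d` is a combination of basis elements of degree at most `d`. -/
lemma repr_weight (hP : (P : F) ≠ 1) (c : Idx →₀ F) {d : ℤ}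
    (h : ∀ u ∈ supp (emb hP (c.sum fun μ r => r • bas P Q μ)), weight u ≤ d)
    {μ : Idx} (hμ : μ ∈ c.support) : 2 * μ.1 + |μ.2.1| + μ.2.2.1 + μ.2.2.2 ≤ d := by
  obtain ⟨ν, -, h1, h2, h3⟩ := exists_hi_mem hP c hμ
  have := h _ h3
  rw [weight_hi, h1] at this
  omega

lemma scalar_of_weight (hP : (P : F) ≠ 1) {b : Alg P Q} (h : ∀ u ∈ supp (emb hP b), weight u ≤ 0) :
    ∃ r : F, b = r • 1 := by
  obtain ⟨c, rfl⟩ := exists_repr hP b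
  refine ⟨∑ μ ∈ c.support, c μ, ?_⟩
  rw [Finsupp.sum, Finset.sum_smul]
  refine Finset.sum_congr rfl fun μ hμ => ?_
  have h1 := repr_weight hP c h hμ
  obtain ⟨a, i, j, k⟩ := μ
  simp only at h1
  have h2 := abs_nonneg i
  obtain rfl : i = 0 := abs_eq_zero.1 (by omega)
  obtain rfl : a = 0 := by omega
  obtain rfl : j = 0 := by omega
  obtain rfl : k = 0 := by omega
  simp [bas, pw]

lemma mem_span_of_weight (hP : (P : F) ≠ 1) {b : Alg P Q}
    (h : ∀ u ∈ supp (emb hP b), weight u ≤ 1) :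
    b ∈ Submodule.span F ({1, x, y, s, t} : Set (Alg P Q)) := by
  obtain ⟨c, rfl⟩ := exists_repr hP b
  refine Submodule.sum_mem _ fun μ hμ => Submodule.smul_mem _ _ (Submodule.subset_span ?_)
  have h1 := repr_weight hP c h hμ
  obtain ⟨a, i, j, k⟩ := μ
  simp only at h1
  have h2 := abs_nonneg i
  obtain rfl : a = 0 := by omega
  have h3 : (i = 0 ∧ j = 0 ∧ k = 0) ∨ (i = 1 ∧ j = 0 ∧ k = 0) ∨ (i = -1 ∧ j = 0 ∧ k = 0) ∨
      (i = 0 ∧ j = 1 ∧ k = 0) ∨ (i = 0 ∧ j = 0 ∧ k = 1) := by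
    rcases abs_cases i with h | h <;> omega
  rcases h3 with ⟨rfl, rfl, rfl⟩ | ⟨rfl, rfl, rfl⟩ | ⟨rfl, rfl, rfl⟩ | ⟨rfl, rfl, rfl⟩ |
    ⟨rfl, rfl, rfl⟩ <;> simp [bas, pw]

lemma weight_top_nonneg (hP : (P : F) ≠ 1) {b : Alg P Q} {u : Expo} (h : IsTop ord (emb hP b) u) :
    0 ≤ weight u := by
  have hne : b ≠ 0 := by
    rintro rfl
    exact h.ne_zero (map_zero _)
  obtain ⟨c, rfl⟩ := exists_repr hP b
  have hc : c ≠ 0 := by rintro rfl; simp at hne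
  obtain ⟨μ, hμ⟩ := Finsupp.support_nonempty_iff.2 hc
  have h1 := repr_weight hP c (fun v hv => weight_le_of_ord_le (h.2 v hv)) hμ
  have h2 := abs_nonneg μ.2.1
  omega

lemma weight_add (u v : Expo) : weight (u + v) = weight u + weight v := by
  simp only [weight, Prod.fst_add, Prod.snd_add]
  ring

/-- A right factor of a nonzero scalar is a scalar, because weights of leading exponents add up and
are nonnegative on `B`. -/
lemma scalar_of_mul_eq (hP : (P : F) ≠ 1) {b c : Alg P Q} {r : F} (hr : r ≠ 0)
    (h : b * c = r • 1) :
    ∃ r' : F, c = r' • 1 := by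
  have h' : emb hP b * emb hP c = r • mono P Q 0 := by
    rw [← map_mul, h, map_smul, map_one, one_eq]
  have h0 : IsTop ord (emb hP b * emb hP c) 0 := by
    rw [h']
    constructor
    · rw [mem_supp, map_smul, coeff_mono]; simpa using hr
    · intro v hv
      rw [mem_supp, map_smul, coeff_mono] at hv
      rw [show (0 : Expo) = v by by_contra hne; simp [hne] at hv]
  have hb : emb hP b ≠ 0 := fun hb => h0.ne_zero (by rw [hb, zero_mul])
  have hc : emb hP c ≠ 0 := fun hc => h0.ne_zero (by rw [hc, mul_zero])
  obtain ⟨u, hu⟩ := exists_isTop ord hb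
  obtain ⟨v, hv⟩ := exists_isTop ord hc
  have h1 := congrArg weight ((hu.mul ord_injective hv).unique ord_injective h0)
  rw [weight_add] at h1
  have h2 := weight_top_nonneg hP hu
  have h3 := weight_top_nonneg hP hv
  refine scalar_of_weight hP fun w hw => (weight_le_of_ord_le (hv.2 w hw)).trans ?_
  simp only [weight, Prod.fst_zero, Prod.snd_zero] at *
  omega

lemma x_not_scalar (hP : (P : F) ≠ 1) (r : F) : x ≠ r • 1 := by
  intro h
  have h1 := congrArg (coeff (0, 1, 0, 0)) (congrArg (emb hP) h)
  rw [emb_x, map_smul, map_one, one_eq, map_smul, coeff_mono, coeff_mono] at h1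
  simp [Prod.ext_iff] at h1

lemma y_not_scalar (hP : (P : F) ≠ 1) (r : F) : y ≠ r • 1 := by
  intro h
  have h1 := congrArg (emb hP) h
  rw [emb_y, map_smul, map_one, one_eq] at h1
  have h2 := mem_supp.1 (seg_yT (Q := Q) hP).top.1
  rw [h1, map_smul, coeff_mono] at h2
  simp [Prod.ext_iff] at h2

/-! ### Normal elements -/

lemma dvd_smul' {b c : Alg P Q} (h : b ∣ c) (r : F) : b ∣ r • c := by
  obtain ⟨d, rfl⟩ := h
  exact ⟨r • d, (mul_smul_comm _ _ _).symm⟩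

lemma z_dvd (hP : (P : F) ≠ 1) {b : Alg P Q} (h : ∀ u ∈ supp (emb hP b), u.1 ≠ 0) : z ∣ b := by
  obtain ⟨c, rfl⟩ := exists_repr hP b
  refine Finset.dvd_sum fun μ hμ => dvd_smul' ?_ _
  obtain ⟨ν, -, h1, h2⟩ := exists_lo_mem hP c hμ
  have h3 := h _ h2
  obtain ⟨a, m⟩ := μ
  obtain ⟨a, rfl⟩ : ∃ a', a = a' + 1 := Nat.exists_eq_succ_of_ne_zero fun ha => h3 (by
    simp only [lo]; simp only at h1; omega)
  exact ⟨_, (z_bas (a, m)).symm⟩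

lemma s_dvd (hP : (P : F) ≠ 1) {b : Alg P Q} (h : ∀ u ∈ supp (emb hP b), u.2.2.1 ≠ 0) : s ∣ b := by
  obtain ⟨c, rfl⟩ := exists_repr hP b
  refine Finset.dvd_sum fun μ hμ => dvd_smul' ?_ _
  obtain ⟨ν, -, h1, -, h2⟩ := exists_hi_mem hP c hμ
  have h3 := h _ h2
  rw [hi, h1] at h3
  obtain ⟨a, i, j, k⟩ := μ
  obtain ⟨j, rfl⟩ : ∃ j', j = j' + 1 := Nat.exists_eq_succ_of_ne_zero (by simpa using h3)
  exact ⟨_, (s_bas a i j k).symm⟩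

lemma t_dvd (hP : (P : F) ≠ 1) {b : Alg P Q} (h : ∀ u ∈ supp (emb hP b), u.2.2.2 ≠ 0) : t ∣ b := by
  obtain ⟨c, rfl⟩ := exists_repr hP b
  refine Finset.dvd_sum fun μ hμ => dvd_smul' ?_ _
  obtain ⟨ν, -, h1, -, h2⟩ := exists_hi_mem hP c hμ
  have h3 := h _ h2
  rw [hi, h1] at h3
  obtain ⟨a, i, j, k⟩ := μ
  obtain ⟨k, rfl⟩ : ∃ k', k = k' + 1 := Nat.exists_eq_succ_of_ne_zero (by simpa using h3)
  refine ⟨(Q : F) ^ j • bas P Q (a, i, j, k), ?_⟩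
  rw [mul_smul_comm, t_bas, smul_smul, ← mul_pow]
  simp

/-- A normal element of `B` is divisible by one of `z`, `s`, `t`, or it is central. Normality
forces `N` to commute with `x`, `s`, `t` up to scalars; a scalar different from `1` excludes the
exponent `0` of `z`, `t`, `s` respectively. -/
lemma normal_dvd (hP : (P : F) ≠ 1) {N : Alg P Q} (hN : N ≠ 0)
    (hnorm : ∀ b, ∃ b', N * b = b' * N) :
    (z ∣ N ∨ s ∣ N ∨ t ∣ N) ∨ (N * x = x * N ∧ N * y = y * N ∧ N * s = s * N ∧ N * t = t * N) := by
  have hP' := sub_ne_zero.2 hP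
  have := noZeroDivisors (Q := Q) hP
  have hN' : emb hP N ≠ 0 := fun h => hN (emb_injective hP (h.trans (map_zero _).symm))
  have key : ∀ (g : Alg P Q) (v : Expo), emb hP g = mono P Q v → ∃ r : F,
      N * g = r • (g * N) ∧ ∀ u ∈ supp (emb hP N), (tw P Q u v : F) = r * tw P Q v u := by
    intro g v hg
    obtain ⟨g', hg'⟩ := hnorm g
    have h1 := congrArg (emb hP) hg'
    rw [map_mul, map_mul, hg] at h1
    obtain ⟨r, hr⟩ := eq_smul_mono hN' h1
    rw [hr] at h1
    refine ⟨r, emb_injective hP ?_, fun u hu => tw_eq_of_comm h1 hu⟩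
    rw [map_mul, map_smul, map_mul, hg, h1, smul_mul_assoc]
  obtain ⟨rx, hx, hx'⟩ := key x _ (emb_x hP)
  obtain ⟨rs, hs, hs'⟩ := key s _ (emb_s hP)
  obtain ⟨rt, ht, ht'⟩ := key t _ (emb_t hP)
  obtain ⟨rz, hz, -⟩ := key z _ (emb_z hP)
  by_cases h1 : rx = 1
  swap
  · refine Or.inl (Or.inl (z_dvd hP fun u hu h0 => h1 ?_))
    have := hx' u hu
    simp only [tw, h0] at this
    simpa using this.symm
  by_cases h2 : rt = 1
  swap
  · refine Or.inl (Or.inr (Or.inl (s_dvd hP fun u hu h0 => h2 ?_)))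
    have := ht' u hu
    simp only [tw, h0] at this
    simpa using this.symm
  by_cases h3 : rs = 1
  swap
  · refine Or.inl (Or.inr (Or.inr (t_dvd hP fun u hu h0 => h3 ?_)))
    have := hs' u hu
    simp only [tw, h0] at this
    simpa using this.symm
  subst h1 h2 h3
  rw [one_smul] at hx hs ht
  refine Or.inr ⟨hx, ?_, hs, ht⟩
  obtain ⟨y', hy⟩ := hnorm y
  -- Both sides equal `(P - 1) N y x = N (z - 1)`.
  have e1 : (((P : F) - 1) • (y' * x)) * N = (rz • z - 1) * N := by
    rw [smul_mul_assoc, mul_assoc, ← hx, ← mul_assoc, ← hy, mul_assoc, ← mul_smul_comm, yx_smul,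
      mul_sub, hz, sub_mul, smul_mul_assoc, mul_one, one_mul]
  have e2 : ((P : F) - 1) • (y' * x) = rz • z - 1 := mul_right_cancel₀ hN e1
  have e3 : (((P : F) - 1) • (y' - rz • y)) * x = (rz - 1) • 1 := by
    have e4 := congrArg (fun b => rz • b) (yx_smul (P := P) (Q := Q))
    rw [smul_mul_assoc, sub_mul, smul_mul_assoc, smul_sub, e2, smul_comm, e4]
    module
  -- As `x` is not invertible in `B`, the scalar `rz - 1` vanishes.
  have e5 : rz = 1 := by
    by_contra hne
    obtain ⟨r, hr⟩ := scalar_of_mul_eq hP (sub_ne_zero.2 hne) e3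
    exact x_not_scalar hP r hr
  subst e5
  rw [sub_self, zero_smul, one_smul] at e3
  have hx0 : x ≠ 0 := fun h => x_not_scalar (Q := Q) hP 0 (by simpa using h)
  have e6 := ((mul_eq_zero.1 e3).resolve_right hx0)
  rw [hy, sub_eq_zero.1 ((smul_eq_zero.1 e6).resolve_left hP')]

/-- Normality need only be checked against the generators. -/
lemma normal_of_gens {n : Alg P Q} (hx : ∃ b, n * x = b * n) (hy : ∃ b, n * y = b * n)
    (hs : ∃ b, n * s = b * n) (ht : ∃ b, n * t = b * n) (b : Alg P Q) :
    ∃ b', n * b = b' * n := by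
  obtain ⟨f, rfl⟩ := RingQuot.mkAlgHom_surjective F _ b
  induction f using FreeAlgebra.induction with
  | grade0 r => exact ⟨algebraMap F _ r, by rw [AlgHom.commutes, Algebra.commutes]⟩
  | grade1 i =>
    fin_cases i
    exacts [hx, hy, hs, ht]
  | mul f g hf hg =>
    obtain ⟨f', hf⟩ := hf
    obtain ⟨g', hg⟩ := hg
    exact ⟨f' * g', by rw [map_mul, ← mul_assoc, hf, mul_assoc, hg, mul_assoc]⟩
  | add f g hf hg =>
    obtain ⟨f', hf⟩ := hf
    obtain ⟨g', hg⟩ := hg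
    exact ⟨f' + g', by rw [map_add, mul_add, hf, hg, add_mul]⟩

lemma normal_prime {n : Alg P Q} (hn : n = z ∨ n = s ∨ n = t) (b : Alg P Q) :
    ∃ b', n * b = b' * n := by
  rcases hn with rfl | rfl | rfl
  · refine normal_of_gens ⟨((P⁻¹ : Fˣ) : F) • x, ?_⟩ ⟨(P : F) • y, ?_⟩ ⟨s, sz.eq.symm⟩
      ⟨t, tz.eq.symm⟩ b
    · rw [smul_mul_assoc, xz, smul_smul]; simp
    · rw [smul_mul_assoc, zy]
  · refine normal_of_gens ⟨x, rel_sx⟩ ⟨y, rel_sy⟩ ⟨s, rfl⟩ ⟨(Q : F) • t, ?_⟩ b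
    rw [smul_mul_assoc, rel_st]
  · refine normal_of_gens ⟨x, rel_tx⟩ ⟨y, rel_ty⟩ ⟨((Q⁻¹ : Fˣ) : F) • s, ?_⟩ ⟨t, rfl⟩ b
    rw [smul_mul_assoc, ts]

lemma prime_ne_zero (hP : (P : F) ≠ 1) {n : Alg P Q} (hn : n = z ∨ n = s ∨ n = t) : n ≠ 0 := by
  rintro rfl
  rcases hn with h | h | h <;> have h1 := congrArg (emb hP) h.symm
  · rw [emb_z, map_zero] at h1; exact (isTop_mono ord _).ne_zero h1
  · rw [emb_s, map_zero] at h1; exact (isTop_mono ord _).ne_zero h1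
  · rw [emb_t, map_zero] at h1; exact (isTop_mono ord _).ne_zero h1

lemma prime_not_central (hP : (P : F) ≠ 1) (hQ : (Q : F) ≠ 1) {n : Alg P Q}
    (hn : n = z ∨ n = s ∨ n = t) :
    ¬ ∀ b, n * b = b * n := by
  have := noZeroDivisors (Q := Q) hP
  have hx0 : x ≠ 0 := fun h => x_not_scalar (Q := Q) hP 0 (by simpa using h)
  have hz0 : z ≠ 0 := prime_ne_zero (Q := Q) hP (Or.inl rfl)
  have hs0 : s ≠ 0 := prime_ne_zero (Q := Q) hP (Or.inr (Or.inl rfl))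
  have ht0 : t ≠ 0 := prime_ne_zero (Q := Q) hP (Or.inr (Or.inr rfl))
  have key : ∀ (r : F) (b : Alg P Q), b ≠ 0 → b = r • b → r = 1 := by
    intro r b hb h
    by_contra hne
    have h1 : (r - 1) • b = 0 := by
      have : (r - 1) • b = r • b - b := by module
      rw [this, ← h, sub_self]
    exact hb ((smul_eq_zero.1 h1).resolve_left (sub_ne_zero.2 hne))
  intro h
  rcases hn with rfl | rfl | rfl
  · exact hP (key _ _ (mul_ne_zero hz0 hx0) ((h x).trans xz))
  · exact hQ (key _ _ (mul_ne_zero ht0 hs0) ((h t).symm.trans rel_st))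
  · exact hQ (key _ _ (mul_ne_zero ht0 hs0) ((h s).trans rel_st))

/-- None of `z`, `s`, `t` divides another one. -/
lemma prime_dvd_eq (hP : (P : F) ≠ 1) {n n' : Alg P Q}
    (hn : n = z ∨ n = s ∨ n = t) (hn' : n' = z ∨ n' = s ∨ n' = t)
    (h : n' ∣ n) : n' = n := by
  obtain ⟨c, hc⟩ := h
  have h1 := congrArg (emb hP) hc
  rw [map_mul] at h1
  have key : ∀ u v : Expo, emb hP n = mono P Q u → emb hP n' = mono P Q v →
      u - v ∈ supp (emb hP c) := by
    intro u v hu hv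
    rw [hu, hv] at h1
    have h2 := congrArg (coeff (v + (u - v))) h1
    rw [coeff_mono_mul, coeff_mono, if_pos (by abel)] at h2
    rw [mem_supp]
    intro h3
    rw [h3, zero_mul] at h2
    exact one_ne_zero h2
  rcases hn with rfl | rfl | rfl <;> rcases hn' with rfl | rfl | rfl
  · rfl
  · simpa using supp_emb_nonneg hP c (key _ _ (emb_z hP) (emb_s hP))
  · simpa using supp_emb_nonneg hP c (key _ _ (emb_z hP) (emb_t hP))
  · simpa using supp_emb_nonneg hP c (key _ _ (emb_s hP) (emb_z hP))
  · rfl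
  · simpa using supp_emb_nonneg hP c (key _ _ (emb_s hP) (emb_t hP))
  · simpa using supp_emb_nonneg hP c (key _ _ (emb_t hP) (emb_z hP))
  · simpa using supp_emb_nonneg hP c (key _ _ (emb_t hP) (emb_s hP))
  · rfl

/-! ### Automorphisms -/

/-- The image of `z`, `s` or `t` is normal and not central, hence divisible by `z`, `s` or `t`. -/
lemma exists_dvd_image (hP : (P : F) ≠ 1) (hQ : (Q : F) ≠ 1) (φ : Alg P Q ≃ₐ[F] Alg P Q)
    {n : Alg P Q} (hn : n = z ∨ n = s ∨ n = t) : ∃ n', (n' = z ∨ n' = s ∨ n' = t) ∧ n' ∣ φ n := by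
  have hne : φ n ≠ 0 := by
    rw [Ne, map_eq_zero_iff φ φ.injective]
    exact prime_ne_zero hP hn
  have hnorm : ∀ b, ∃ b', φ n * b = b' * φ n := by
    intro b
    obtain ⟨b', hb⟩ := normal_prime hn (φ.symm b)
    refine ⟨φ b', ?_⟩
    rw [← map_mul, ← hb, map_mul, φ.apply_symm_apply]
  rcases normal_dvd hP hne hnorm with h | ⟨h1, h2, h3, h4⟩
  · rcases h with h | h | h
    exacts [⟨z, by simp, h⟩, ⟨s, by simp, h⟩, ⟨t, by simp, h⟩]
  · refine absurd (fun b => ?_) (prime_not_central hP hQ hn)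
    apply φ.injective
    rw [map_mul, map_mul]
    obtain ⟨f, hf⟩ := RingQuot.mkAlgHom_surjective F _ (φ b)
    rw [← hf]
    clear hf
    induction f using FreeAlgebra.induction with
    | grade0 r => rw [AlgHom.commutes, Algebra.commutes]
    | grade1 i =>
      fin_cases i
      exacts [h1, h2, h3, h4]
    | mul f g hf hg => rw [map_mul, ← mul_assoc, hf, mul_assoc, hg, mul_assoc]
    | add f g hf hg => rw [map_add, mul_add, hf, hg, add_mul]

/-- An automorphism permutes `z`, `s`, `t` up to scalars. -/
lemma image_prime (hP : (P : F) ≠ 1) (hQ : (Q : F) ≠ 1) (φ : Alg P Q ≃ₐ[F] Alg P Q)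
    {n : Alg P Q} (hn : n = z ∨ n = s ∨ n = t) :
    ∃ n', (n' = z ∨ n' = s ∨ n' = t) ∧ ∃ r : F, r ≠ 0 ∧ φ n = r • n' := by
  have := noZeroDivisors (Q := Q) hP
  obtain ⟨n', hn', c, hc⟩ := exists_dvd_image hP hQ φ hn
  obtain ⟨n'', hn'', d, hd⟩ := exists_dvd_image hP hQ φ.symm hn'
  have h1 : n = n'' * (d * φ.symm c) := by
    rw [← mul_assoc, ← hd, ← map_mul, ← hc, φ.symm_apply_apply]
  obtain rfl := prime_dvd_eq hP hn hn'' ⟨_, h1⟩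
  have h2 : d * φ.symm c = (1 : F) • 1 := by
    rw [one_smul]
    exact mul_left_cancel₀ (prime_ne_zero hP hn) (by rw [← h1, mul_one])
  obtain ⟨r, hr⟩ := scalar_of_mul_eq hP one_ne_zero h2
  have hc' : c = r • 1 := by
    apply φ.symm.injective
    rw [hr, map_smul, map_one]
  have h3 : φ n'' = r • n' := by rw [hc, hc', mul_smul_comm, mul_one]
  refine ⟨n', hn', r, ?_, h3⟩
  rintro rfl
  rw [zero_smul, map_eq_zero_iff φ φ.injective] at h3
  exact prime_ne_zero hP hn h3

lemma weight_pos (hP : (P : F) ≠ 1) {b : Alg P Q} (hb : ∀ r : F, b ≠ r • 1) {u : Expo}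
    (h : IsTop ord (emb hP b) u) : 1 ≤ weight u := by
  by_contra! hlt
  obtain ⟨r, hr⟩ := scalar_of_weight hP (b := b) fun v hv =>
    (weight_le_of_ord_le (h.2 v hv)).trans (by omega)
  exact hb r hr

theorem affine (hP : (P : F) ≠ 1) (hQ : (Q : F) ≠ 1) (φ : Alg P Q ≃ₐ[F] Alg P Q) :
    ∀ v ∈ Submodule.span F ({1, x, y, s, t} : Set (Alg P Q)),
      φ v ∈ Submodule.span F ({1, x, y, s, t} : Set (Alg P Q)) := by
  have hP' := sub_ne_zero.2 hP
  have hX : ∀ r : F, φ x ≠ r • 1 := fun r h => x_not_scalar hP r (φ.injective (by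
    rw [h, map_smul, map_one]))
  have hY : ∀ r : F, φ y ≠ r • 1 := fun r h => y_not_scalar hP r (φ.injective (by
    rw [h, map_smul, map_one]))
  have hX0 : emb hP (φ x) ≠ 0 := fun h => hX 0 (by
    rw [zero_smul]; exact emb_injective hP (h.trans (map_zero _).symm))
  have hY0 : emb hP (φ y) ≠ 0 := fun h => hY 0 (by
    rw [zero_smul]; exact emb_injective hP (h.trans (map_zero _).symm))
  obtain ⟨u, hu⟩ := exists_isTop ord hX0
  obtain ⟨v, hv⟩ := exists_isTop ord hY0
  have hu1 := weight_pos hP hX hu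
  have hv1 := weight_pos hP hY hv
  obtain ⟨n, hn, r, hr, hz⟩ := image_prime hP hQ φ (Or.inl rfl)
  -- The leading exponent `v + u` of `φ y φ x` is one of the exponents of `φ z - 1`.
  have hw : ∀ m : Expo, emb hP n = mono P Q m → weight v + weight u ≤ max (weight m) 0 := by
    intro m hm
    have h1 : ((P : F) - 1) • (emb hP (φ y) * emb hP (φ x)) = r • mono P Q m - mono P Q 0 := by
      rw [← hm, ← one_eq, ← map_one (emb hP), ← map_smul (emb hP) r, ← map_sub, ← map_mul,
        ← map_smul, ← hz, ← map_mul, ← map_smul, yx_smul, map_sub, map_one]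
    have h2 := (hv.mul ord_injective hu).1
    have h3 : v + u ∈ supp (((P : F) - 1) • (emb hP (φ y) * emb hP (φ x))) := by
      rw [mem_supp, map_smul]
      exact mul_ne_zero hP' (mem_supp.1 h2)
    rw [h1, mem_supp, map_sub, map_smul, coeff_mono, coeff_mono] at h3
    rw [← weight_add]
    by_cases h4 : m = v + u
    · rw [h4]; exact le_max_left _ _
    · by_cases h5 : 0 = v + u
      · rw [← h5]; exact le_max_right _ _
      · simp [h4, h5] at h3
  have hnz : n = z := by
    rcases hn with h | h | h
    · exact h
    · have := hw _ (by rw [h, emb_s])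
      rw [show weight (0, 0, 1, 0) = 1 from rfl] at this
      omega
    · have := hw _ (by rw [h, emb_t])
      rw [show weight (0, 0, 0, 1) = 1 from rfl] at this
      omega
  subst hnz
  have hsum := hw _ (emb_z hP)
  rw [show weight (1, 0, 0, 0) = 2 from rfl] at hsum
  have hst : ∀ n, n = s ∨ n = t → φ n ∈ Submodule.span F ({1, x, y, s, t} : Set (Alg P Q)) := by
    intro m hm
    obtain ⟨n', hn', r', hr', h⟩ := image_prime hP hQ φ (Or.inr hm)
    rw [h]
    refine Submodule.smul_mem _ _ ?_
    rcases hn' with rfl | rfl | rfl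
    -- If `φ m` were a multiple of `z`, as `φ z` is, then `m` would be a multiple of `z`.
    · have h1 : m = z * ((r' * r⁻¹) • 1) := by
        apply φ.injective
        rw [mul_smul_comm, mul_one, map_smul, hz, h, smul_smul, mul_assoc, inv_mul_cancel₀ hr,
          mul_one]
      have h2 := prime_dvd_eq hP (Or.inr hm) (Or.inl rfl) ⟨_, h1⟩
      have h3 := congrArg (emb hP) h2
      have h4 := congrArg (coeff (1, 0, 0, 0)) h3
      rw [emb_z, coeff_mono, if_pos rfl] at h4
      rcases hm with rfl | rfl
      · rw [emb_s, coeff_mono] at h4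
        simp at h4
      · rw [emb_t, coeff_mono] at h4
        simp at h4
    · exact Submodule.subset_span (by simp)
    · exact Submodule.subset_span (by simp)
  intro b hb
  induction hb using Submodule.span_induction with
  | mem b hb =>
    rcases hb with rfl | rfl | rfl | rfl | rfl
    · rw [map_one]
      exact Submodule.subset_span (by simp)
    · exact mem_span_of_weight hP fun w hw =>
        (weight_le_of_ord_le (hu.2 w hw)).trans (by omega)
    · exact mem_span_of_weight hP fun w hw =>
        (weight_le_of_ord_le (hv.2 w hw)).trans (by omega)
    · exact hst _ (Or.inl rfl)
    · exact hst _ (Or.inr rfl)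
  | zero => simp
  | add a b _ _ ha hb => rw [map_add]; exact Submodule.add_mem _ ha hb
  | smul r a _ ha => rw [map_smul]; exact Submodule.smul_mem _ r ha

end Algebra

end ExtWeylAff

/-- Assume `p ≠ 1` and `q ≠ 1`. Then every `K`-algebra automorphism of
`B = A_p(1, 1, K_q[s,t])` is affine, i.e. it maps the degree-`≤ 1` part
`F₁ = K ⊕ Kx ⊕ Ky ⊕ Ks ⊕ Kt` of the standard filtration into itself. -/
theorem extWeyl11_automorphism_affine
    (hp : p ≠ 0) (hq : q ≠ 0) (hp1 : p ≠ 1) (hq1 : q ≠ 1)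
    (φ : ExtWeyl K p q 1 1 ≃ₐ[K] ExtWeyl K p q 1 1) :
    ∀ v ∈ Submodule.span K ({1, wx K p q, wy K p q, ws K p q, wt K p q} :
        Set (ExtWeyl K p q 1 1)),
      φ v ∈ Submodule.span K ({1, wx K p q, wy K p q, ws K p q, wt K p q} :
        Set (ExtWeyl K p q 1 1)) := by
  obtain ⟨P, rfl⟩ : ∃ P : Kˣ, (P : K) = p := ⟨Units.mk0 p hp, rfl⟩
  obtain ⟨Q, rfl⟩ : ∃ Q : Kˣ, (Q : K) = q := ⟨Units.mk0 q hq, rfl⟩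
  exact ExtWeylAff.affine hp1 hq1 φ
end
end

section
/- Assume p ≠ 1 and q ≠ 1, and let B = A_p(1, 1, K_q[s,t]). Every K-algebra automorphism φ of B satisfies: φ(x) = α·x and φ(y) = α⁻¹·y, or (only possible when p = −1) φ(x) = α·y and φ(y) = α⁻¹·x; and φ(s) = β·s and φ(t) = γ·t, or (only possible when q = −1) φ(s) = β·t and φ(t) = γ·s, for some α, β, γ ∈ K^×. Consequently: (a) if p ≠ −1 and q ≠ −1 then Aut_K(B) ≅ (K^×)^3; (b) if p = −1 and q ≠ −1 then Aut_K(B) ≅ Z/2Z ⋉ (K^×)^3; (c) if p ≠ −1 and q = −1 then Aut_K(B) ≅ Z/2Z ⋉ (K^×)^3; (d) if p = −1 and q = −1 then Aut_K(B) ≅ Z/2Z ⋉ (Z/2Z ⋉ (K^×)^3). -/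
/-!
Why the automorphisms are the obvious ones. Write `B = A_p(1, 1, K_q[s,t])` and
`z = xy - yx = (p - 1) yx + 1`, a normal element with `xz = p zx`.

*Quantum torus.* `B` embeds (`emb_injective`) in the twisted monoid algebra with basis the monomials
in `x^±1, z, s, t`, where `y = (p - 1)⁻¹ (z - 1) x⁻¹`. Comparing the largest and smallest exponents
of products shows that `B` is a domain, that its units are scalars (`unit_scalar`; the Fock module,
on which `x` kills the vacuum, shows that negative powers of `x` are not in `B`), and that a normal
element commutes with `x`, `z`, `s`, `t` up to scalars, so that all of its monomials have the same
commutation factors (`IsN.rel`).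

*The images of `s` and `t`.* Setting `z = t = 0` gives a homomorphism from `B` to `K[x^±1][s]`.
Composed with an automorphism `φ` it kills one of `s`, `t`, sends `x` and `y` to constants (they
become units) and is still onto a ring containing `s`, so that it sends the other one of `s`, `t` to
a polynomial of degree one. Hence `φ(s)` or `φ(t)` has a monomial of `s`-degree one, and as `q ≠ 1`
the commutation factor with `t` makes every monomial of it divisible by `s`. The same holds for `t`
and for `φ⁻¹`; units being scalars, `φ` rescales or swaps `s` and `t` (`form_ST`).

*The images of `x` and `y`.* The normal element `φ(z)` commutes with `s` and `t`, and is not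
central, so it does not commute with `x`; its commutation factor with `x` makes it divisible by `z`, and
`φ(z) = ζ z` (`form_Z`). Now `φ(y) φ(x) = (p - 1)⁻¹ (ζ z - 1)` has only two monomials, so one of
the factors is a monomial, hence a multiple of `x`, and the Fock module determines `ζ` and the other
factor (`form_XY`).

*The groups.* The rescalings form a torus `(K^×)³`, which together with the swaps available for
`p = -1` and `q = -1` exhausts the automorphism group; the isomorphisms come from the universal
property of semidirect products (`invLift`).
-/

noncomputable section

open FreeAlgebra

variable (K : Type*) [Field K] (p q : K)

/-- The group homomorphism `ℤ/2ℤ → M` sending the generator to an involution `j`. -/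
def involutionHom {M : Type*} [Monoid M] (j : M) (hj : j * j = 1) :
    Multiplicative (ZMod 2) →* M where
  toFun c := j ^ (Multiplicative.toAdd c).val
  map_one' := by
    show j ^ (0 : ZMod 2).val = 1
    simp
  map_mul' a b := by
    have key : ∀ k : ℕ, j ^ k = j ^ (k % 2) := by
      intro k
      conv_lhs => rw [← Nat.div_add_mod k 2]
      rw [pow_add, pow_mul, show j ^ 2 = 1 from by rw [sq, hj], one_pow, one_mul]
    show j ^ (Multiplicative.toAdd a + Multiplicative.toAdd b).val = _
    rw [ZMod.val_add, ← key, pow_add]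


/-- The involution of `(K^×)³` inverting the first coordinate (conjugation by the
automorphism interchanging `x` and `y`). -/
def invFst : MulAut (Kˣ × Kˣ × Kˣ) where
  toFun g := (g.1⁻¹, g.2)
  invFun g := (g.1⁻¹, g.2)
  left_inv g := by simp
  right_inv g := by simp
  map_mul' a b := by
    simp [Prod.ext_iff, mul_comm]

/-- The involution of `(K^×)³` interchanging the last two coordinates (conjugation by the
automorphism interchanging `s` and `t`). -/
def swapST : MulAut (Kˣ × Kˣ × Kˣ) where
  toFun g := (g.1, g.2.2, g.2.1)
  invFun g := (g.1, g.2.2, g.2.1)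
  left_inv g := rfl
  right_inv g := rfl
  map_mul' a b := rfl

lemma invFst_sq : invFst K * invFst K = 1 :=
  MulEquiv.ext fun g => by simp [MulAut.mul_apply, invFst]

lemma swapST_sq : swapST K * swapST K = 1 :=
  MulEquiv.ext fun g => rfl

/-- `ℤ/2ℤ ⋉ (K^×)³`, where the generator acts by inverting the first coordinate. -/
abbrev XYGroup := SemidirectProduct (Kˣ × Kˣ × Kˣ) (Multiplicative (ZMod 2))
  (involutionHom (invFst K) (invFst_sq K))

/-- `ℤ/2ℤ ⋉ (K^×)³`, where the generator acts by swapping the last two coordinates. -/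
abbrev STGroup := SemidirectProduct (Kˣ × Kˣ × Kˣ) (Multiplicative (ZMod 2))
  (involutionHom (swapST K) (swapST_sq K))

lemma swapST_comm_invFst_pow (k : ℕ) (n : Kˣ × Kˣ × Kˣ) :
    swapST K ((invFst K ^ k) n) = (invFst K ^ k) (swapST K n) := by
  induction k with
  | zero => simp
  | succ k ih =>
      rw [pow_succ', MulAut.mul_apply, MulAut.mul_apply, ← ih]
      show swapST K ((invFst K) _) = invFst K (swapST K _)
      rfl

/-- The involution of `ℤ/2ℤ ⋉ (K^×)³` induced by swapping the last two coordinates. -/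
def swapSTInner : MulAut (XYGroup K) where
  toFun g := ⟨swapST K g.left, g.right⟩
  invFun g := ⟨swapST K g.left, g.right⟩
  left_inv g := rfl
  right_inv g := rfl
  map_mul' a b := by
    apply SemidirectProduct.ext
    · show swapST K (a.left * _) = swapST K a.left * _
      rw [map_mul]
      congr 1
      exact swapST_comm_invFst_pow K _ _
    · rfl

lemma swapSTInner_sq : swapSTInner K * swapSTInner K = 1 :=
  MulEquiv.ext fun g => rfl

/-- `ℤ/2ℤ ⋉ (ℤ/2ℤ ⋉ (K^×)³)`. -/
abbrev XYSTGroup := SemidirectProduct (XYGroup K) (Multiplicative (ZMod 2))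
  (involutionHom (swapSTInner K) (swapSTInner_sq K))

namespace ExtWeylAut

/-! ### Twisted monoid algebras -/

section Twisted

set_option linter.unusedSectionVars false

/-- A nowhere vanishing bimultiplicative function `Γ × Γ → K`. -/
structure Bichar (K Γ : Type*) [Field K] [AddCommMonoid Γ] where
  /-- The underlying function. -/
  val : Γ → Γ → K
  add_left : ∀ u v w, val (u + v) w = val u w * val v w
  add_right : ∀ u v w, val u (v + w) = val u v * val u w
  ne_zero : ∀ u v, val u v ≠ 0

variable {K : Type*} [Field K] {Γ : Type*} [AddCommMonoid Γ] (χ : Bichar K Γ)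

lemma Bichar.zero_left (v : Γ) : χ.val 0 v = 1 := by
  have h := χ.add_left 0 0 v
  rw [add_zero] at h
  exact (mul_eq_left₀ (χ.ne_zero 0 v)).1 h.symm

lemma Bichar.zero_right (v : Γ) : χ.val v 0 = 1 := by
  have h := χ.add_right v 0 0
  rw [add_zero] at h
  exact (mul_eq_left₀ (χ.ne_zero v 0)).1 h.symm

/-- The monoid algebra of `Γ` twisted by the bicharacter `χ`: it has a basis `e u`, `u ∈ Γ`,
with `e u * e v = χ(u, v) • e (u + v)`. -/
def Tw (_χ : Bichar K Γ) : Type _ := Γ →₀ K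

instance : AddCommGroup (Tw χ) := inferInstanceAs (AddCommGroup (Γ →₀ K))
instance : Module K (Tw χ) := inferInstanceAs (Module K (Γ →₀ K))

/-- The bilinear multiplication of `Tw χ`. -/
def Tw.mulLin : (Γ →₀ K) →ₗ[K] (Γ →₀ K) →ₗ[K] (Γ →₀ K) :=
  Finsupp.lsum K fun u => LinearMap.toSpanSingleton K _
    (Finsupp.lsum K fun v => χ.val u v • Finsupp.lsingle (u + v))

lemma Tw.mulLin_single (u v : Γ) (a b : K) :
    Tw.mulLin χ (Finsupp.single u a) (Finsupp.single v b) =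
      Finsupp.single (u + v) (a * (χ.val u v * b)) := by
  simp [Tw.mulLin, -Finsupp.single_mul]

lemma Tw.mulLin_eq_sum (f g : Γ →₀ K) :
    Tw.mulLin χ f g = f.sum fun u a => g.sum fun v b =>
      Finsupp.single (u + v) (a * (χ.val u v * b)) := by
  simp [Tw.mulLin, -Finsupp.single_mul, Finsupp.sum, Finset.smul_sum, LinearMap.sum_apply]

lemma Tw.mulLin_assoc (f g h : Γ →₀ K) :
    Tw.mulLin χ (Tw.mulLin χ f g) h = Tw.mulLin χ f (Tw.mulLin χ g h) := by
  induction f using Finsupp.induction_linear with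
  | zero => simp
  | add f f' h1 h2 => simp [h1, h2]
  | single u a =>
    induction g using Finsupp.induction_linear with
    | zero => simp
    | add f f' h1 h2 => simp [h1, h2]
    | single v b =>
      induction h using Finsupp.induction_linear with
      | zero => simp
      | add f f' h1 h2 => simp [h1, h2]
      | single w c =>
        simp only [Tw.mulLin_single, χ.add_left, χ.add_right, add_assoc]
        congr 1
        ring

lemma Tw.mulLin_one (f : Γ →₀ K) : Tw.mulLin χ f (Finsupp.single 0 1) = f := by
  induction f using Finsupp.induction_linear with
  | zero => simp
  | add f f' h1 h2 => simp [h1, h2]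
  | single u a => simp [Tw.mulLin_single, χ.zero_right]

lemma Tw.one_mulLin (f : Γ →₀ K) : Tw.mulLin χ (Finsupp.single 0 1) f = f := by
  induction f using Finsupp.induction_linear with
  | zero => simp
  | add f f' h1 h2 => simp [h1, h2]
  | single u a => simp [Tw.mulLin_single, χ.zero_left]

instance : Ring (Tw χ) :=
  { (inferInstance : AddCommGroup (Tw χ)) with
    mul := fun f g => Tw.mulLin χ f g
    one := (Finsupp.single 0 1 : Γ →₀ K)
    mul_assoc := Tw.mulLin_assoc χ
    one_mul := Tw.one_mulLin χ
    mul_one := Tw.mulLin_one χ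
    zero_mul := fun f => LinearMap.map_zero₂ (Tw.mulLin χ) f
    mul_zero := fun f => map_zero (Tw.mulLin χ f)
    left_distrib := fun f g h => map_add (Tw.mulLin χ f) g h
    right_distrib := fun f g h => LinearMap.map_add₂ (Tw.mulLin χ) f g h }

lemma Tw.mul_def (f g : Tw χ) : f * g = Tw.mulLin χ f g := rfl

instance : Algebra K (Tw χ) :=
  Algebra.ofModule
    (fun r f g => LinearMap.congr_fun (map_smul (Tw.mulLin χ) r (f : Γ →₀ K)) g)
    (fun r f g => map_smul (Tw.mulLin χ f) r (g : Γ →₀ K))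

/-- The basis vector `e u` of `Tw χ`. -/
def Tw.e (u : Γ) : Tw χ := (Finsupp.single u 1 : Γ →₀ K)

lemma Tw.e_zero : Tw.e χ 0 = 1 := rfl

lemma Tw.e_mul (u v : Γ) : Tw.e χ u * Tw.e χ v = χ.val u v • Tw.e χ (u + v) := by
  rw [Tw.mul_def, Tw.e, Tw.e, Tw.mulLin_single]
  show Finsupp.single _ _ = (χ.val u v • Finsupp.single (u + v) (1 : K) : Γ →₀ K)
  simp

/-- The coefficient of `e u` in an element of `Tw χ`. -/
def Tw.cf (u : Γ) : Tw χ →ₗ[K] K := Finsupp.lapply u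

lemma Tw.ext_cf {f g : Tw χ} (h : ∀ u, Tw.cf χ u f = Tw.cf χ u g) : f = g :=
  Finsupp.ext h

lemma Tw.cf_e [DecidableEq Γ] (u v : Γ) : Tw.cf χ u (Tw.e χ v) = if v = u then 1 else 0 := by
  show (Finsupp.single v (1 : K) : Γ →₀ K) u = _
  rw [Finsupp.single_apply]

lemma Tw.cf_e_self (u : Γ) : Tw.cf χ u (Tw.e χ u) = 1 := by
  classical
  simp [Tw.cf_e]

lemma Tw.span_e : Submodule.span K (Set.range (Tw.e χ)) = ⊤ := by
  rw [eq_top_iff]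
  intro f _
  induction (f : Γ →₀ K) using Finsupp.induction_linear with
  | zero => exact Submodule.zero_mem _
  | add f g hf hg => exact Submodule.add_mem _ (hf trivial) (hg trivial)
  | single u a =>
    have : (Finsupp.single u a : Γ →₀ K) = a • (Tw.e χ u : Γ →₀ K) := by
      show _ = a • (Finsupp.single u 1 : Γ →₀ K)
      simp
    rw [this]
    exact Submodule.smul_mem _ _ (Submodule.subset_span ⟨u, rfl⟩)

lemma Tw.cf_mul (f g : Tw χ) (w : Γ) [DecidableEq Γ] :
    Tw.cf χ w (f * g) = ∑ u ∈ (f : Γ →₀ K).support, ∑ v ∈ (g : Γ →₀ K).support,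
      if u + v = w then Tw.cf χ u f * (χ.val u v * Tw.cf χ v g) else 0 := by
  have key : ∀ f g : Γ →₀ K, (Tw.mulLin χ f g) w = ∑ u ∈ f.support, ∑ v ∈ g.support,
      if u + v = w then f u * (χ.val u v * g v) else 0 := fun f g => by
    rw [Tw.mulLin_eq_sum]
    simp only [Finsupp.sum, Finsupp.finsetSum_apply, Finsupp.single_apply]
  exact key f g

lemma Tw.mem_support {f : Tw χ} {u : Γ} : u ∈ (f : Γ →₀ K).support ↔ Tw.cf χ u f ≠ 0 :=
  Finsupp.mem_support_iff

/-- A product coefficient that receives a contribution from a single pair of monomials. -/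
lemma Tw.cf_mul_unique (f g : Tw χ) (u v : Γ)
    (h : ∀ u' v', Tw.cf χ u' f ≠ 0 → Tw.cf χ v' g ≠ 0 → u' + v' = u + v → u' = u ∧ v' = v) :
    Tw.cf χ (u + v) (f * g) = Tw.cf χ u f * (χ.val u v * Tw.cf χ v g) := by
  classical
  rw [Tw.cf_mul]
  rw [Finset.sum_eq_single u, Finset.sum_eq_single v]
  · simp
  · intro v' hv' hne
    by_cases hu : Tw.cf χ u f = 0
    · simp [hu]
    · exact if_neg fun he => hne (h u v' hu ((Tw.mem_support χ).1 hv') he).2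
  · intro hv
    have : Tw.cf χ v g = 0 := by
      by_contra h0
      exact hv ((Tw.mem_support χ).2 h0)
    simp [this]
  · intro u' hu' hne
    refine Finset.sum_eq_zero fun v' hv' => if_neg fun he => hne ?_
    exact (h u' v' ((Tw.mem_support χ).1 hu') ((Tw.mem_support χ).1 hv') he).1
  · intro hu
    have : Tw.cf χ u f = 0 := by
      by_contra h0
      exact hu ((Tw.mem_support χ).2 h0)
    simp [this]

lemma Tw.exists_of_cf_mul_ne_zero {f g : Tw χ} {w : Γ} (h : Tw.cf χ w (f * g) ≠ 0) :
    ∃ u v, Tw.cf χ u f ≠ 0 ∧ Tw.cf χ v g ≠ 0 ∧ u + v = w := by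
  classical
  rw [Tw.cf_mul] at h
  obtain ⟨u, hu, h⟩ := Finset.exists_ne_zero_of_sum_ne_zero h
  obtain ⟨v, hv, h⟩ := Finset.exists_ne_zero_of_sum_ne_zero h
  refine ⟨u, v, (Tw.mem_support χ).1 hu, (Tw.mem_support χ).1 hv, ?_⟩
  by_contra h0
  exact h (if_neg h0)

variable {Λ : Type*} [AddCommMonoid Λ] [LinearOrder Λ] [IsOrderedCancelAddMonoid Λ] (L : Γ →+ Λ)

/-- `u` is the largest exponent of `f`, in the order pulled back along `L : Γ →+ Λ`. -/
def Tw.IsHi (f : Tw χ) (u : Γ) : Prop := Tw.cf χ u f ≠ 0 ∧ ∀ v, Tw.cf χ v f ≠ 0 → L v ≤ L u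

/-- `u` is the smallest exponent of `f`, in the order pulled back along `L : Γ →+ Λ`. -/
def Tw.IsLo (f : Tw χ) (u : Γ) : Prop := Tw.cf χ u f ≠ 0 ∧ ∀ v, Tw.cf χ v f ≠ 0 → L u ≤ L v

variable {χ L}

lemma Tw.exists_cf_ne_zero {f : Tw χ} (hf : f ≠ 0) : ∃ u, Tw.cf χ u f ≠ 0 := by
  by_contra! h
  exact hf (Tw.ext_cf χ fun u => by rw [h u, map_zero])

lemma Tw.exists_hi {f : Tw χ} (hf : f ≠ 0) : ∃ u, Tw.IsHi χ L f u := by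
  obtain ⟨u, hu⟩ := Tw.exists_cf_ne_zero hf
  obtain ⟨v, hv, h⟩ := Finset.exists_max_image (f : Γ →₀ K).support L
    ⟨u, (Tw.mem_support χ).2 hu⟩
  exact ⟨v, (Tw.mem_support χ).1 hv, fun w hw => h w ((Tw.mem_support χ).2 hw)⟩

lemma Tw.exists_lo {f : Tw χ} (hf : f ≠ 0) : ∃ u, Tw.IsLo χ L f u := by
  obtain ⟨u, hu⟩ := Tw.exists_cf_ne_zero hf
  obtain ⟨v, hv, h⟩ := Finset.exists_min_image (f : Γ →₀ K).support L
    ⟨u, (Tw.mem_support χ).2 hu⟩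
  exact ⟨v, (Tw.mem_support χ).1 hv, fun w hw => h w ((Tw.mem_support χ).2 hw)⟩

lemma Tw.IsHi.unique (hL : Function.Injective L) {f : Tw χ} {u v : Γ} (hu : Tw.IsHi χ L f u)
    (hv : Tw.IsHi χ L f v) : u = v :=
  hL (le_antisymm (hv.2 u hu.1) (hu.2 v hv.1))

lemma Tw.IsLo.unique (hL : Function.Injective L) {f : Tw χ} {u v : Γ} (hu : Tw.IsLo χ L f u)
    (hv : Tw.IsLo χ L f v) : u = v :=
  hL (le_antisymm (hu.2 v hv.1) (hv.2 u hu.1))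

lemma Tw.IsHi.mul (hL : Function.Injective L) {f g : Tw χ} {u v : Γ} (hu : Tw.IsHi χ L f u)
    (hv : Tw.IsHi χ L g v) : Tw.IsHi χ L (f * g) (u + v) := by
  constructor
  · rw [Tw.cf_mul_unique]
    · exact mul_ne_zero hu.1 (mul_ne_zero (χ.ne_zero _ _) hv.1)
    · intro u' v' hu' hv' he
      have he' := congrArg L he
      rw [map_add, map_add] at he'
      obtain ⟨h1, h2⟩ := (add_eq_add_iff_eq_and_eq (hu.2 u' hu') (hv.2 v' hv')).1 he'
      exact ⟨hL h1, hL h2⟩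
  · intro w hw
    obtain ⟨u', v', hu', hv', rfl⟩ := Tw.exists_of_cf_mul_ne_zero χ hw
    rw [map_add, map_add]
    exact add_le_add (hu.2 u' hu') (hv.2 v' hv')

lemma Tw.IsLo.mul (hL : Function.Injective L) {f g : Tw χ} {u v : Γ} (hu : Tw.IsLo χ L f u)
    (hv : Tw.IsLo χ L g v) : Tw.IsLo χ L (f * g) (u + v) := by
  constructor
  · rw [Tw.cf_mul_unique]
    · exact mul_ne_zero hu.1 (mul_ne_zero (χ.ne_zero _ _) hv.1)
    · intro u' v' hu' hv' he
      have he' := congrArg L he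
      rw [map_add, map_add] at he'
      obtain ⟨h1, h2⟩ := (add_eq_add_iff_eq_and_eq (hu.2 u' hu') (hv.2 v' hv')).1 he'.symm
      exact ⟨hL h1.symm, hL h2.symm⟩
  · intro w hw
    obtain ⟨u', v', hu', hv', rfl⟩ := Tw.exists_of_cf_mul_ne_zero χ hw
    rw [map_add, map_add]
    exact add_le_add (hu.2 u' hu') (hv.2 v' hv')

/-- An element whose largest and smallest exponents agree is a scaled monomial. -/
lemma Tw.eq_smul_e (hL : Function.Injective L) {f : Tw χ} {u : Γ} (hu : Tw.IsHi χ L f u)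
    (hl : Tw.IsLo χ L f u) : f = Tw.cf χ u f • Tw.e χ u := by
  classical
  refine Tw.ext_cf χ fun v => ?_
  rw [map_smul, Tw.cf_e]
  by_cases h : u = v
  · subst h; simp
  · rw [if_neg h, smul_zero]
    by_contra h0
    exact h (hL (le_antisymm (hl.2 v h0) (hu.2 v h0)))

lemma Tw.isHi_smul_e (u : Γ) {a : K} (ha : a ≠ 0) : Tw.IsHi χ L (a • Tw.e χ u) u := by
  classical
  refine ⟨by simpa [Tw.cf_e] using ha, fun v hv => ?_⟩
  rw [map_smul, Tw.cf_e] at hv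
  by_cases h : u = v
  · rw [h]
  · simp [h] at hv

lemma Tw.isLo_smul_e (u : Γ) {a : K} (ha : a ≠ 0) : Tw.IsLo χ L (a • Tw.e χ u) u := by
  classical
  refine ⟨by simpa [Tw.cf_e] using ha, fun v hv => ?_⟩
  rw [map_smul, Tw.cf_e] at hv
  by_cases h : u = v
  · rw [h]
  · simp [h] at hv

lemma Tw.isHi_e (u : Γ) : Tw.IsHi χ L (Tw.e χ u) u := by
  simpa using Tw.isHi_smul_e (χ := χ) (L := L) u one_ne_zero

lemma Tw.isLo_e (u : Γ) : Tw.IsLo χ L (Tw.e χ u) u := by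
  simpa using Tw.isLo_smul_e (χ := χ) (L := L) u one_ne_zero

lemma Tw.mul_ne_zero' (hL : Function.Injective L) {f g : Tw χ} (hf : f ≠ 0) (hg : g ≠ 0) :
    f * g ≠ 0 := by
  obtain ⟨u, hu⟩ := Tw.exists_hi (L := L) hf
  obtain ⟨v, hv⟩ := Tw.exists_hi (L := L) hg
  intro h
  have := (hu.mul hL hv).1
  rw [h] at this
  exact this (map_zero _)

/-- If `N * e v = W * N` then `W` has the same largest and smallest exponent as `e v`, hence is
a multiple of `e v`, and every monomial of `N` has the same commutation factor with `e v`. -/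
lemma Tw.normal_rel (hL : Function.Injective L) [IsCancelAdd Γ] {N W : Tw χ} (hN : N ≠ 0) (v : Γ)
    (h : N * Tw.e χ v = W * N) :
    ∃ c : K, c ≠ 0 ∧ W = c • Tw.e χ v ∧
      ∀ u, Tw.cf χ u N ≠ 0 → χ.val u v = c * χ.val v u := by
  have hv0 : Tw.e χ v ≠ 0 := fun h0 => by
    have := Tw.cf_e_self χ v
    rw [h0, map_zero] at this
    exact zero_ne_one this
  have hW : W ≠ 0 := by
    rintro rfl
    rw [zero_mul] at h
    exact Tw.mul_ne_zero' hL hN hv0 h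
  obtain ⟨a, ha⟩ := Tw.exists_hi (L := L) hN
  obtain ⟨b, hb⟩ := Tw.exists_hi (L := L) hW
  obtain ⟨a', ha'⟩ := Tw.exists_lo (L := L) hN
  obtain ⟨b', hb'⟩ := Tw.exists_lo (L := L) hW
  have h1 := ha.mul hL (Tw.isHi_e v)
  have h2 := ha'.mul hL (Tw.isLo_e v)
  rw [h] at h1 h2
  have e1 : v = b := add_left_cancel ((h1.unique hL (hb.mul hL ha)).trans (add_comm b a))
  have e2 : v = b' := add_left_cancel ((h2.unique hL (hb'.mul hL ha')).trans (add_comm b' a'))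
  subst e1
  subst e2
  have hWe := Tw.eq_smul_e hL hb hb'
  refine ⟨_, hb.1, hWe, fun u hu => ?_⟩
  classical
  have hc : ∀ w, Tw.cf χ w (Tw.e χ v) ≠ 0 → w = v := fun w hw => by
    rw [Tw.cf_e] at hw
    by_contra h0
    exact hw (if_neg (Ne.symm h0))
  have h3 : Tw.cf χ (u + v) (N * Tw.e χ v) = _ := Tw.cf_mul_unique χ N (Tw.e χ v) u v (by
    intro u' v' _ hv' he
    obtain rfl := hc v' hv'
    exact ⟨add_right_cancel he, rfl⟩)
  have h4 : Tw.cf χ (v + u) (Tw.e χ v * N) = _ := Tw.cf_mul_unique χ (Tw.e χ v) N v u (by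
    intro u' v' hu' _ he
    obtain rfl := hc u' hu'
    exact ⟨rfl, add_left_cancel he⟩)
  rw [h, hWe, smul_mul_assoc, map_smul, add_comm u v, h4, Tw.cf_e_self, smul_eq_mul] at h3
  apply mul_left_cancel₀ hu
  linear_combination -h3

end Twisted

section Main

set_option linter.unusedSectionVars false

variable {K p q}

local notation "𝐱" => wx K p q
local notation "𝐲" => wy K p q
local notation "𝐬" => ws K p q
local notation "𝐭" => wt K p q
local notation "𝐳" => wz K p q

/-! ### Generators and relations -/

/-- The defining relations of `A_p(1, 1, K_q[s,t])` for a quadruple of elements. -/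
structure IsRel {A : Type*} [Ring A] [Algebra K A] (p q : K) (a b c d : A) : Prop where
  ab : a * b - p • (b * a) = 1
  cd : c * d = q • (d * c)
  ca : c * a = a * c
  cb : c * b = b * c
  da : d * a = a * d
  db : d * b = b * d

lemma isRel_gens : IsRel p q 𝐱 𝐲 𝐬 𝐭 where
  ab := by simpa [wx, wy] using RingQuot.mkAlgHom_rel K (ExtWeylRel.weyl (K := K) (p := p) (q := q)
    (lam := 1) (mu := 1))
  cd := by simpa [ws, wt] using RingQuot.mkAlgHom_rel K (ExtWeylRel.st (K := K) (p := p) (q := q)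
    (lam := 1) (mu := 1))
  ca := by simpa [ws, wx] using RingQuot.mkAlgHom_rel K (ExtWeylRel.sx (K := K) (p := p) (q := q)
    (lam := 1) (mu := 1))
  cb := by simpa [ws, wy] using RingQuot.mkAlgHom_rel K (ExtWeylRel.sy (K := K) (p := p) (q := q)
    (lam := 1) (mu := 1))
  da := by simpa [wt, wx] using RingQuot.mkAlgHom_rel K (ExtWeylRel.tx (K := K) (p := p) (q := q)
    (lam := 1) (mu := 1))
  db := by simpa [wt, wy] using RingQuot.mkAlgHom_rel K (ExtWeylRel.ty (K := K) (p := p) (q := q)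
    (lam := 1) (mu := 1))

/-- The universal property of `A_p(1, 1, K_q[s,t])`. -/
def lft {A : Type*} [Ring A] [Algebra K A] {a b c d : A} (h : IsRel p q a b c d) :
    ExtWeyl K p q 1 1 →ₐ[K] A :=
  RingQuot.liftAlgHom K ⟨FreeAlgebra.lift K ![a, b, c, d], by
    intro u v huv
    cases huv with
    | weyl => simpa using h.ab
    | st => simpa using h.cd
    | sx => simpa using h.ca
    | sy => simpa using h.cb
    | tx => simpa using h.da
    | ty => simpa using h.db⟩

section lft
variable {A : Type*} [Ring A] [Algebra K A] {a b c d : A} (h : IsRel p q a b c d)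

@[simp] lemma lft_x : lft h 𝐱 = a := by
  rw [wx, lft, RingQuot.liftAlgHom_mkAlgHom_apply]; simp
@[simp] lemma lft_y : lft h 𝐲 = b := by
  rw [wy, lft, RingQuot.liftAlgHom_mkAlgHom_apply]; simp
@[simp] lemma lft_s : lft h 𝐬 = c := by
  rw [ws, lft, RingQuot.liftAlgHom_mkAlgHom_apply]; simp
@[simp] lemma lft_t : lft h 𝐭 = d := by
  rw [wt, lft, RingQuot.liftAlgHom_mkAlgHom_apply]; simp

end lft

lemma gen_induction (S : Subalgebra K (ExtWeyl K p q 1 1)) (hx : 𝐱 ∈ S) (hy : 𝐲 ∈ S)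
    (hs : 𝐬 ∈ S) (ht : 𝐭 ∈ S) (b : ExtWeyl K p q 1 1) : b ∈ S := by
  obtain ⟨a, rfl⟩ := RingQuot.mkAlgHom_surjective K _ b
  induction a using FreeAlgebra.induction with
  | grade0 r => rw [AlgHom.commutes]; exact S.algebraMap_mem r
  | grade1 i =>
    fin_cases i
    · exact hx
    · exact hy
    · exact hs
    · exact ht
  | mul a b ha hb => rw [map_mul]; exact S.mul_mem ha hb
  | add a b ha hb => rw [map_add]; exact S.add_mem ha hb

lemma ext_gens {A : Type*} [Ring A] [Algebra K A] {f g : ExtWeyl K p q 1 1 →ₐ[K] A}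
    (hx : f 𝐱 = g 𝐱) (hy : f 𝐲 = g 𝐲) (hs : f 𝐬 = g 𝐬) (ht : f 𝐭 = g 𝐭) : f = g :=
  AlgHom.ext fun b => gen_induction (AlgHom.equalizer f g) hx hy hs ht b

lemma rel_xy : 𝐱 * 𝐲 = p • (𝐲 * 𝐱) + 1 := by
  rw [← isRel_gens.ab]; abel

lemma z_eq : 𝐳 = (p - 1) • (𝐲 * 𝐱) + 1 := by
  rw [wz, rel_xy]; module

lemma z_eq' : p • 𝐳 = (p - 1) • (𝐱 * 𝐲) + 1 := by
  rw [z_eq, rel_xy]; module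

lemma xz : 𝐱 * 𝐳 = p • (𝐳 * 𝐱) := by
  rw [← smul_mul_assoc, z_eq', z_eq]
  simp only [mul_add, add_mul, mul_smul_comm, smul_mul_assoc, mul_assoc, mul_one, one_mul]

lemma zy : 𝐳 * 𝐲 = p • (𝐲 * 𝐳) := by
  rw [← mul_smul_comm, z_eq', z_eq]
  simp only [mul_add, add_mul, mul_smul_comm, smul_mul_assoc, mul_assoc, mul_one, one_mul]

lemma sz : Commute 𝐬 𝐳 :=
  Commute.sub_right (Commute.mul_right isRel_gens.ca isRel_gens.cb)
    (Commute.mul_right isRel_gens.cb isRel_gens.ca)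

lemma tz : Commute 𝐭 𝐳 :=
  Commute.sub_right (Commute.mul_right isRel_gens.da isRel_gens.db)
    (Commute.mul_right isRel_gens.db isRel_gens.da)

variable [hp : NeZero p] [hq : NeZero q] [hp1 : Fact (p ≠ 1)] [hq1 : Fact (q ≠ 1)]

lemma yz : 𝐲 * 𝐳 = p⁻¹ • (𝐳 * 𝐲) := by
  rw [zy, smul_smul, inv_mul_cancel₀ hp.out, one_smul]

lemma p_sub_ne : p - 1 ≠ 0 := sub_ne_zero.2 hp1.out

lemma yx_eq : 𝐲 * 𝐱 = (p - 1)⁻¹ • (𝐳 - 1) := by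
  rw [z_eq, add_sub_cancel_right, smul_smul, inv_mul_cancel₀ p_sub_ne, one_smul]

lemma xy_eq : 𝐱 * 𝐲 = (p - 1)⁻¹ • (p • 𝐳 - 1) := by
  rw [z_eq', add_sub_cancel_right, smul_smul, inv_mul_cancel₀ p_sub_ne, one_smul]

/-! ### The embedding into a quantum torus -/

/-- Exponents `(n, i, j, k)` of the monomials `z^i x^n s^j t^k`, with `n ∈ ℤ`. -/
abbrev Ex : Type := ℤ × ℕ × ℕ × ℕ

variable (p q) in
/-- The bicharacter describing the multiplication of the monomials `z^i x^n s^j t^k` when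
`x z = p z x`, `s t = q t s`, and all other pairs commute. -/
def chi : Bichar K Ex where
  val u v := p ^ (u.1 * (v.2.1 : ℤ)) * q⁻¹ ^ (u.2.2.2 * v.2.2.1)
  add_left u v w := by
    simp only [Prod.fst_add, Prod.snd_add, add_mul, zpow_add₀ hp.out, pow_add]
    ring
  add_right u v w := by
    simp only [Prod.fst_add, Prod.snd_add, Nat.cast_add, mul_add, zpow_add₀ hp.out, pow_add]
    ring
  ne_zero u v := mul_ne_zero (zpow_ne_zero _ hp.out) (pow_ne_zero _ (inv_ne_zero hq.out))

lemma chi_val (u v : Ex) :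
    (chi p q).val u v = p ^ (u.1 * (v.2.1 : ℤ)) * q⁻¹ ^ (u.2.2.2 * v.2.2.1) := rfl

/-- The lexicographic order on exponents. -/
def lexHom : Ex →+ ℤ ×ₗ ℕ ×ₗ ℕ ×ₗ ℕ where
  toFun u := toLex (u.1, toLex (u.2.1, toLex (u.2.2.1, u.2.2.2)))
  map_zero' := rfl
  map_add' _ _ := rfl

lemma lexHom_injective : Function.Injective lexHom := by
  rintro ⟨a, b, c, d⟩ ⟨a', b', c', d'⟩ h
  exact h

lemma fst_le_of_lexHom_le {u v : Ex} (h : lexHom u ≤ lexHom v) : u.1 ≤ v.1 := by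
  rcases Prod.Lex.toLex_le_toLex.1 h with h | h
  · exact h.le
  · exact h.1.le

local notation "𝐞" => Tw.e (chi p q)
local notation "𝐜" => Tw.cf (chi p q)

lemma isRel_emb : IsRel p q (𝐞 (1, 0, 0, 0))
    ((p - 1)⁻¹ • (𝐞 (-1, 1, 0, 0) - 𝐞 (-1, 0, 0, 0))) (𝐞 (0, 0, 1, 0)) (𝐞 (0, 0, 0, 1)) where
  ab := by
    have h := p_sub_ne (p := p)
    simp only [mul_smul_comm, smul_mul_assoc, mul_sub, sub_mul, Tw.e_mul, chi_val]
    simp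
    rw [← Tw.e_zero]
    have e0 : (0 : Ex) = (0, 0, 0, 0) := rfl
    rw [e0]
    match_scalars
    · ring
    · field_simp
      ring
  cd := by
    simp only [Tw.e_mul, chi_val]
    simp [hq.out]
  ca := by simp only [Tw.e_mul, chi_val]; simp
  cb := by simp only [mul_smul_comm, smul_mul_assoc, mul_sub, sub_mul, Tw.e_mul, chi_val]; simp
  da := by simp only [Tw.e_mul, chi_val]; simp
  db := by simp only [mul_smul_comm, smul_mul_assoc, mul_sub, sub_mul, Tw.e_mul, chi_val]; simp

variable (p q) in
/-- The homomorphism to the quantum torus, with `y ↦ (p - 1)⁻¹ (z - 1) x⁻¹`. -/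
def emb : ExtWeyl K p q 1 1 →ₐ[K] Tw (chi p q) := lft isRel_emb

lemma emb_x : emb p q 𝐱 = 𝐞 (1, 0, 0, 0) := lft_x _
lemma emb_y : emb p q 𝐲 = (p - 1)⁻¹ • (𝐞 (-1, 1, 0, 0) - 𝐞 (-1, 0, 0, 0)) := lft_y _
lemma emb_s : emb p q 𝐬 = 𝐞 (0, 0, 1, 0) := lft_s _
lemma emb_t : emb p q 𝐭 = 𝐞 (0, 0, 0, 1) := lft_t _

lemma emb_z : emb p q 𝐳 = 𝐞 (0, 1, 0, 0) := by
  rw [z_eq, map_add, map_smul, map_mul, emb_x, emb_y, map_one, ← Tw.e_zero, smul_mul_assoc,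
    smul_smul, mul_inv_cancel₀ p_sub_ne, one_smul, sub_mul, Tw.e_mul, Tw.e_mul, chi_val, chi_val]
  have e0 : (0 : Ex) = (0, 0, 0, 0) := rfl
  simp [e0]

lemma emb_x_pow (n : ℕ) : emb p q (𝐱 ^ n) = 𝐞 ((n : ℤ), 0, 0, 0) := by
  induction n with
  | zero => simp; rfl
  | succ n ih =>
    rw [pow_succ, map_mul, ih, emb_x, Tw.e_mul, chi_val]
    simp

/-! ### A spanning set of monomials, and injectivity of the embedding -/

variable (K p q) in
/-- `x^n` for `n ≥ 0` and `y^(-n)` for `n ≤ 0`. -/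
def pw (n : ℤ) : ExtWeyl K p q 1 1 := 𝐱 ^ n.toNat * 𝐲 ^ (-n).toNat

lemma x_pw (n : ℤ) : ∃ a b : K,
    𝐱 * pw K p q n = a • pw K p q (n + 1) + b • (𝐳 * pw K p q (n + 1)) := by
  rcases lt_or_ge n 0 with h | h
  · obtain ⟨m, rfl⟩ : ∃ m : ℕ, n = -(m + 1 : ℤ) := ⟨(-n - 1).toNat, by omega⟩
    refine ⟨-(p - 1)⁻¹, (p - 1)⁻¹ * p, ?_⟩
    have h1 : (-(m + 1 : ℤ)).toNat = 0 := by omega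
    have h2 : (- -(m + 1 : ℤ)).toNat = m + 1 := by omega
    have h3 : (-(m + 1 : ℤ) + 1).toNat = 0 := by omega
    have h4 : (-(-(m + 1 : ℤ) + 1)).toNat = m := by omega
    simp only [pw, h1, h2, h3, h4, pow_zero, one_mul]
    rw [pow_succ', ← mul_assoc, xy_eq]
    simp only [smul_mul_assoc, sub_mul, one_mul]
    module
  · obtain ⟨m, rfl⟩ := Int.eq_ofNat_of_zero_le h
    refine ⟨1, 0, ?_⟩
    have h1 : ((m : ℤ) + 1).toNat = m + 1 := by omega
    have h2 : (-(m : ℤ)).toNat = 0 := by omega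
    have h3 : (-((m : ℤ) + 1)).toNat = 0 := by omega
    simp only [pw, h1, h2, h3, Int.toNat_natCast, pow_zero, mul_one, one_smul, zero_smul, add_zero,
      pow_succ']

lemma y_pw (n : ℤ) : ∃ a b : K,
    𝐲 * pw K p q n = a • pw K p q (n - 1) + b • (𝐳 * pw K p q (n - 1)) := by
  rcases lt_or_ge 0 n with h | h
  · obtain ⟨m, rfl⟩ : ∃ m : ℕ, n = (m + 1 : ℤ) := ⟨(n - 1).toNat, by omega⟩
    refine ⟨-(p - 1)⁻¹, (p - 1)⁻¹, ?_⟩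
    have h1 : ((m + 1 : ℤ)).toNat = m + 1 := by omega
    have h2 : (-(m + 1 : ℤ)).toNat = 0 := by omega
    have h3 : ((m + 1 : ℤ) - 1).toNat = m := by omega
    have h4 : (-((m + 1 : ℤ) - 1)).toNat = 0 := by omega
    simp only [pw, h1, h2, h3, h4, pow_zero, mul_one]
    rw [pow_succ', ← mul_assoc, yx_eq]
    simp only [smul_mul_assoc, sub_mul, one_mul]
    module
  · obtain ⟨m, rfl⟩ : ∃ m : ℕ, n = -(m : ℤ) := ⟨(-n).toNat, by omega⟩
    refine ⟨1, 0, ?_⟩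
    have h1 : (-(m : ℤ)).toNat = 0 := by omega
    have h2 : (-(m : ℤ) - 1).toNat = 0 := by omega
    have h3 : (-(-(m : ℤ) - 1)).toNat = m + 1 := by omega
    simp only [pw, h1, h2, h3, neg_neg (m : ℤ), Int.toNat_natCast, pow_zero, one_mul, one_smul, zero_smul,
      add_zero, pow_succ']

variable (K p q) in
/-- The monomials `z^i x^n s^j t^k` (`n ≥ 0`) and `z^i y^(-n) s^j t^k` (`n < 0`). -/
def mm (u : Ex) : ExtWeyl K p q 1 1 :=
  𝐳 ^ u.2.1 * pw K p q u.1 * 𝐬 ^ u.2.2.1 * 𝐭 ^ u.2.2.2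

lemma x_zpow (i : ℕ) : 𝐱 * 𝐳 ^ i = p ^ i • (𝐳 ^ i * 𝐱) := by
  induction i with
  | zero => simp
  | succ i ih =>
    rw [pow_succ, ← mul_assoc, ih, smul_mul_assoc, mul_assoc, xz, mul_smul_comm, smul_smul,
      ← mul_assoc, ← pow_succ, ← pow_succ]

lemma y_zpow (i : ℕ) : 𝐲 * 𝐳 ^ i = p⁻¹ ^ i • (𝐳 ^ i * 𝐲) := by
  induction i with
  | zero => simp
  | succ i ih =>
    rw [pow_succ, ← mul_assoc, ih, smul_mul_assoc, mul_assoc, yz, mul_smul_comm, smul_smul,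
      ← mul_assoc, ← pow_succ, ← pow_succ]

lemma ts : 𝐭 * 𝐬 = q⁻¹ • (𝐬 * 𝐭) := by
  rw [isRel_gens.cd, smul_smul, inv_mul_cancel₀ hq.out, one_smul]

lemma t_spow (j : ℕ) : 𝐭 * 𝐬 ^ j = q⁻¹ ^ j • (𝐬 ^ j * 𝐭) := by
  induction j with
  | zero => simp
  | succ i ih =>
    rw [pow_succ, ← mul_assoc, ih, smul_mul_assoc, mul_assoc, ts, mul_smul_comm, smul_smul,
      ← mul_assoc, ← pow_succ, ← pow_succ]

lemma s_zpw (i : ℕ) (n : ℤ) : Commute 𝐬 (𝐳 ^ i * pw K p q n) :=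
  Commute.mul_right (sz.pow_right i)
    (Commute.mul_right (Commute.pow_right isRel_gens.ca _) (Commute.pow_right isRel_gens.cb _))

lemma t_zpw (i : ℕ) (n : ℤ) : Commute 𝐭 (𝐳 ^ i * pw K p q n) :=
  Commute.mul_right (tz.pow_right i)
    (Commute.mul_right (Commute.pow_right isRel_gens.da _) (Commute.pow_right isRel_gens.db _))

lemma z_mm (n : ℤ) (i j k : ℕ) : 𝐳 * mm K p q (n, i, j, k) = mm K p q (n, i + 1, j, k) := by
  simp only [mm, pow_succ', mul_assoc]

lemma s_mm (n : ℤ) (i j k : ℕ) : 𝐬 * mm K p q (n, i, j, k) = mm K p q (n, i, j + 1, k) := by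
  simp only [mm]
  rw [← mul_assoc, ← mul_assoc, (s_zpw i n).eq, pow_succ', ← mul_assoc]

lemma t_mm (n : ℤ) (i j k : ℕ) :
    𝐭 * mm K p q (n, i, j, k) = q⁻¹ ^ j • mm K p q (n, i, j, k + 1) := by
  simp only [mm]
  rw [← mul_assoc, ← mul_assoc, (t_zpw i n).eq, mul_assoc _ 𝐭, t_spow, mul_smul_comm,
    smul_mul_assoc, pow_succ', ← mul_assoc, ← mul_assoc]

lemma x_mm (n : ℤ) (i j k : ℕ) : ∃ a b : K, 𝐱 * mm K p q (n, i, j, k) =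
    a • mm K p q (n + 1, i, j, k) + b • mm K p q (n + 1, i + 1, j, k) := by
  obtain ⟨a, b, h⟩ := x_pw (K := K) (p := p) (q := q) n
  refine ⟨p ^ i * a, p ^ i * b, ?_⟩
  simp only [mm]
  rw [← mul_assoc, ← mul_assoc, ← mul_assoc, x_zpow, smul_mul_assoc, mul_assoc _ 𝐱, h, pow_succ]
  simp only [mul_add, add_mul, smul_mul_assoc, mul_smul_comm, mul_assoc, smul_add, smul_smul]

lemma y_mm (n : ℤ) (i j k : ℕ) : ∃ a b : K, 𝐲 * mm K p q (n, i, j, k) =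
    a • mm K p q (n - 1, i, j, k) + b • mm K p q (n - 1, i + 1, j, k) := by
  obtain ⟨a, b, h⟩ := y_pw (K := K) (p := p) (q := q) n
  refine ⟨p⁻¹ ^ i * a, p⁻¹ ^ i * b, ?_⟩
  simp only [mm]
  rw [← mul_assoc, ← mul_assoc, ← mul_assoc, y_zpow, smul_mul_assoc, mul_assoc _ 𝐲, h, pow_succ]
  simp only [mul_add, add_mul, smul_mul_assoc, mul_smul_comm, mul_assoc, smul_add, smul_smul]

lemma mem_span_mm (b : ExtWeyl K p q 1 1) : b ∈ Submodule.span K (Set.range (mm K p q)) := by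
  set M := Submodule.span K (Set.range (mm K p q)) with hM
  have hmm : ∀ u, mm K p q u ∈ M := fun u => Submodule.subset_span ⟨u, rfl⟩
  let S : Subalgebra K (ExtWeyl K p q 1 1) :=
    { carrier := {b | ∀ m ∈ M, b * m ∈ M}
      mul_mem' := fun {a b} ha hb m hm => by
        rw [mul_assoc]
        exact ha _ (hb _ hm)
      add_mem' := fun {a b} ha hb m hm => by
        rw [add_mul]
        exact M.add_mem (ha _ hm) (hb _ hm)
      algebraMap_mem' := fun r m hm => by
        rw [← Algebra.smul_def]
        exact M.smul_mem r hm }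
  have key : ∀ a : ExtWeyl K p q 1 1, (∀ u, a * mm K p q u ∈ M) → a ∈ S := fun a ha m hm => by
    have : M ≤ M.comap (LinearMap.mulLeft K a) := by
      rw [hM, Submodule.span_le]
      rintro _ ⟨u, rfl⟩
      exact ha u
    exact this hm
  have h1 : b ∈ S := by
    apply gen_induction S
    · refine key _ fun ⟨n, i, j, k⟩ => ?_
      obtain ⟨a, b, h⟩ := x_mm (K := K) (p := p) (q := q) n i j k
      rw [h]
      exact M.add_mem (M.smul_mem _ (hmm _)) (M.smul_mem _ (hmm _))
    · refine key _ fun ⟨n, i, j, k⟩ => ?_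
      obtain ⟨a, b, h⟩ := y_mm (K := K) (p := p) (q := q) n i j k
      rw [h]
      exact M.add_mem (M.smul_mem _ (hmm _)) (M.smul_mem _ (hmm _))
    · refine key _ fun ⟨n, i, j, k⟩ => ?_
      rw [s_mm]
      exact hmm _
    · refine key _ fun ⟨n, i, j, k⟩ => ?_
      rw [t_mm]
      exact M.smul_mem _ (hmm _)
  have h2 : (1 : ExtWeyl K p q 1 1) = mm K p q 0 := by simp [mm, pw]
  have h3 : b * 1 ∈ M := h1 1 (h2 ▸ hmm 0)
  rwa [mul_one] at h3

/-- `f` has a nonzero coefficient at `u`, and its other monomials differ from `u` only by a larger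
exponent of `z`. -/
def ZLead (u : Ex) (f : Tw (chi p q)) : Prop :=
  𝐜 u f ≠ 0 ∧ ∀ v, 𝐜 v f ≠ 0 → v.1 = u.1 ∧ u.2.1 ≤ v.2.1 ∧ v.2.2 = u.2.2

lemma ZLead.mul {u v : Ex} {f g : Tw (chi p q)} (hu : ZLead u f) (hv : ZLead v g) :
    ZLead (u + v) (f * g) := by
  constructor
  · rw [Tw.cf_mul_unique]
    · exact mul_ne_zero hu.1 (mul_ne_zero ((chi p q).ne_zero _ _) hv.1)
    · intro u' v' hu' hv' he
      obtain ⟨a1, a2, a3⟩ := hu.2 u' hu'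
      obtain ⟨b1, b2, b3⟩ := hv.2 v' hv'
      have he' : u'.2.1 + v'.2.1 = u.2.1 + v.2.1 := congrArg (fun w : Ex => w.2.1) he
      exact ⟨Prod.ext a1 (Prod.ext (by omega) a3), Prod.ext b1 (Prod.ext (by omega) b3)⟩
  · intro w hw
    obtain ⟨u', v', hu', hv', rfl⟩ := Tw.exists_of_cf_mul_ne_zero _ hw
    obtain ⟨a1, a2, a3⟩ := hu.2 u' hu'
    obtain ⟨b1, b2, b3⟩ := hv.2 v' hv'
    refine ⟨congrArg₂ (· + ·) a1 b1, add_le_add a2 b2, congrArg₂ (· + ·) a3 b3⟩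

lemma ZLead.e (u : Ex) : ZLead u (𝐞 u) := by
  refine ⟨by simp [Tw.cf_e_self], fun v hv => ?_⟩
  rw [Tw.cf_e] at hv
  by_cases h : u = v
  · subst h; simp
  · simp [h] at hv

lemma ZLead.pow {u : Ex} {f : Tw (chi p q)} (h : ZLead u f) (n : ℕ) : ZLead (n • u) (f ^ n) := by
  induction n with
  | zero => rw [zero_smul, pow_zero]; exact ZLead.e 0
  | succ n ih => rw [succ_nsmul, pow_succ]; exact ih.mul h

lemma zLead_y : ZLead (-1, 0, 0, 0) (emb p q 𝐲) := by
  have h := inv_ne_zero (p_sub_ne (p := p))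
  rw [emb_y]
  constructor
  · simp [Tw.cf_e, h]
  · intro v hv
    simp only [map_smul, map_sub, Tw.cf_e] at hv
    by_cases h1 : ((-1, 1, 0, 0) : Ex) = v
    · subst h1; simp
    · by_cases h2 : ((-1, 0, 0, 0) : Ex) = v
      · subst h2; simp
      · simp [h1, h2] at hv

/-- The images of the spanning monomials are triangular with respect to the monomial basis of the
quantum torus; this gives their independence. -/
lemma zLead_mm (u : Ex) : ZLead u (emb p q (mm K p q u)) := by
  obtain ⟨n, i, j, k⟩ := u
  have hx : ZLead (1, 0, 0, 0) (emb p q 𝐱) := by rw [emb_x]; exact ZLead.e _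
  have hs : ZLead (0, 0, 1, 0) (emb p q 𝐬) := by rw [emb_s]; exact ZLead.e _
  have ht : ZLead (0, 0, 0, 1) (emb p q 𝐭) := by rw [emb_t]; exact ZLead.e _
  have hz : ZLead (0, 1, 0, 0) (emb p q 𝐳) := by rw [emb_z]; exact ZLead.e _
  have := (((hz.pow i).mul ((hx.pow n.toNat).mul (zLead_y.pow (-n).toNat))).mul (hs.pow j)).mul
    (ht.pow k)
  simp only [mm, pw, map_mul, map_pow]
  convert this using 1
  simp only [Prod.smul_mk, Prod.mk_add_mk, smul_zero, Prod.mk.injEq, smul_eq_mul]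
  refine ⟨?_, ?_, ?_, ?_⟩
  · simp; omega
  all_goals simp

/-- Every monomial occurring in `b` is detected, up to lowering the exponent of `z`, by the image
of `b` in the quantum torus. -/
lemma exists_expansion (b : ExtWeyl K p q 1 1) : ∃ a : Ex →₀ K,
    b = a.sum (fun u r => r • mm K p q u) ∧
    ∀ u, a u ≠ 0 → ∃ v, 𝐜 v (emb p q b) ≠ 0 ∧ v.1 = u.1 ∧ v.2.1 ≤ u.2.1 ∧ v.2.2 = u.2.2 := by
  obtain ⟨a, ha⟩ := Finsupp.mem_span_range_iff_exists_finsupp.1 (mem_span_mm b)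
  refine ⟨a, ha.symm, fun u hu => ?_⟩
  obtain ⟨v, hv, hmin⟩ := Finset.exists_min_image
    (a.support.filter fun v => v.1 = u.1 ∧ v.2.2 = u.2.2) (fun v => v.2.1)
    ⟨u, by simpa using hu⟩
  simp only [Finset.mem_filter, Finsupp.mem_support_iff] at hv hmin
  refine ⟨v, ?_, hv.2.1, hmin u ⟨hu, rfl, rfl⟩, hv.2.2⟩
  rw [← ha, Finsupp.sum, map_sum, map_sum, Finset.sum_eq_single v]
  · rw [map_smul, map_smul]
    exact mul_ne_zero hv.1 (zLead_mm v).1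
  · intro w hw hne
    rw [map_smul, map_smul]
    by_contra h0
    obtain ⟨h1, h2, h3⟩ := (zLead_mm w).2 v (right_ne_zero_of_mul h0)
    have h4 := hmin w ⟨Finsupp.mem_support_iff.1 hw, h1.symm.trans hv.2.1, h3.symm.trans hv.2.2⟩
    exact hne (Prod.ext h1.symm (Prod.ext (le_antisymm h2 h4) h3.symm))
  · intro h
    exact absurd (Finsupp.mem_support_iff.2 hv.1) h

lemma emb_injective : Function.Injective (emb p q) := by
  rw [injective_iff_map_eq_zero]
  intro b hb
  obtain ⟨a, ha, h⟩ := exists_expansion b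
  have : a = 0 := Finsupp.ext fun u => by
    by_contra h0
    obtain ⟨v, hv, _⟩ := h u h0
    rw [hb, map_zero] at hv
    exact hv rfl
  rw [ha, this, Finsupp.sum_zero_index]

lemma dvd_of_forall {g b : ExtWeyl K p q 1 1} (P : Ex → Prop)
    (hP : ∀ u v : Ex, v.1 = u.1 → v.2.1 ≤ u.2.1 → v.2.2 = u.2.2 → P v → P u)
    (hg : ∀ u, P u → ∃ c, mm K p q u = g * c) (hb : ∀ u, 𝐜 u (emb p q b) ≠ 0 → P u) :
    ∃ c, b = g * c := by
  obtain ⟨a, ha, h⟩ := exists_expansion b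
  have : b ∈ LinearMap.range (LinearMap.mulLeft K g) := by
    rw [ha]
    refine Submodule.sum_mem _ fun u hu => Submodule.smul_mem _ _ ?_
    obtain ⟨v, hv, h1, h2, h3⟩ := h u (Finsupp.mem_support_iff.1 hu)
    obtain ⟨c, hc⟩ := hg u (hP u v h1 h2 h3 (hb v hv))
    exact ⟨c, hc.symm⟩
  obtain ⟨c, hc⟩ := this
  exact ⟨c, hc.symm⟩

lemma s_dvd {b : ExtWeyl K p q 1 1} (hb : ∀ u, 𝐜 u (emb p q b) ≠ 0 → u.2.2.1 ≠ 0) :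
    ∃ c, b = 𝐬 * c := by
  refine dvd_of_forall (fun u => u.2.2.1 ≠ 0) (fun u v _ _ h3 h => by rwa [h3] at h) ?_ hb
  rintro ⟨n, i, j, k⟩ hj
  obtain ⟨j, rfl⟩ := Nat.exists_eq_succ_of_ne_zero hj
  exact ⟨_, (s_mm n i j k).symm⟩

lemma t_dvd {b : ExtWeyl K p q 1 1} (hb : ∀ u, 𝐜 u (emb p q b) ≠ 0 → u.2.2.2 ≠ 0) :
    ∃ c, b = 𝐭 * c := by
  refine dvd_of_forall (fun u => u.2.2.2 ≠ 0) (fun u v _ _ h3 h => by rwa [h3] at h) ?_ hb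
  rintro ⟨n, i, j, k⟩ hj
  obtain ⟨k, rfl⟩ := Nat.exists_eq_succ_of_ne_zero hj
  refine ⟨q ^ j • mm K p q (n, i, j, k), ?_⟩
  rw [mul_smul_comm, t_mm, smul_smul, ← mul_pow, mul_inv_cancel₀ hq.out, one_pow, one_smul]

lemma z_dvd {b : ExtWeyl K p q 1 1} (hb : ∀ u, 𝐜 u (emb p q b) ≠ 0 → u.2.1 ≠ 0) :
    ∃ c, b = 𝐳 * c := by
  refine dvd_of_forall (fun u => u.2.1 ≠ 0) (fun u v _ h2 _ h => by omega) ?_ hb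
  rintro ⟨n, i, j, k⟩ hi
  obtain ⟨i, rfl⟩ := Nat.exists_eq_succ_of_ne_zero hi
  exact ⟨_, (z_mm n i j k).symm⟩

lemma mul_ne_zero_B {a b : ExtWeyl K p q 1 1} (ha : a ≠ 0) (hb : b ≠ 0) : a * b ≠ 0 := by
  intro h
  have := congrArg (emb p q) h
  rw [map_mul, map_zero] at this
  exact Tw.mul_ne_zero' lexHom_injective ((map_ne_zero_iff _ emb_injective).2 ha)
    ((map_ne_zero_iff _ emb_injective).2 hb) this

instance : NoZeroDivisors (ExtWeyl K p q 1 1) where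
  eq_zero_or_eq_zero_of_mul_eq_zero := fun {a b} h => by
    by_contra! h0
    exact mul_ne_zero_B h0.1 h0.2 h

/-! ### The Fock module and units -/

/-- The raising operator on the Fock module with basis `e_m`, `m ∈ ℕ`. -/
def fockY : Module.End K (ℕ →₀ K) := Finsupp.lsum K fun m => Finsupp.lsingle (m + 1)

variable (p) in
/-- The lowering operator `e_m ↦ (1 + p + ⋯ + p^(m-1)) e_(m-1)`; the truncated index at `m = 0`
is harmless since the coefficient vanishes there. -/
def fockX : Module.End K (ℕ →₀ K) :=
  Finsupp.lsum K fun m => (∑ r ∈ Finset.range m, p ^ r) • Finsupp.lsingle (m - 1)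

lemma isRel_fock : IsRel p q (fockX p) (fockY : Module.End K (ℕ →₀ K)) 0 0 where
  ab := by
    refine Finsupp.lhom_ext fun m b => ?_
    rcases m with _ | m
    · simp [fockX, fockY]
    · simp only [fockX, fockY, LinearMap.sub_apply, Module.End.mul_apply, LinearMap.smul_apply,
        Finsupp.lsum_single, Finsupp.lsingle_apply, map_smul, Module.End.one_apply,
        Nat.add_sub_cancel]
      rw [← smul_assoc, ← sub_smul, geom_sum_succ (n := m + 1), smul_eq_mul, add_sub_cancel_left,
        one_smul]
  cd := by simp
  ca := by simp
  cb := by simp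
  da := by simp
  db := by simp

/-- `1` is not in the left ideal generated by `x`, because `x` kills the vacuum vector of the Fock
module. -/
lemma fock_lemma {b : ExtWeyl K p q 1 1} {r : K} (h : b * 𝐱 = r • 1) : r = 0 := by
  have h1 := congrArg (fun a => lft (isRel_fock (p := p) (q := q)) a (Finsupp.single 0 1)) h
  simp only [map_mul, lft_x, map_smul, map_one, Module.End.mul_apply, LinearMap.smul_apply,
    Module.End.one_apply] at h1
  have h2 : fockX p (Finsupp.single 0 1) = 0 := by simp [fockX]
  rw [h2, map_zero] at h1
  have h3 := DFunLike.congr_fun h1 0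
  simpa using h3.symm

lemma fock_lemma' {b : ExtWeyl K p q 1 1} {r r' : K} (h : b * 𝐱 = r • 𝐳 - r' • 1) : r = r' := by
  have h1 : (b - (r * (p - 1)) • 𝐲) * 𝐱 = (r - r') • 1 := by
    rw [sub_mul, h, z_eq, smul_mul_assoc]
    module
  exact sub_eq_zero.1 (fock_lemma h1)

lemma eq_smul_x_pow {b : ExtWeyl K p q 1 1} {a : K} (ha : a ≠ 0) {m : ℤ}
    (h : emb p q b = a • 𝐞 (m, 0, 0, 0)) : 0 ≤ m ∧ b = a • 𝐱 ^ m.toNat := by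
  rcases lt_or_ge m 0 with hm | hm
  · exfalso
    obtain ⟨n, rfl⟩ : ∃ n : ℕ, m = -(n + 1 : ℤ) := ⟨(-m - 1).toNat, by omega⟩
    apply ha
    apply fock_lemma (b := b * 𝐱 ^ n) (q := q) (p := p)
    apply emb_injective
    rw [mul_assoc, ← pow_succ, map_mul, h, emb_x_pow, smul_mul_assoc, Tw.e_mul, chi_val, map_smul,
      map_one, ← Tw.e_zero]
    have e0 : (0 : Ex) = (0, 0, 0, 0) := rfl
    simp [e0]
  · refine ⟨hm, emb_injective ?_⟩
    rw [h, map_smul, emb_x_pow, Int.toNat_of_nonneg hm]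

/-- Two elements of the quantum torus whose product has smallest exponent `1` and largest exponent
`z^i` have exponents varying only in the direction of `z`. -/
lemma factor_lemma {f g : Tw (chi p q)} {i : ℕ} (hhi : Tw.IsHi _ lexHom (f * g) (0, i, 0, 0))
    (hlo : Tw.IsLo _ lexHom (f * g) 0) : ∃ (m : ℤ) (a b : ℕ), a + b = i ∧
      Tw.IsLo _ lexHom f (m, 0, 0, 0) ∧ Tw.IsHi _ lexHom f (m, a, 0, 0) ∧
      Tw.IsLo _ lexHom g (-m, 0, 0, 0) ∧ Tw.IsHi _ lexHom g (-m, b, 0, 0) := by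
  have hf : f ≠ 0 := by
    rintro rfl
    rw [zero_mul] at hhi
    exact hhi.1 (map_zero _)
  have hg : g ≠ 0 := by
    rintro rfl
    rw [mul_zero] at hhi
    exact hhi.1 (map_zero _)
  obtain ⟨⟨n1, i1, j1, k1⟩, h1⟩ := Tw.exists_hi (L := lexHom) hf
  obtain ⟨⟨n2, i2, j2, k2⟩, h2⟩ := Tw.exists_hi (L := lexHom) hg
  obtain ⟨⟨n3, i3, j3, k3⟩, h3⟩ := Tw.exists_lo (L := lexHom) hf
  obtain ⟨⟨n4, i4, j4, k4⟩, h4⟩ := Tw.exists_lo (L := lexHom) hg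
  have e1 := (h1.mul lexHom_injective h2).unique lexHom_injective hhi
  have e2 := (h3.mul lexHom_injective h4).unique lexHom_injective hlo
  have l1 : n3 ≤ n1 := fst_le_of_lexHom_le (h1.2 _ h3.1)
  have l2 : n4 ≤ n2 := fst_le_of_lexHom_le (h2.2 _ h4.1)
  simp only [Prod.mk_add_mk, Prod.mk.injEq, Prod.mk_eq_zero] at e1 e2
  obtain ⟨a1, a2, a3, a4⟩ := e1
  obtain ⟨b1, b2, b3, b4⟩ := e2
  obtain rfl : n3 = n1 := by omega
  obtain rfl : n4 = -n3 := by omega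
  obtain rfl : n2 = -n3 := by omega
  obtain ⟨rfl, rfl⟩ : j1 = 0 ∧ k1 = 0 := by omega
  obtain ⟨rfl, rfl⟩ : j2 = 0 ∧ k2 = 0 := by omega
  obtain ⟨rfl, rfl, rfl⟩ : i3 = 0 ∧ j3 = 0 ∧ k3 = 0 := by omega
  obtain ⟨rfl, rfl, rfl⟩ : i4 = 0 ∧ j4 = 0 ∧ k4 = 0 := by omega
  exact ⟨n3, i1, i2, a2, h3, h1, h4, h2⟩

lemma unit_scalar {u v : ExtWeyl K p q 1 1} (h : u * v = 1) :
    ∃ c : Kˣ, u = (c : K) • 1 := by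
  have h1 : emb p q u * emb p q v = 𝐞 0 := by rw [← map_mul, h, map_one, Tw.e_zero]
  obtain ⟨m, a, b, hab, l1, h1, l2, h2⟩ := factor_lemma (i := 0) (h1 ▸ Tw.isHi_e 0)
    (h1 ▸ Tw.isLo_e 0)
  obtain ⟨rfl, rfl⟩ : a = 0 ∧ b = 0 := by omega
  obtain ⟨p1, e1⟩ := eq_smul_x_pow h1.1 (Tw.eq_smul_e lexHom_injective h1 l1)
  obtain ⟨p2, e2⟩ := eq_smul_x_pow h2.1 (Tw.eq_smul_e lexHom_injective h2 l2)
  obtain rfl : m = 0 := by omega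
  refine ⟨Units.mk0 _ h1.1, ?_⟩
  simpa using e1

instance : Nontrivial (ExtWeyl K p q 1 1) := by
  refine ⟨0, 1, fun h => ?_⟩
  have h' := congrArg (𝐜 0 ∘ emb p q) h
  simp [← Tw.e_zero, Tw.cf_e_self] at h'

/-- If `g'` divides `φ g` and `g` divides `φ⁻¹ g'`, then `φ g` and `g'` differ by a unit. -/
lemma assoc_lemma (φ : ExtWeyl K p q 1 1 ≃ₐ[K] ExtWeyl K p q 1 1) {g g' u u' : ExtWeyl K p q 1 1}
    (hg : g' ≠ 0) (h : φ g = g' * u) (h' : φ.symm g' = g * u') :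
    ∃ c : Kˣ, φ g = (c : K) • g' := by
  have h1 : g' * (u * φ u') = g' * 1 := by
    rw [← mul_assoc, ← h, ← map_mul, ← h', AlgEquiv.apply_symm_apply, mul_one]
  obtain ⟨c, hc⟩ := unit_scalar (mul_left_cancel₀ hg h1)
  exact ⟨c, by rw [h, hc, mul_smul_comm, mul_one]⟩

/-! ### The commutative quotients -/

open Polynomial in
/-- The quotient of the quantum torus by the monomials with `d u ≠ 0`, when the rest commutes;
`g u` is the exponent of the polynomial variable. -/
def rho (g d : Ex →+ ℕ) (hd : ∀ u v, d u = 0 → d v = 0 → (chi p q).val u v = 1) :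
    Tw (chi p q) →ₐ[K] Polynomial (LaurentPolynomial K) :=
  let F : (Ex →₀ K) →ₗ[K] Polynomial (LaurentPolynomial K) :=
    Finsupp.lsum K fun u => LinearMap.toSpanSingleton K _
      (if d u = 0 then monomial (g u) (LaurentPolynomial.T u.1) else 0)
  have hF : ∀ u a, F (Finsupp.single u a) =
      a • (if d u = 0 then monomial (g u) (LaurentPolynomial.T u.1) else 0) := fun u a => by
    simp only [F, Finsupp.lsum_single, LinearMap.toSpanSingleton_apply]
  AlgHom.ofLinearMap (F : Tw (chi p q) →ₗ[K] Polynomial (LaurentPolynomial K))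
    (by
      refine (hF 0 1).trans ?_
      simp)
    (by
      have key : ∀ a b : Ex →₀ K, F (Tw.mulLin (chi p q) a b) = F a * F b := by
        intro a b
        induction a using Finsupp.induction_linear with
        | zero => simp
        | add f f' h1 h2 => simp only [map_add, LinearMap.add_apply, h1, h2, add_mul]
        | single u a =>
          induction b using Finsupp.induction_linear with
          | zero => simp
          | add f f' h1 h2 => simp only [map_add, h1, h2, mul_add]
          | single v b =>
            rw [Tw.mulLin_single, hF, hF, hF, smul_mul_smul_comm]
            by_cases hu : d u = 0
            · by_cases hv : d v = 0
              · rw [if_pos (by rw [map_add, hu, hv]), if_pos hu, if_pos hv, hd u v hu hv, one_mul,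
                  monomial_mul_monomial, ← LaurentPolynomial.T_add, map_add]
                rfl
              · simp [hv]
            · simp [hu]
      exact key)

lemma rho_apply (g d : Ex →+ ℕ) (hd : ∀ u v, d u = 0 → d v = 0 → (chi p q).val u v = 1)
    (f : Tw (chi p q)) : rho g d hd f = ∑ u ∈ (f : Ex →₀ K).support, 𝐜 u f •
      (if d u = 0 then Polynomial.monomial (g u) (LaurentPolynomial.T u.1) else 0) := rfl

lemma rho_e (g d : Ex →+ ℕ) (hd : ∀ u v, d u = 0 → d v = 0 → (chi p q).val u v = 1)
    (u : Ex) : rho g d hd (𝐞 u) =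
      if d u = 0 then Polynomial.monomial (g u) (LaurentPolynomial.T u.1) else 0 := by
  refine (Finsupp.sum_single_index ?_).trans ?_
  · simp
  · exact one_smul K _

lemma exists_of_coeff_rho (g d : Ex →+ ℕ)
    (hd : ∀ u v, d u = 0 → d v = 0 → (chi p q).val u v = 1)
    {f : Tw (chi p q)} (h : (rho g d hd f).coeff 1 ≠ 0) :
    ∃ u, 𝐜 u f ≠ 0 ∧ g u = 1 := by
  rw [rho_apply, Polynomial.finsetSum_coeff] at h
  obtain ⟨u, hu, h⟩ := Finset.exists_ne_zero_of_sum_ne_zero h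
  refine ⟨u, (Tw.mem_support _).1 hu, ?_⟩
  by_contra h0
  apply h
  split_ifs
  · simp [Polynomial.coeff_monomial, h0]
  · simp

/-- A homomorphism `B → K[x^±1][X]` killing one of `s`, `t` and having `X` in its range sends the
other one to a polynomial of degree one: the images of `x` and `y` are units, hence constants. -/
lemma natDegree_eq_one {ψ : ExtWeyl K p q 1 1 →ₐ[K] Polynomial (LaurentPolynomial K)}
    {w : Polynomial (LaurentPolynomial K)}
    (h : (ψ 𝐬 = w ∧ ψ 𝐭 = 0) ∨ (ψ 𝐬 = 0 ∧ ψ 𝐭 = w)) (hX : Polynomial.X ∈ ψ.range) :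
    w.natDegree = 1 := by
  have hxy : ψ 𝐱 * ψ 𝐲 * algebraMap K _ (1 - p) = 1 := by
    have := congrArg ψ (rel_xy (K := K) (p := p) (q := q))
    rw [map_add, map_smul, map_mul, map_mul, map_one, mul_comm (ψ 𝐲)] at this
    rw [mul_comm, ← Algebra.smul_def, sub_smul, one_smul]
    exact sub_eq_of_eq_add' this
  obtain ⟨r, _, hr⟩ := Polynomial.isUnit_iff.1
    (IsUnit.of_mul_eq_one _ ((mul_assoc _ _ _).symm.trans hxy))
  obtain ⟨r', _, hr'⟩ := Polynomial.isUnit_iff.1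
    (IsUnit.of_mul_eq_one (ψ 𝐱 * algebraMap K _ (1 - p)) (by rw [← hxy]; ring) : IsUnit (ψ 𝐲))
  let E : Polynomial (LaurentPolynomial K) →ₐ[LaurentPolynomial K]
    Polynomial (LaurentPolynomial K) := Polynomial.aeval w
  let S : Subalgebra K (ExtWeyl K p q 1 1) := (E.range.restrictScalars K).comap ψ
  have hw : w ∈ E.range := ⟨Polynomial.X, Polynomial.aeval_X w⟩
  have hst : ψ 𝐬 ∈ E.range ∧ ψ 𝐭 ∈ E.range := by
    rcases h with ⟨h1, h2⟩ | ⟨h1, h2⟩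
    · rw [h1, h2]; exact ⟨hw, E.range.zero_mem⟩
    · rw [h1, h2]; exact ⟨E.range.zero_mem, hw⟩
  obtain ⟨b, hb⟩ := hX
  have hS : b ∈ S := by
    apply gen_induction S
    · show ψ 𝐱 ∈ E.range
      rw [← hr]
      exact E.range.algebraMap_mem r
    · show ψ 𝐲 ∈ E.range
      rw [← hr']
      exact E.range.algebraMap_mem r'
    · exact hst.1
    · exact hst.2
  obtain ⟨P, hP⟩ : ψ b ∈ E.range := hS
  have h1 : P.comp w = Polynomial.X := by
    exact hP.trans hb
  have h2 := congrArg Polynomial.natDegree h1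
  rw [Polynomial.natDegree_comp, Polynomial.natDegree_X] at h2
  exact Nat.eq_one_of_mul_eq_one_left h2

/-! ### Normal elements and the form of automorphisms -/

/-- `N` is left normal: `N B ⊆ B N`. -/
def IsN (N : ExtWeyl K p q 1 1) : Prop := ∀ b, ∃ w, N * b = w * N

lemma isN_of_gens {N : ExtWeyl K p q 1 1} (hx : ∃ w, N * 𝐱 = w * N) (hy : ∃ w, N * 𝐲 = w * N)
    (hs : ∃ w, N * 𝐬 = w * N) (ht : ∃ w, N * 𝐭 = w * N) : IsN N := by
  let S : Subalgebra K (ExtWeyl K p q 1 1) :=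
    { carrier := {b | ∃ w, N * b = w * N}
      mul_mem' := by
        rintro a b ⟨w, hw⟩ ⟨w', hw'⟩
        exact ⟨w * w', by rw [← mul_assoc, hw, mul_assoc, hw', mul_assoc]⟩
      add_mem' := by
        rintro a b ⟨w, hw⟩ ⟨w', hw'⟩
        exact ⟨w + w', by rw [mul_add, add_mul, hw, hw']⟩
      algebraMap_mem' := fun r => ⟨algebraMap K _ r, (Algebra.commutes r N).symm⟩ }
  exact gen_induction S hx hy hs ht

lemma isN_s : IsN 𝐬 :=
  isN_of_gens ⟨_, isRel_gens.ca⟩ ⟨_, isRel_gens.cb⟩ ⟨_, rfl⟩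
    ⟨q • 𝐭, by rw [isRel_gens.cd, smul_mul_assoc]⟩

lemma isN_t : IsN 𝐭 :=
  isN_of_gens ⟨_, isRel_gens.da⟩ ⟨_, isRel_gens.db⟩ ⟨q⁻¹ • 𝐬, by rw [ts, smul_mul_assoc]⟩ ⟨_, rfl⟩

lemma isN_z : IsN 𝐳 :=
  isN_of_gens
    ⟨p⁻¹ • 𝐱, by rw [smul_mul_assoc, xz, smul_smul, inv_mul_cancel₀ hp.out, one_smul]⟩
    ⟨p • 𝐲, by rw [smul_mul_assoc, zy]⟩ ⟨_, sz.eq.symm⟩ ⟨_, tz.eq.symm⟩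

variable (φ : ExtWeyl K p q 1 1 ≃ₐ[K] ExtWeyl K p q 1 1)

lemma IsN.map {N : ExtWeyl K p q 1 1} (h : IsN N) : IsN (φ N) := fun b => by
  obtain ⟨w, hw⟩ := h (φ.symm b)
  refine ⟨φ w, ?_⟩
  rw [← map_mul, ← hw, map_mul, AlgEquiv.apply_symm_apply]

/-- A normal element commutes, up to a scalar `c`, with any element `b` that becomes a monomial in the
quantum torus; all monomials of the normal element have the same commutation factor `c` with it. -/
lemma IsN.rel {N : ExtWeyl K p q 1 1} (h : IsN N) (hN : N ≠ 0) {b : ExtWeyl K p q 1 1} {v : Ex}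
    (hb : emb p q b = 𝐞 v) : ∃ c : K, c ≠ 0 ∧ N * b = c • (b * N) ∧
      ∀ u, 𝐜 u (emb p q N) ≠ 0 → (chi p q).val u v = c * (chi p q).val v u := by
  obtain ⟨w, hw⟩ := h b
  have h1 := congrArg (emb p q) hw
  rw [map_mul, map_mul, hb] at h1
  obtain ⟨c, hc, hW, hu⟩ := Tw.normal_rel lexHom_injective
    ((map_ne_zero_iff _ emb_injective).2 hN) v h1
  refine ⟨c, hc, ?_, hu⟩
  have h2 : w = c • b := emb_injective (by rw [hW, map_smul, hb])
  rw [hw, h2, smul_mul_assoc]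

/-- A monomial of `s`-degree `j` commutes with `t` up to `q^j`. As `q ≠ 1`, a normal element with a
monomial of `s`-degree one has none of `s`-degree zero. -/
lemma s_dvd_of_isN {N : ExtWeyl K p q 1 1} (h : IsN N)
    (hN : ∃ u, 𝐜 u (emb p q N) ≠ 0 ∧ u.2.2.1 = 1) :
    ∃ c, N = 𝐬 * c := by
  obtain ⟨u, hu, hj⟩ := hN
  have hN0 : N ≠ 0 := by
    rintro rfl
    simp at hu
  obtain ⟨c, -, -, hr⟩ := h.rel hN0 (emb_t (K := K) (p := p) (q := q))
  have h1 := hr u hu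
  refine s_dvd fun v hv hv0 => hq1.out ?_
  have h2 := hr v hv
  simp only [chi_val] at h1 h2
  simp only [hj, hv0, mul_zero, mul_one, one_mul, Nat.cast_zero, zpow_zero, pow_zero, zero_mul,
    pow_one] at h1 h2
  rw [← h2, one_mul] at h1
  exact inv_eq_one.1 h1.symm

lemma t_dvd_of_isN {N : ExtWeyl K p q 1 1} (h : IsN N)
    (hN : ∃ u, 𝐜 u (emb p q N) ≠ 0 ∧ u.2.2.2 = 1) :
    ∃ c, N = 𝐭 * c := by
  obtain ⟨u, hu, hj⟩ := hN
  have hN0 : N ≠ 0 := by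
    rintro rfl
    simp at hu
  obtain ⟨c, -, -, hr⟩ := h.rel hN0 (emb_s (K := K) (p := p) (q := q))
  have h1 := hr u hu
  refine t_dvd fun v hv hv0 => hq1.out ?_
  have h2 := hr v hv
  simp only [chi_val] at h1 h2
  simp only [hj, hv0, mul_zero, mul_one, one_mul, Nat.cast_zero, zpow_zero, pow_zero, zero_mul,
    pow_one] at h1 h2
  rw [← h2] at h1
  exact inv_eq_one.1 h1

/-- The exponent of `z`, as a homomorphism. -/
def exZ : Ex →+ ℕ := (AddMonoidHom.fst _ _).comp (AddMonoidHom.snd _ _)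
/-- The exponent of `s`, as a homomorphism. -/
def exS : Ex →+ ℕ :=
  ((AddMonoidHom.fst _ _).comp (AddMonoidHom.snd _ _)).comp (AddMonoidHom.snd _ _)
/-- The exponent of `t`, as a homomorphism. -/
def exT : Ex →+ ℕ :=
  ((AddMonoidHom.snd _ _).comp (AddMonoidHom.snd _ _)).comp (AddMonoidHom.snd _ _)

lemma exZ_apply (u : Ex) : exZ u = u.2.1 := rfl
lemma exS_apply (u : Ex) : exS u = u.2.2.1 := rfl
lemma exT_apply (u : Ex) : exT u = u.2.2.2 := rfl

lemma chi_one_S (u v : Ex) (hu : (exZ + exT) u = 0) (hv : (exZ + exT) v = 0) :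
    (chi p q).val u v = 1 := by
  simp only [AddMonoidHom.add_apply, exZ_apply, exT_apply, Nat.add_eq_zero_iff] at hu hv
  rw [chi_val, hv.1, hu.2]; simp

lemma chi_one_T (u v : Ex) (_ : (exZ + exS) u = 0) (hv : (exZ + exS) v = 0) :
    (chi p q).val u v = 1 := by
  simp only [AddMonoidHom.add_apply, exZ_apply, exS_apply, Nat.add_eq_zero_iff] at hv
  rw [chi_val, hv.1, hv.2]; simp

variable (p q) in
/-- The homomorphism `B → K[x^±1][s]` killing `z` and `t`. -/
def piS : ExtWeyl K p q 1 1 →ₐ[K] Polynomial (LaurentPolynomial K) :=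
  (rho exS (exZ + exT) chi_one_S).comp (emb p q)

variable (p q) in
/-- The homomorphism `B → K[x^±1][t]` killing `z` and `s`. -/
def piT : ExtWeyl K p q 1 1 →ₐ[K] Polynomial (LaurentPolynomial K) :=
  (rho exT (exZ + exS) chi_one_T).comp (emb p q)

lemma piS_s : piS p q 𝐬 = Polynomial.X := by
  rw [piS, AlgHom.comp_apply, emb_s, rho_e]
  simp [exS_apply, exZ_apply, exT_apply, Polynomial.X]

lemma piS_t : piS p q 𝐭 = 0 := by
  rw [piS, AlgHom.comp_apply, emb_t, rho_e]
  simp [exS_apply, exZ_apply, exT_apply]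

lemma piT_t : piT p q 𝐭 = Polynomial.X := by
  rw [piT, AlgHom.comp_apply, emb_t, rho_e]
  simp [exS_apply, exZ_apply, exT_apply, Polynomial.X]

lemma piT_s : piT p q 𝐬 = 0 := by
  rw [piT, AlgHom.comp_apply, emb_s, rho_e]
  simp [exS_apply, exZ_apply, exT_apply]

lemma st_zero (ψ : ExtWeyl K p q 1 1 →ₐ[K] Polynomial (LaurentPolynomial K)) :
    ψ 𝐬 = 0 ∨ ψ 𝐭 = 0 := by
  have h := congrArg ψ (isRel_gens (K := K) (p := p) (q := q)).cd
  rw [map_smul, map_mul, map_mul, mul_comm (ψ 𝐭)] at h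
  have h1 : (1 - q) • (ψ 𝐬 * ψ 𝐭) = 0 := by
    rw [sub_smul, one_smul, ← h, sub_self]
  rcases smul_eq_zero.1 h1 with h2 | h2
  · exact absurd (sub_eq_zero.1 h2).symm hq1.out
  · exact mul_eq_zero.1 h2

lemma coeff_one_ne_zero {w : Polynomial (LaurentPolynomial K)} (h : w.natDegree = 1) :
    w.coeff 1 ≠ 0 := by
  rw [← h]
  exact Polynomial.leadingCoeff_ne_zero.2 (by rintro rfl; simp at h)

lemma piS_dvd {N : ExtWeyl K p q 1 1} (hN : IsN N) (h : (piS p q N).natDegree = 1) :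
    piS p q N ≠ 0 ∧ ∃ c, N = 𝐬 * c := by
  refine ⟨by intro h0; simp [h0] at h, s_dvd_of_isN hN ?_⟩
  exact exists_of_coeff_rho _ _ chi_one_S (coeff_one_ne_zero h)

lemma piT_dvd {N : ExtWeyl K p q 1 1} (hN : IsN N) (h : (piT p q N).natDegree = 1) :
    piT p q N ≠ 0 ∧ ∃ c, N = 𝐭 * c := by
  refine ⟨by intro h0; simp [h0] at h, t_dvd_of_isN hN ?_⟩
  exact exists_of_coeff_rho _ _ chi_one_T (coeff_one_ne_zero h)

lemma cases_S :
    (piS p q (φ 𝐬) ≠ 0 ∧ ∃ c, φ 𝐬 = 𝐬 * c) ∨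
    (piS p q (φ 𝐭) ≠ 0 ∧ ∃ c, φ 𝐭 = 𝐬 * c) := by
  have hX : Polynomial.X ∈ ((piS p q).comp (φ : ExtWeyl K p q 1 1 →ₐ[K] _)).range :=
    ⟨φ.symm 𝐬, by simp [piS_s]⟩
  rcases st_zero ((piS p q).comp (φ : ExtWeyl K p q 1 1 →ₐ[K] _)) with h | h
  · exact Or.inr (piS_dvd (isN_t.map φ) (natDegree_eq_one (Or.inr ⟨h, rfl⟩) hX))
  · exact Or.inl (piS_dvd (isN_s.map φ) (natDegree_eq_one (Or.inl ⟨rfl, h⟩) hX))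

lemma cases_T :
    (piT p q (φ 𝐬) ≠ 0 ∧ ∃ c, φ 𝐬 = 𝐭 * c) ∨
    (piT p q (φ 𝐭) ≠ 0 ∧ ∃ c, φ 𝐭 = 𝐭 * c) := by
  have hX : Polynomial.X ∈ ((piT p q).comp (φ : ExtWeyl K p q 1 1 →ₐ[K] _)).range :=
    ⟨φ.symm 𝐭, by simp [piT_t]⟩
  rcases st_zero ((piT p q).comp (φ : ExtWeyl K p q 1 1 →ₐ[K] _)) with h | h
  · exact Or.inr (piT_dvd (isN_t.map φ) (natDegree_eq_one (Or.inr ⟨h, rfl⟩) hX))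
  · exact Or.inl (piT_dvd (isN_s.map φ) (natDegree_eq_one (Or.inl ⟨rfl, h⟩) hX))

lemma cases_ST : ((∃ c, φ 𝐬 = 𝐬 * c) ∧ ∃ c, φ 𝐭 = 𝐭 * c) ∨
    ((∃ c, φ 𝐬 = 𝐭 * c) ∧ ∃ c, φ 𝐭 = 𝐬 * c) := by
  rcases cases_S φ with ⟨h1, h2⟩ | ⟨h1, h2⟩
  · rcases cases_T φ with ⟨h3, c, h4⟩ | ⟨h3, h4⟩
    · rw [h4, map_mul, piS_t, zero_mul] at h1
      exact absurd rfl h1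
    · exact Or.inl ⟨h2, h4⟩
  · rcases cases_T φ with ⟨h3, h4⟩ | ⟨h3, c, h4⟩
    · exact Or.inr ⟨h4, h2⟩
    · rw [h4, map_mul, piS_t, zero_mul] at h1
      exact absurd rfl h1

lemma s_ne_tc (c : ExtWeyl K p q 1 1) : 𝐬 ≠ 𝐭 * c := by
  intro h
  have := congrArg (piS p q) h
  rw [map_mul, piS_t, zero_mul, piS_s] at this
  exact Polynomial.X_ne_zero this

lemma s_ne_zero : 𝐬 ≠ 0 := fun h => s_ne_tc 0 (h.trans (mul_zero _).symm)

lemma t_ne_zero : 𝐭 ≠ 0 := by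
  intro h
  have := congrArg (piT p q) h
  rw [map_zero, piT_t] at this
  exact Polynomial.X_ne_zero this

lemma z_ne_zero : 𝐳 ≠ 0 := by
  intro h
  have := congrArg (𝐜 (0, 1, 0, 0)) (emb_z (K := K) (p := p) (q := q))
  rw [h, map_zero, map_zero, Tw.cf_e_self] at this
  exact zero_ne_one this

lemma x_ne_zero : 𝐱 ≠ 0 := by
  intro h
  have := congrArg (𝐜 (1, 0, 0, 0)) (emb_x (K := K) (p := p) (q := q))
  rw [h, map_zero, map_zero, Tw.cf_e_self] at this
  exact zero_ne_one this

lemma form_ST : (∃ β γ : Kˣ, φ 𝐬 = (β : K) • 𝐬 ∧ φ 𝐭 = (γ : K) • 𝐭) ∨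
    (q = -1 ∧ ∃ β γ : Kˣ, φ 𝐬 = (β : K) • 𝐭 ∧ φ 𝐭 = (γ : K) • 𝐬) := by
  rcases cases_ST φ with ⟨⟨a, ha⟩, b, hb⟩ | ⟨⟨a, ha⟩, b, hb⟩
  · rcases cases_ST φ.symm with ⟨⟨c, hc⟩, d, hd⟩ | ⟨⟨c, hc⟩, d, hd⟩
    · left
      obtain ⟨β, hβ⟩ := assoc_lemma φ s_ne_zero ha hc
      obtain ⟨γ, hγ⟩ := assoc_lemma φ t_ne_zero hb hd
      exact ⟨β, γ, hβ, hγ⟩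
    · have := congrArg φ hc
      rw [AlgEquiv.apply_symm_apply, map_mul, hb, mul_assoc] at this
      exact absurd this (s_ne_tc _)
  · rcases cases_ST φ.symm with ⟨⟨c, hc⟩, d, hd⟩ | ⟨⟨c, hc⟩, d, hd⟩
    · have := congrArg φ hc
      rw [AlgEquiv.apply_symm_apply, map_mul, ha, mul_assoc] at this
      exact absurd this (s_ne_tc _)
    · right
      obtain ⟨β, hβ⟩ := assoc_lemma φ t_ne_zero ha hd
      obtain ⟨γ, hγ⟩ := assoc_lemma φ s_ne_zero hb hc
      refine ⟨?_, β, γ, hβ, hγ⟩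
      have h := congrArg φ (isRel_gens (K := K) (p := p) (q := q)).cd
      rw [map_smul, map_mul, map_mul, hβ, hγ, smul_mul_smul_comm, smul_mul_smul_comm,
        isRel_gens.cd, smul_smul, smul_smul] at h
      have h1 := smul_left_injective K (mul_ne_zero_B t_ne_zero s_ne_zero) h
      have h2 : (β * γ : K) ≠ 0 := mul_ne_zero β.ne_zero γ.ne_zero
      have h3 : q * q = 1 := mul_left_cancel₀ h2 (by linear_combination -h1)
      exact (mul_self_eq_one_iff.1 h3).resolve_left hq1.out

lemma comm_φz : Commute (φ 𝐳) 𝐬 ∧ Commute (φ 𝐳) 𝐭 := by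
  have hs : Commute (φ 𝐳) (φ 𝐬) := by
    show _ * _ = _ * _
    rw [← map_mul, ← map_mul, sz.eq]
  have ht : Commute (φ 𝐳) (φ 𝐭) := by
    show _ * _ = _ * _
    rw [← map_mul, ← map_mul, tz.eq]
  have key : ∀ (c : Kˣ) (a b : ExtWeyl K p q 1 1), Commute a ((c : K) • b) → Commute a b :=
    fun c a b h => by
      have := h.smul_right ((c⁻¹ : Kˣ) : K)
      rwa [smul_smul, Units.inv_mul, one_smul] at this
  rcases form_ST φ with ⟨β, γ, h1, h2⟩ | ⟨_, β, γ, h1, h2⟩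
  · rw [h1] at hs; rw [h2] at ht
    exact ⟨key _ _ _ hs, key _ _ _ ht⟩
  · rw [h1] at hs; rw [h2] at ht
    exact ⟨key _ _ _ ht, key _ _ _ hs⟩

/-- The normal element `φ z` commutes with `s` and `t`. If it also commuted with `x`, it would
commute with `y` and be central, but `z` is not; so it commutes with `x` up to a scalar `≠ 1`,
which forces `z` to divide it. -/
lemma z_dvd_φz : ∃ c, φ 𝐳 = 𝐳 * c := by
  have hN := (isN_z (K := K) (p := p) (q := q)).map φ
  have hN0 : φ 𝐳 ≠ 0 := (map_ne_zero_iff _ φ.injective).2 z_ne_zero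
  obtain ⟨c, hc0, hc, hr⟩ := hN.rel hN0 (emb_x (K := K) (p := p) (q := q))
  refine z_dvd fun u hu hu0 => ?_
  have h1 := hr u hu
  simp only [chi_val] at h1
  simp only [hu0, mul_zero, mul_one, Nat.cast_zero, zpow_zero, pow_zero, zero_mul] at h1
  rw [← h1, one_smul] at hc
  obtain ⟨d, hd0, hd, -⟩ := hN.rel hN0 (emb_z (K := K) (p := p) (q := q))
  obtain ⟨w, hw⟩ := hN 𝐲
  have h2 : (1 + (p - 1) • (w * 𝐱)) * φ 𝐳 = (d • 𝐳) * φ 𝐳 := by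
    rw [smul_mul_assoc, ← hd]
    conv_rhs => rw [z_eq]
    rw [mul_add, mul_smul_comm, ← mul_assoc, ← z_eq, hw, mul_assoc w, hc, add_mul, smul_mul_assoc,
      mul_assoc, one_mul, mul_one, add_comm]
  have h3 := mul_right_cancel₀ hN0 h2
  have h4 : ((p - 1) • w) * 𝐱 = d • 𝐳 - (1 : K) • 1 := by
    rw [← h3, smul_mul_assoc, one_smul]; abel
  obtain rfl := fock_lemma' h4
  have h5 : w = 𝐲 := by
    have h6 : ((p - 1) • w) * 𝐱 = ((p - 1) • 𝐲) * 𝐱 := by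
      rw [h4, smul_mul_assoc, z_eq]; module
    exact smul_right_injective _ p_sub_ne (mul_right_cancel₀ x_ne_zero h6)
  rw [h5] at hw
  have h7 : φ 𝐱 ∈ Subalgebra.centralizer K {φ 𝐳} := by
    apply gen_induction
    all_goals
      rw [Subalgebra.mem_centralizer_iff]
      rintro _ rfl
    · exact hc
    · exact hw
    · exact (comm_φz φ).1
    · exact (comm_φz φ).2
  have h8 := (Subalgebra.mem_centralizer_iff K).1 h7 _ rfl
  rw [← map_mul, ← map_mul, xz] at h8
  have h9 := φ.injective h8
  have h10 : (1 : K) • (𝐳 * 𝐱) = p • (𝐳 * 𝐱) := by rw [one_smul]; exact h9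
  exact hp1.out (smul_left_injective K (mul_ne_zero_B z_ne_zero x_ne_zero) h10).symm

lemma form_Z : ∃ ζ : Kˣ, φ 𝐳 = (ζ : K) • 𝐳 := by
  obtain ⟨c, hc⟩ := z_dvd_φz φ
  obtain ⟨d, hd⟩ := z_dvd_φz φ.symm
  exact assoc_lemma φ z_ne_zero hc hd

lemma isHi_pow {f : Tw (chi p q)} {u : Ex} (h : Tw.IsHi _ lexHom f u) (n : ℕ) :
    Tw.IsHi _ lexHom (f ^ n) (n • u) := by
  induction n with
  | zero => rw [zero_smul, pow_zero]; exact Tw.isHi_e 0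
  | succ n ih => rw [succ_nsmul, pow_succ]; exact ih.mul lexHom_injective h

/-- If an automorphism sends `g` (one of `x`, `y`) to a monomial `a x^m` then `m = 1`: the
equation `(φ⁻¹ x)^m = a⁻¹ g` excludes `m > 1`. -/
lemma form_of_mono {g : ExtWeyl K p q 1 1} {a : K} (ha : a ≠ 0) {m : ℤ}
    (hg : ∃ i : ℕ, ∃ l : ℤ, (l = 1 ∨ l = -1) ∧ Tw.IsHi _ lexHom (emb p q g) (l, i, 0, 0))
    (h : emb p q (φ g) = a • 𝐞 (m, 0, 0, 0)) : φ g = a • 𝐱 := by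
  obtain ⟨hm, h1⟩ := eq_smul_x_pow ha h
  obtain ⟨n, rfl⟩ := Int.eq_ofNat_of_zero_le hm
  rw [Int.toNat_natCast] at h1
  suffices n = 1 by rw [h1, this, pow_one]
  obtain ⟨i, l, hl, hhi⟩ := hg
  have hX0 : emb p q (φ.symm 𝐱) ≠ 0 := (map_ne_zero_iff _ emb_injective).2
    ((map_ne_zero_iff _ φ.symm.injective).2 x_ne_zero)
  obtain ⟨u, hu⟩ := Tw.exists_hi (L := lexHom) hX0
  have h2 : φ.symm 𝐱 ^ n = a⁻¹ • g := by
    apply φ.injective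
    rw [map_pow, AlgEquiv.apply_symm_apply, map_smul, h1, smul_smul, inv_mul_cancel₀ ha, one_smul]
  have h3 := isHi_pow hu n
  rw [← map_pow, h2, map_smul] at h3
  have h4 : Tw.IsHi _ lexHom (a⁻¹ • emb p q g) (l, i, 0, 0) := by
    refine ⟨?_, fun v hv => hhi.2 v ?_⟩
    · rw [map_smul]
      exact mul_ne_zero (inv_ne_zero ha) hhi.1
    · rw [map_smul] at hv
      exact right_ne_zero_of_mul hv
  have h5 : n • u.1 = l := congrArg Prod.fst (h3.unique lexHom_injective h4)
  rw [nsmul_eq_mul] at h5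
  have h6 : (n : ℤ) ∣ 1 := by
    rcases hl with rfl | rfl
    · exact ⟨u.1, h5.symm⟩
    · exact ⟨-u.1, by linarith⟩
  have h7 := Int.eq_one_of_dvd_one (Int.natCast_nonneg n) h6
  exact_mod_cast h7

lemma eq_inv_smul {c : Kˣ} {a b : ExtWeyl K p q 1 1} (h : (c : K) • a = b) :
    a = ((c⁻¹ : Kˣ) : K) • b := by
  rw [← h, smul_smul, Units.inv_mul, one_smul]

lemma lexHom_lt (n : ℤ) : lexHom (n, 0, 0, 0) < lexHom (n, 1, 0, 0) := by
  simp [lexHom, Prod.Lex.toLex_lt_toLex]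

lemma isHiLo_binomial {a b : K} (ha : a ≠ 0) (hb : b ≠ 0) (n : ℤ) :
    Tw.IsHi _ lexHom (a • 𝐞 (n, 1, 0, 0) - b • 𝐞 (n, 0, 0, 0)) (n, 1, 0, 0) ∧
      Tw.IsLo _ lexHom (a • 𝐞 (n, 1, 0, 0) - b • 𝐞 (n, 0, 0, 0)) (n, 0, 0, 0) := by
  have h : ∀ v, 𝐜 v (a • 𝐞 (n, 1, 0, 0) - b • 𝐞 (n, 0, 0, 0)) =
      (a * if (n, 1, 0, 0) = v then 1 else 0) - (b * if (n, 0, 0, 0) = v then 1 else 0) := by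
    intro v
    rw [map_sub, map_smul, map_smul, Tw.cf_e, Tw.cf_e, smul_eq_mul, smul_eq_mul]
  have h0 : ∀ v, 𝐜 v (a • 𝐞 (n, 1, 0, 0) - b • 𝐞 (n, 0, 0, 0)) ≠ 0 →
      v = (n, 1, 0, 0) ∨ v = (n, 0, 0, 0) := by
    intro v hv
    by_contra! hc
    apply hv
    rw [h, if_neg hc.1.symm, if_neg hc.2.symm, mul_zero, mul_zero, sub_zero]
  refine ⟨⟨?_, fun v hv => ?_⟩, ⟨?_, fun v hv => ?_⟩⟩
  · rw [h]; simpa using ha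
  · rcases h0 v hv with rfl | rfl
    · exact le_rfl
    · exact (lexHom_lt n).le
  · rw [h]; simpa using hb
  · rcases h0 v hv with rfl | rfl
    · exact (lexHom_lt n).le
    · exact le_rfl

/-- The product `φ(y) φ(x) = (p - 1)⁻¹ (ζ z - 1)` is a binomial in `z`, so one of the factors is a
monomial in the quantum torus, hence a multiple of `x`; the Fock module then determines `ζ` and the
other factor. -/
lemma form_XY : (∃ α : Kˣ, φ 𝐱 = (α : K) • 𝐱 ∧ φ 𝐲 = ((α⁻¹ : Kˣ) : K) • 𝐲) ∨
    (p = -1 ∧ ∃ α : Kˣ, φ 𝐱 = (α : K) • 𝐲 ∧ φ 𝐲 = ((α⁻¹ : Kˣ) : K) • 𝐱) := by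
  obtain ⟨ζ, hζ⟩ := form_Z φ
  have hr : (p - 1)⁻¹ ≠ 0 := inv_ne_zero p_sub_ne
  have hyx : φ 𝐲 * φ 𝐱 = (p - 1)⁻¹ • ((ζ : K) • 𝐳 - 1) := by
    rw [← map_mul, yx_eq, map_smul, map_sub, map_one, hζ]
  have hxy : φ 𝐱 * φ 𝐲 = (p - 1)⁻¹ • ((p * ζ) • 𝐳 - 1) := by
    rw [← map_mul, xy_eq, map_smul, map_sub, map_one, map_smul, hζ, smul_smul]
  have hmul : emb p q (φ 𝐲) * emb p q (φ 𝐱) =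
      ((p - 1)⁻¹ * ζ) • 𝐞 (0, 1, 0, 0) - (p - 1)⁻¹ • 𝐞 (0, 0, 0, 0) := by
    rw [← map_mul, hyx, map_smul, map_sub, map_smul, emb_z, map_one, ← Tw.e_zero, smul_sub,
      smul_smul]
    rfl
  obtain ⟨hhi, hlo⟩ := isHiLo_binomial (p := p) (q := q) (mul_ne_zero hr ζ.ne_zero) hr 0
  rw [← hmul] at hhi hlo
  obtain ⟨m, a, b, hab, l1, h1, l2, h2⟩ := factor_lemma hhi hlo
  rcases Nat.eq_zero_or_pos b with rfl | hb
  · left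
    have hX : φ 𝐱 = _ • 𝐱 := form_of_mono φ h2.1
      ⟨0, 1, Or.inl rfl, by rw [emb_x]; exact Tw.isHi_e _⟩ (Tw.eq_smul_e lexHom_injective h2 l2)
    obtain ⟨c, hc⟩ : ∃ c : Kˣ, φ 𝐱 = (c : K) • 𝐱 := ⟨Units.mk0 _ h2.1, hX⟩
    rw [hc, mul_smul_comm, ← smul_mul_assoc] at hyx
    have hζ1 := fock_lemma' (hyx.trans (by rw [smul_sub, smul_smul]))
    have hζ2 : (ζ : K) = 1 := mul_left_cancel₀ hr (hζ1.trans (mul_one _).symm)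
    rw [hζ2, one_smul, ← yx_eq] at hyx
    refine ⟨c, hc, ?_⟩
    exact eq_inv_smul (mul_right_cancel₀ x_ne_zero hyx)
  · right
    obtain rfl : a = 0 := by omega
    have hY : φ 𝐲 = _ • 𝐱 := form_of_mono φ h1.1
      ⟨1, -1, Or.inr rfl, by
        rw [emb_y, smul_sub]; exact (isHiLo_binomial hr hr _).1⟩
      (Tw.eq_smul_e lexHom_injective h1 l1)
    obtain ⟨c, hc⟩ : ∃ c : Kˣ, φ 𝐲 = (c : K) • 𝐱 := ⟨Units.mk0 _ h1.1, hY⟩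
    rw [hc, mul_smul_comm, ← smul_mul_assoc] at hxy
    have hζ1 := fock_lemma' (hxy.trans (by rw [smul_sub, smul_smul]))
    have hζ2 : p * ζ = 1 := mul_left_cancel₀ hr (hζ1.trans (mul_one _).symm)
    rw [hζ2, one_smul, ← yx_eq] at hxy
    have hX : φ 𝐱 = ((c⁻¹ : Kˣ) : K) • 𝐲 :=
      eq_inv_smul (mul_right_cancel₀ x_ne_zero hxy)
    refine ⟨?_, c⁻¹, hX, by rw [inv_inv, hc]⟩
    have h := congrArg φ (isRel_gens (K := K) (p := p) (q := q)).ab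
    rw [map_sub, map_smul, map_mul, map_mul, hX, hc, smul_mul_smul_comm, smul_mul_smul_comm,
      Units.inv_mul, Units.mul_inv, one_smul, one_smul, map_one, rel_xy] at h
    have h3 : ((1 - p * p) • 𝐲) * 𝐱 = (1 + p) • 1 := by
      rw [smul_mul_assoc]
      linear_combination (norm := module) (1 : K) • h
    have h4 := fock_lemma h3
    linear_combination h4

/-! ### Semidirect products with an involution -/

lemma zmod2_cases (c : Multiplicative (ZMod 2)) : c = 1 ∨ c = Multiplicative.ofAdd 1 := by
  induction c using Multiplicative.rec with
  | _ c => fin_cases c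
           · exact Or.inl rfl
           · exact Or.inr rfl

lemma involutionHom_gen {M : Type*} [Monoid M] (j : M) (hj : j * j = 1) :
    involutionHom j hj (Multiplicative.ofAdd 1) = j := pow_one j

section Lift
variable {N H : Type*} [Group N] [Group H] (j : MulAut N) (hj : j * j = 1) (f : N →* H) (J : H)
  (hJ : J * J = 1) (h : ∀ n, J * f n = f (j n) * J)

/-- The homomorphism `N ⋊ ℤ/2ℤ → H` extending `f : N → H` and sending the generator to the
involution `J`. -/
def invLift : SemidirectProduct N (Multiplicative (ZMod 2)) (involutionHom j hj) →* H :=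
  SemidirectProduct.lift f (involutionHom J hJ) fun c => by
    rcases zmod2_cases c with rfl | rfl
    · ext n
      simp
    · ext n
      rw [involutionHom_gen, involutionHom_gen]
      simp [h]

lemma invLift_apply (n : N) (c : Multiplicative (ZMod 2)) :
    invLift j hj f J hJ h ⟨n, c⟩ = f n * involutionHom J hJ c := rfl

lemma invLift_injective (hf : Function.Injective f) (hr : J ∉ f.range) :
    Function.Injective (invLift j hj f J hJ h) := by
  rw [injective_iff_map_eq_one]
  rintro ⟨n, c⟩ hn
  rw [invLift_apply] at hn
  rcases zmod2_cases c with rfl | rfl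
  · rw [map_one, mul_one] at hn
    rw [(injective_iff_map_eq_one f).1 hf n hn]
    rfl
  · rw [involutionHom_gen] at hn
    exact absurd ⟨n⁻¹, by rw [map_inv]; exact inv_eq_of_mul_eq_one_right hn⟩ hr

lemma mem_invLift_range {x : H} (hx : x ∈ f.range ∨ x * J ∈ f.range) :
    x ∈ (invLift j hj f J hJ h).range := by
  rcases hx with ⟨n, hn⟩ | ⟨n, hn⟩
  · exact ⟨⟨n, 1⟩, by rw [invLift_apply, map_one, mul_one, hn]⟩
  · refine ⟨⟨n, Multiplicative.ofAdd 1⟩, ?_⟩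
    rw [invLift_apply, involutionHom_gen, hn, mul_assoc, hJ, mul_one]

end Lift

/-! ### The automorphism groups -/

lemma isRel_torus (g : Kˣ × Kˣ × Kˣ) : IsRel p q ((g.1 : K) • 𝐱) (((g.1⁻¹ : Kˣ) : K) • 𝐲)
    ((g.2.1 : K) • 𝐬) ((g.2.2 : K) • 𝐭) where
  ab := by
    rw [smul_mul_smul_comm, smul_mul_smul_comm, Units.mul_inv, Units.inv_mul, one_smul, one_smul,
      isRel_gens.ab]
  cd := by
    rw [smul_mul_smul_comm, smul_mul_smul_comm, isRel_gens.cd, smul_comm, mul_comm]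
  ca := by rw [smul_mul_smul_comm, smul_mul_smul_comm, isRel_gens.ca, mul_comm]
  cb := by rw [smul_mul_smul_comm, smul_mul_smul_comm, isRel_gens.cb, mul_comm]
  da := by rw [smul_mul_smul_comm, smul_mul_smul_comm, isRel_gens.da, mul_comm]
  db := by rw [smul_mul_smul_comm, smul_mul_smul_comm, isRel_gens.db, mul_comm]

variable (p q) in
/-- The torus `(K^×)³` acting on `B` by rescaling the generators, as endomorphisms. -/
def torusEnd : Kˣ × Kˣ × Kˣ →* (ExtWeyl K p q 1 1 →ₐ[K] ExtWeyl K p q 1 1) where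
  toFun g := lft (isRel_torus g)
  map_one' := by apply ext_gens <;> simp
  map_mul' g g' := by
    apply ext_gens <;>
      simp [AlgHom.mul_apply, smul_smul, mul_comm]

variable (p q) in
/-- The torus `(K^×)³` acting on `B` by automorphisms. -/
def torus : Kˣ × Kˣ × Kˣ →* (ExtWeyl K p q 1 1 ≃ₐ[K] ExtWeyl K p q 1 1) :=
  (AlgEquiv.algHomUnitsEquiv K (ExtWeyl K p q 1 1)).toMonoidHom.comp (torusEnd p q).toHomUnits

section torus
variable (g : Kˣ × Kˣ × Kˣ)

lemma torus_x : torus p q g 𝐱 = (g.1 : K) • 𝐱 := lft_x (isRel_torus g)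
lemma torus_y : torus p q g 𝐲 = ((g.1⁻¹ : Kˣ) : K) • 𝐲 := lft_y (isRel_torus g)
lemma torus_s : torus p q g 𝐬 = (g.2.1 : K) • 𝐬 := lft_s (isRel_torus g)
lemma torus_t : torus p q g 𝐭 = (g.2.2 : K) • 𝐭 := lft_t (isRel_torus g)

end torus

lemma aut_ext {φ ψ : ExtWeyl K p q 1 1 ≃ₐ[K] ExtWeyl K p q 1 1} (hx : φ 𝐱 = ψ 𝐱) (hy : φ 𝐲 = ψ 𝐲)
    (hs : φ 𝐬 = ψ 𝐬) (ht : φ 𝐭 = ψ 𝐭) : φ = ψ :=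
  AlgEquiv.coe_toAlgHom_injective (ext_gens hx hy hs ht)

lemma torus_injective : Function.Injective (torus p q) := by
  intro g g' h
  have key : ∀ {b : ExtWeyl K p q 1 1} (_ : b ≠ 0) {c c' : Kˣ}, (c : K) • b = (c' : K) • b →
      c = c' := fun hb _ _ h => Units.ext (smul_left_injective K hb h)
  refine Prod.ext (key x_ne_zero ?_) (Prod.ext (key s_ne_zero ?_) (key t_ne_zero ?_))
  · rw [← torus_x, ← torus_x, h]
  · rw [← torus_s, ← torus_s, h]
  · rw [← torus_t, ← torus_t, h]

variable {φ} in
lemma mem_torus_range (h : ∃ α : Kˣ, φ 𝐱 = (α : K) • 𝐱 ∧ φ 𝐲 = ((α⁻¹ : Kˣ) : K) • 𝐲)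
    (h' : ∃ β γ : Kˣ, φ 𝐬 = (β : K) • 𝐬 ∧ φ 𝐭 = (γ : K) • 𝐭) : φ ∈ (torus p q).range := by
  obtain ⟨α, hx, hy⟩ := h
  obtain ⟨β, γ, hs, ht⟩ := h'
  refine ⟨(α, β, γ), aut_ext ?_ ?_ ?_ ?_⟩
  · rw [torus_x, hx]
  · rw [torus_y, hy]
  · rw [torus_s, hs]
  · rw [torus_t, ht]

lemma isRel_swapXY (h : p = -1) : IsRel p q 𝐲 𝐱 𝐬 𝐭 where
  ab := by
    have hs : ∀ b : ExtWeyl K p q 1 1, p • b = -b := fun b =>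
      (congrArg (· • b) h).trans (neg_one_smul K b)
    rw [← isRel_gens.ab, hs, hs, sub_neg_eq_add, sub_neg_eq_add, add_comm]
  cd := isRel_gens.cd
  ca := isRel_gens.cb
  cb := isRel_gens.ca
  da := isRel_gens.db
  db := isRel_gens.da

lemma isRel_swapST (h : q = -1) : IsRel p q 𝐱 𝐲 𝐭 𝐬 where
  ab := isRel_gens.ab
  cd := by rw [ts, h, inv_neg_one]
  ca := isRel_gens.da
  cb := isRel_gens.db
  da := isRel_gens.ca
  db := isRel_gens.cb

/-- The involution of `B` interchanging `x` and `y`, available for `p = -1`. -/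
def swapXYAut (h : p = -1) : ExtWeyl K p q 1 1 ≃ₐ[K] ExtWeyl K p q 1 1 :=
  AlgEquiv.ofAlgHom (lft (isRel_swapXY h)) (lft (isRel_swapXY h))
    (by apply ext_gens <;> simp) (by apply ext_gens <;> simp)

/-- The involution of `B` interchanging `s` and `t`, available for `q = -1`. -/
def swapSTAut (h : q = -1) : ExtWeyl K p q 1 1 ≃ₐ[K] ExtWeyl K p q 1 1 :=
  AlgEquiv.ofAlgHom (lft (isRel_swapST h)) (lft (isRel_swapST h))
    (by apply ext_gens <;> simp) (by apply ext_gens <;> simp)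

section swap
variable (h : p = -1) (h' : q = -1)

lemma swapXY_x : swapXYAut (q := q) h 𝐱 = 𝐲 := lft_x (isRel_swapXY h)
lemma swapXY_y : swapXYAut (q := q) h 𝐲 = 𝐱 := lft_y (isRel_swapXY h)
lemma swapXY_s : swapXYAut (q := q) h 𝐬 = 𝐬 := lft_s (isRel_swapXY h)
lemma swapXY_t : swapXYAut (q := q) h 𝐭 = 𝐭 := lft_t (isRel_swapXY h)
lemma swapST_x : swapSTAut (p := p) h' 𝐱 = 𝐱 := lft_x (isRel_swapST h')
lemma swapST_y : swapSTAut (p := p) h' 𝐲 = 𝐲 := lft_y (isRel_swapST h')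
lemma swapST_s : swapSTAut (p := p) h' 𝐬 = 𝐭 := lft_s (isRel_swapST h')
lemma swapST_t : swapSTAut (p := p) h' 𝐭 = 𝐬 := lft_t (isRel_swapST h')

lemma swapXYAut_sq : swapXYAut (q := q) h * swapXYAut h = 1 := by
  apply aut_ext <;> simp [swapXY_x, swapXY_y, swapXY_s, swapXY_t]

lemma swapSTAut_sq : swapSTAut (p := p) h' * swapSTAut h' = 1 := by
  apply aut_ext <;> simp [swapST_x, swapST_y, swapST_s, swapST_t]

lemma swapXYAut_torus (g : Kˣ × Kˣ × Kˣ) :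
    swapXYAut h * torus p q g = torus p q (invFst K g) * swapXYAut h := by
  apply aut_ext <;>
    simp [swapXY_x, swapXY_y, swapXY_s, swapXY_t, torus_x, torus_y, torus_s, torus_t, invFst]

lemma swapSTAut_torus (g : Kˣ × Kˣ × Kˣ) :
    swapSTAut h' * torus p q g = torus p q (swapST K g) * swapSTAut h' := by
  apply aut_ext <;>
    simp [swapST_x, swapST_y, swapST_s, swapST_t, torus_x, torus_y, torus_s, torus_t, swapST]

lemma swapXYAut_notMem : swapXYAut h ∉ (torus p q).range := by
  rintro ⟨g, hg⟩
  have h1 := torus_x (p := p) (q := q) g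
  rw [hg, swapXY_x] at h1
  -- if `y` were a multiple of `x`, the Weyl relation would put `1` in the left ideal `B x`
  have h2 : (((1 - p) * g.1 : K) • 𝐱) * 𝐱 = (1 : K) • 1 := by
    have := (isRel_gens (K := K) (p := p) (q := q)).ab
    rw [h1, mul_smul_comm, smul_mul_assoc] at this
    rw [one_smul, ← this, smul_mul_assoc]
    module
  exact one_ne_zero (fock_lemma h2)

lemma swapSTAut_ne {φ : ExtWeyl K p q 1 1 ≃ₐ[K] ExtWeyl K p q 1 1} {c : K} (hφ : φ 𝐭 = c • 𝐭) :
    φ ≠ swapSTAut h' := by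
  rintro rfl
  rw [swapST_t] at hφ
  exact s_ne_tc (c • 1) (hφ.trans (by rw [mul_smul_comm, mul_one]))

/-- Composing with the swap of `x` and `y` brings an automorphism into diagonal form on `x, y`. -/
lemma diag_XY : (∃ α : Kˣ, φ 𝐱 = (α : K) • 𝐱 ∧ φ 𝐲 = ((α⁻¹ : Kˣ) : K) • 𝐲) ∨
    ∃ α : Kˣ, (φ * swapXYAut h : _ ≃ₐ[K] _) 𝐱 = (α : K) • 𝐱 ∧
      (φ * swapXYAut h : _ ≃ₐ[K] _) 𝐲 = ((α⁻¹ : Kˣ) : K) • 𝐲 := by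
  refine (form_XY φ).imp_right ?_
  rintro ⟨-, α, h1, h2⟩
  refine ⟨α⁻¹, ?_, ?_⟩
  · rw [AlgEquiv.mul_apply, swapXY_x, h2]
  · rw [AlgEquiv.mul_apply, swapXY_y, h1, inv_inv]

/-- Composing with the swap of `s` and `t` brings an automorphism into diagonal form on `s, t`. -/
lemma diag_ST : (∃ β γ : Kˣ, φ 𝐬 = (β : K) • 𝐬 ∧ φ 𝐭 = (γ : K) • 𝐭) ∨
    ∃ β γ : Kˣ, (φ * swapSTAut h' : _ ≃ₐ[K] _) 𝐬 = (β : K) • 𝐬 ∧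
      (φ * swapSTAut h' : _ ≃ₐ[K] _) 𝐭 = (γ : K) • 𝐭 := by
  refine (form_ST φ).imp_right ?_
  rintro ⟨-, β, γ, h1, h2⟩
  refine ⟨γ, β, ?_, ?_⟩
  · rw [AlgEquiv.mul_apply, swapST_s, h2]
  · rw [AlgEquiv.mul_apply, swapST_t, h1]

/-- The homomorphism from `ℤ/2ℤ ⋉ (K^×)³` given by the torus and the swap of `x` and `y`. -/
def homXY : XYGroup K →* (ExtWeyl K p q 1 1 ≃ₐ[K] ExtWeyl K p q 1 1) :=
  invLift (invFst K) (invFst_sq K) (torus p q) (swapXYAut h) (swapXYAut_sq h) (swapXYAut_torus h)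

/-- The homomorphism from `ℤ/2ℤ ⋉ (K^×)³` given by the torus and the swap of `s` and `t`. -/
def homST : STGroup K →* (ExtWeyl K p q 1 1 ≃ₐ[K] ExtWeyl K p q 1 1) :=
  invLift (swapST K) (swapST_sq K) (torus p q) (swapSTAut h') (swapSTAut_sq h')
    (swapSTAut_torus h')

lemma homXY_apply (n : Kˣ × Kˣ × Kˣ) (c : Multiplicative (ZMod 2)) :
    homXY (q := q) h ⟨n, c⟩ = torus p q n * involutionHom (swapXYAut h) (swapXYAut_sq h) c := rfl

lemma homXY_injective : Function.Injective (homXY (q := q) h) :=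
  invLift_injective _ _ _ _ _ _ torus_injective (swapXYAut_notMem h)

lemma mem_homXY_range (hφ : ∃ β γ : Kˣ, φ 𝐬 = (β : K) • 𝐬 ∧ φ 𝐭 = (γ : K) • 𝐭) :
    φ ∈ (homXY (q := q) h).range := by
  refine mem_invLift_range _ _ _ _ _ _ ?_
  refine (diag_XY φ h).imp (mem_torus_range · hφ) (mem_torus_range · ?_)
  simpa [swapXY_s, swapXY_t] using hφ

lemma homXY_t (g : XYGroup K) : homXY (q := q) h g 𝐭 = (g.left.2.2 : K) • 𝐭 := by
  obtain ⟨n, c⟩ := g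
  rw [homXY_apply]
  rcases zmod2_cases c with rfl | rfl
  · simp [torus_t]
  · simp [involutionHom_gen, swapXY_t, torus_t]

lemma swapSTAut_homXY (g : XYGroup K) :
    swapSTAut h' * homXY h g = homXY h (swapSTInner K g) * swapSTAut h' := by
  obtain ⟨n, c⟩ := g
  have hcomm : swapSTAut h' * swapXYAut h = swapXYAut h * swapSTAut h' := by
    apply aut_ext <;> simp [swapST_x, swapST_y, swapST_s, swapST_t, swapXY_x, swapXY_y, swapXY_s,
      swapXY_t]
  show _ = homXY h ⟨swapST K n, c⟩ * _
  rw [homXY_apply, homXY_apply, ← mul_assoc, swapSTAut_torus, mul_assoc, mul_assoc]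
  congr 1
  rcases zmod2_cases c with rfl | rfl
  · rw [map_one, mul_one, one_mul]
  · rw [involutionHom_gen, hcomm]

/-- The homomorphism from `ℤ/2ℤ ⋉ (ℤ/2ℤ ⋉ (K^×)³)` given by the torus and both swaps. -/
def homXYST : XYSTGroup K →* (ExtWeyl K p q 1 1 ≃ₐ[K] ExtWeyl K p q 1 1) :=
  invLift (swapSTInner K) (swapSTInner_sq K) (homXY h) (swapSTAut h') (swapSTAut_sq h')
    (swapSTAut_homXY h h')

end swap

lemma torus_bijective (h : p ≠ -1) (h' : q ≠ -1) : Function.Bijective (torus p q) :=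
  ⟨torus_injective, fun φ => mem_torus_range ((form_XY φ).resolve_right fun H => h H.1)
    ((form_ST φ).resolve_right fun H => h' H.1)⟩

lemma homXY_bijective (h : p = -1) (h' : q ≠ -1) : Function.Bijective (homXY (q := q) h) :=
  ⟨homXY_injective h, fun φ => mem_homXY_range φ h ((form_ST φ).resolve_right fun H => h' H.1)⟩

lemma homST_bijective (h : p ≠ -1) (h' : q = -1) : Function.Bijective (homST (p := p) h') := by
  refine ⟨invLift_injective _ _ _ _ _ _ torus_injective ?_, fun φ => ?_⟩
  · rintro ⟨g, hg⟩
    exact swapSTAut_ne h' (torus_t g) hg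
  · refine mem_invLift_range _ _ _ _ _ _ ?_
    have hx := (form_XY φ).resolve_right fun H => h H.1
    refine (diag_ST φ h').imp (mem_torus_range hx) (mem_torus_range ?_)
    simpa [swapST_x, swapST_y] using hx

lemma homXYST_bijective (h : p = -1) (h' : q = -1) : Function.Bijective (homXYST h h') := by
  refine ⟨invLift_injective _ _ _ _ _ _ (homXY_injective h) ?_, fun φ => ?_⟩
  · rintro ⟨g, hg⟩
    exact swapSTAut_ne h' (homXY_t h g) hg
  · exact mem_invLift_range _ _ _ _ _ _
      ((diag_ST φ h').imp (mem_homXY_range _ h) (mem_homXY_range _ h))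

end Main

end ExtWeylAut

/-- Assume `p ≠ 1` and `q ≠ 1`, and let `B = A_p(1, 1, K_q[s,t])`. Every
`K`-algebra automorphism `φ` of `B` satisfies `φ(x) = α·x, φ(y) = α⁻¹·y`, or (only when
`p = −1`) `φ(x) = α·y, φ(y) = α⁻¹·x`; and `φ(s) = β·s, φ(t) = γ·t`, or (only when
`q = −1`) `φ(s) = β·t, φ(t) = γ·s`. Consequently `Aut_K(B)` is `(K^×)³`,
`ℤ/2 ⋉ (K^×)³` (inverting `α`), `ℤ/2 ⋉ (K^×)³` (swapping `β, γ`), or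
`ℤ/2 ⋉ (ℤ/2 ⋉ (K^×)³)`, in the four cases according to whether `p = −1` and `q = −1`. -/
theorem extWeyl11_aut_forms_and_group
    (hp : p ≠ 0) (hq : q ≠ 0) (hp1 : p ≠ 1) (hq1 : q ≠ 1) :
    (∀ φ : ExtWeyl K p q 1 1 ≃ₐ[K] ExtWeyl K p q 1 1,
      ((∃ α : Kˣ, φ (wx K p q) = (α : K) • wx K p q ∧
          φ (wy K p q) = ((α⁻¹ : Kˣ) : K) • wy K p q) ∨
        (p = -1 ∧ ∃ α : Kˣ, φ (wx K p q) = (α : K) • wy K p q ∧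
          φ (wy K p q) = ((α⁻¹ : Kˣ) : K) • wx K p q)) ∧
      ((∃ β γ : Kˣ, φ (ws K p q) = (β : K) • ws K p q ∧
          φ (wt K p q) = (γ : K) • wt K p q) ∨
        (q = -1 ∧ ∃ β γ : Kˣ, φ (ws K p q) = (β : K) • wt K p q ∧
          φ (wt K p q) = (γ : K) • ws K p q))) ∧
    (p ≠ -1 → q ≠ -1 →
      Nonempty ((ExtWeyl K p q 1 1 ≃ₐ[K] ExtWeyl K p q 1 1) ≃* (Kˣ × Kˣ × Kˣ))) ∧
    (p = -1 → q ≠ -1 →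
      Nonempty ((ExtWeyl K p q 1 1 ≃ₐ[K] ExtWeyl K p q 1 1) ≃* XYGroup K)) ∧
    (p ≠ -1 → q = -1 →
      Nonempty ((ExtWeyl K p q 1 1 ≃ₐ[K] ExtWeyl K p q 1 1) ≃* STGroup K)) ∧
    (p = -1 → q = -1 →
      Nonempty ((ExtWeyl K p q 1 1 ≃ₐ[K] ExtWeyl K p q 1 1) ≃* XYSTGroup K)) := by
  have : NeZero p := ⟨hp⟩
  have : NeZero q := ⟨hq⟩
  have : Fact (p ≠ 1) := ⟨hp1⟩
  have : Fact (q ≠ 1) := ⟨hq1⟩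
  exact ⟨fun φ => ⟨ExtWeylAut.form_XY φ, ExtWeylAut.form_ST φ⟩,
    fun h h' => ⟨(MulEquiv.ofBijective _ (ExtWeylAut.torus_bijective h h')).symm⟩,
    fun h h' => ⟨(MulEquiv.ofBijective _ (ExtWeylAut.homXY_bijective h h')).symm⟩,
    fun h h' => ⟨(MulEquiv.ofBijective _ (ExtWeylAut.homST_bijective h h')).symm⟩,
    fun h h' => ⟨(MulEquiv.ofBijective _ (ExtWeylAut.homXYST_bijective h h')).symm⟩⟩
end
end
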